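/- arXiv:2008.03812 — 2 statements merged into one kernel-verified Lean document; each statement's English description precedes it below -/
import Mathlib

section
/- For every natural number m ≥ 2 there exists a constant C > 0 such that for every finite field F of even order q and every subset Y of G = Sp_{2m}(F) with |Y| ≤ 3, the number of y ∈ G for which some x ∈ Y makes {x, y} invariably generate G is at most (1 − 1/(2^m · m!) + C/q) · |G|. -/
/-- `{x, y}` invariably generates `G`: for all `g, h`, the conjugates
`g * x * g⁻¹` and `h * y * h⁻¹` generate `G`. -/
def InvGen {G : Type*} [Group G] (x y : G) : Prop :=
  ∀ g h : G, Subgroup.closure {g * x * g⁻¹, h * y * h⁻¹} = ⊤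


namespace SpGen
open Module LinearMap

section part1
variable {F : Type} [Field F]

structure IsSymp {V : Type} [AddCommGroup V] [Module F V] (B : LinearMap.BilinForm F V) : Prop where
  alt : ∀ v, B v v = 0
  nd : ∀ v, (∀ w, B v w = 0) → v = 0

def IsIso {V W : Type} [AddCommGroup V] [Module F V] [AddCommGroup W] [Module F W]
    (B : LinearMap.BilinForm F V) (C : LinearMap.BilinForm F W) (Ψ : V ≃ₗ[F] W) : Prop :=
  ∀ v w, C (Ψ v) (Ψ w) = B v w

variable {V W : Type} [AddCommGroup V] [Module F V] [AddCommGroup W] [Module F W]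
  {B : LinearMap.BilinForm F V} {C : LinearMap.BilinForm F W}

theorem IsIso.symm {Ψ : V ≃ₗ[F] W} (h : IsIso B C Ψ) : IsIso C B Ψ.symm := by
  intro v w
  rw [← h]; simp

theorem IsIso.trans {X : Type} [AddCommGroup X] [Module F X] {D : LinearMap.BilinForm F X}
    {Ψ : V ≃ₗ[F] W} {Φ : W ≃ₗ[F] X} (h : IsIso B C Ψ) (h' : IsIso C D Φ) :
    IsIso B D (Ψ.trans Φ) := by
  intro v w
  simp only [LinearEquiv.trans_apply]
  rw [h', h]

theorem IsSymp.neg (hB : IsSymp B) (v w : V) : B w v = - B v w := by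
  have h := hB.alt (v + w)
  simp only [map_add, LinearMap.add_apply, hB.alt, zero_add, add_zero] at h
  linear_combination h

theorem IsSymp.eq_zero_comm (hB : IsSymp B) {v w : V} : B v w = 0 → B w v = 0 := by
  intro h; rw [hB.neg, h, neg_zero]

theorem IsSymp.isRefl (hB : IsSymp B) : B.IsRefl := fun _ _ h => hB.eq_zero_comm h

theorem IsSymp.nondeg (hB : IsSymp B) : B.Nondegenerate := by
  refine ⟨fun v h => hB.nd v h, fun v h => hB.nd v fun w => hB.eq_zero_comm (h w)⟩

theorem IsSymp.exists_one (hB : IsSymp B) {e : V} (he : e ≠ 0) : ∃ f, B e f = 1 := by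
  by_contra! h
  apply he
  apply hB.nd
  intro w
  by_contra hw
  apply h ((B e w)⁻¹ • w)
  simp [hw]

/-- orthogonal complement of a hyperbolic pair -/
def hperp (B : LinearMap.BilinForm F V) (e f : V) : Submodule F V :=
  LinearMap.ker (B e) ⊓ LinearMap.ker (B f)

def hypEquiv (hB : IsSymp B) (e f : V) (hef : B e f = 1) :
    V ≃ₗ[F] (F × F) × hperp B e f where
  toFun v := ((B v f, B e v), ⟨v - B v f • e - B e v • f, by
    have h1 := hB.alt e
    have h2 := hB.alt f
    have h3 := hB.neg e f
    have h4 := hB.neg v f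
    simp only [hperp, Submodule.mem_inf, LinearMap.mem_ker, map_sub, map_smul, smul_eq_mul]
    rw [h1, h2, h3, hef, h4]
    constructor <;> ring⟩)
  map_add' v w := by
    ext
    · simp
    · simp
    · simp only [map_add, LinearMap.add_apply, Prod.mk_add_mk]
      simp only [Submodule.coe_add]
      module
  map_smul' c v := by
    ext
    · simp
    · simp
    · simp only [map_smul, LinearMap.smul_apply, RingHom.id_apply, Prod.smul_mk,
        SetLike.val_smul, smul_eq_mul]
      module
  invFun p := p.1.1 • e + p.1.2 • f + (p.2 : V)
  left_inv v := by
    simp only; module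
  right_inv p := by
    obtain ⟨⟨a, b⟩, ⟨r, hr⟩⟩ := p
    simp only [hperp, Submodule.mem_inf, LinearMap.mem_ker] at hr
    have h1 := hB.alt e
    have h2 := hB.alt f
    have h3 := hB.neg e f
    have h4 := hB.eq_zero_comm hr.2
    have e1 : B (a • e + b • f + r) f = a := by
      simp [h2, hef, h4]
    have e2 : B e (a • e + b • f + r) = b := by
      simp [h1, hef, hr.1]
    ext
    · exact e1
    · exact e2
    · simp only [e1, e2]; module

theorem hypEquiv_symm_iso (hB : IsSymp B) (e f : V) (hef : B e f = 1) (a b a' b' : F)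
    (r r' : hperp B e f) :
    B ((hypEquiv hB e f hef).symm ((a, b), r)) ((hypEquiv hB e f hef).symm ((a', b'), r')) =
      a * b' - b * a' + B r r' := by
  obtain ⟨r, hr⟩ := r
  obtain ⟨r', hr'⟩ := r'
  have h1 := hB.alt e
  have h2 := hB.alt f
  have h3 := hB.neg e f
  simp only [hperp, Submodule.mem_inf, LinearMap.mem_ker] at hr hr'
  have h4 := hB.eq_zero_comm hr.2
  have h5 := hB.eq_zero_comm hr.1
  change B (a • e + b • f + r) (a' • e + b' • f + r') = _
  simp [h1, h2, h3, h4, h5, hr'.1, hr'.2, hef]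
  ring

theorem hperp_symp (hB : IsSymp B) (e f : V) (hef : B e f = 1) :
    IsSymp (B.restrict (hperp B e f)) := by
  refine ⟨fun v => hB.alt _, fun v hv => ?_⟩
  have := hB.nd v ?_
  · exact Subtype.ext this
  · intro w
    obtain ⟨⟨⟨a, b⟩, r⟩, rfl⟩ := (hypEquiv hB e f hef).symm.surjective w
    have h := hypEquiv_symm_iso hB e f hef 0 0 a b v r
    have e0 : (hypEquiv hB e f hef).symm ((0, 0), v) = (v : V) := by
      change (0 : F) • e + (0 : F) • f + (v : V) = v
      simp
    rw [e0] at h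
    rw [h]
    have := hv r
    simp at this
    simp [this]

theorem hyp_finrank [FiniteDimensional F V] (hB : IsSymp B) (e f : V) (hef : B e f = 1) :
    finrank F V = 2 + finrank F (hperp B e f) := by
  rw [(hypEquiv hB e f hef).finrank_eq]
  simp

theorem finrank_iso_step [FiniteDimensional F V] (hB : IsSymp B) (e f : V) (hef : B e f = 1)
    (U : Submodule F V) (hU : ∀ u ∈ U, ∀ v ∈ U, B u v = 0) (he : e ∈ U) :
    finrank F U = 1 + finrank F (U.comap (hperp B e f).subtype) := by
  have hmem : ∀ u ∈ U, u - B u f • e ∈ hperp B e f := by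
    intro u hu
    have h3 := hB.neg e f
    have h4 := hB.neg u f
    simp [hperp, hU e he u hu, hU e he e he, h3, hef, h4]
  let E : U ≃ₗ[F] F × (U.comap (hperp B e f).subtype) :=
    { toFun := fun u => (B u f, ⟨⟨u - B u f • e, hmem u u.2⟩, by
        simpa using U.sub_mem u.2 (U.smul_mem _ he)⟩)
      map_add' := fun u v => by
        ext
        · simp
        · simp; module
      map_smul' := fun c v => by
        ext
        · simp
        · simp; module
      invFun := fun p => ⟨p.1 • e + ((p.2 : hperp B e f) : V),
        U.add_mem (U.smul_mem _ he) p.2.2⟩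
      left_inv := fun u => by ext; simp
      right_inv := fun p => by
        obtain ⟨a, ⟨⟨r, hr⟩, hr'⟩⟩ := p
        simp only [hperp, Submodule.mem_inf, LinearMap.mem_ker] at hr
        have h4 := hB.eq_zero_comm hr.2
        ext
        · simp [hef, h4]
        · simp [hef, h4] }
  rw [E.finrank_eq]
  simp

theorem witt_aux (n : ℕ) : ∀ (V W : Type) [AddCommGroup V] [Module F V] [AddCommGroup W]
    [Module F W] [FiniteDimensional F V] [FiniteDimensional F W]
    (B : LinearMap.BilinForm F V) (C : LinearMap.BilinForm F W) (_ : IsSymp B) (_ : IsSymp C)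
    (_ : finrank F V = n) (_ : finrank F W = n) (U : Submodule F V) (Z : Submodule F W)
    (_ : ∀ u ∈ U, ∀ v ∈ U, B u v = 0) (_ : ∀ u ∈ Z, ∀ v ∈ Z, C u v = 0)
    (_ : finrank F U = finrank F Z), ∃ Ψ : V ≃ₗ[F] W, IsIso B C Ψ ∧ U.map (Ψ : V →ₗ[F] W) = Z := by
  induction n using Nat.strong_induction_on with
  | _ n ih =>
    intro V W _ _ _ _ _ _ B C hB hC hV hW U Z hU hZ hUZ
    rcases Nat.eq_zero_or_pos n with hn | hn
    · subst hn
      have hVs := finrank_zero_iff.mp hV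
      have hWs := finrank_zero_iff.mp hW
      refine ⟨LinearEquiv.ofFinrankEq V W (by rw [hV, hW]), fun v w => ?_, ?_⟩
      · rw [Subsingleton.elim v 0, map_zero]; simp
      · exact Subsingleton.elim _ _
    · have : ∃ e : V, ∃ e' : W, e ≠ 0 ∧ e' ≠ 0 ∧ ((e ∈ U ∧ e' ∈ Z) ∨ (U = ⊥ ∧ Z = ⊥)) := by
        by_cases hUb : U = ⊥
        · have hZb : Z = ⊥ := by
            rw [← Submodule.finrank_eq_zero (R := F), ← hUZ, hUb]; simp
          have : Nontrivial V := nontrivial_of_finrank_pos (R := F) (by omega)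
          have : Nontrivial W := nontrivial_of_finrank_pos (R := F) (by omega)
          obtain ⟨e, he⟩ := exists_ne (0 : V)
          obtain ⟨e', he'⟩ := exists_ne (0 : W)
          exact ⟨e, e', he, he', Or.inr ⟨hUb, hZb⟩⟩
        · have hZb : Z ≠ ⊥ := by
            rw [ne_eq, ← Submodule.finrank_eq_zero (R := F), ← hUZ, Submodule.finrank_eq_zero]
            exact hUb
          obtain ⟨e, he, he0⟩ := Submodule.exists_mem_ne_zero_of_ne_bot hUb
          obtain ⟨e', he', he0'⟩ := Submodule.exists_mem_ne_zero_of_ne_bot hZb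
          exact ⟨e, e', he0, he0', Or.inl ⟨he, he'⟩⟩
      obtain ⟨e, e', he, he', hcase⟩ := this
      obtain ⟨f, hf⟩ := hB.exists_one he
      obtain ⟨f', hf'⟩ := hC.exists_one he'
      have r1 := hyp_finrank hB e f hf
      have r2 := hyp_finrank hC e' f' hf'
      have hdim : finrank F (U.comap (hperp B e f).subtype) =
          finrank F (Z.comap (hperp C e' f').subtype) := by
        rcases hcase with ⟨h1, h2⟩ | ⟨h1, h2⟩
        · have s1 := finrank_iso_step hB e f hf U hU h1
          have s2 := finrank_iso_step hC e' f' hf' Z hZ h2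
          omega
        · subst h1 h2
          rw [Submodule.comap_bot, Submodule.comap_bot, Submodule.ker_subtype, Submodule.ker_subtype]
          simp
      obtain ⟨ψ, hψ, hm⟩ := ih (n - 2) (by omega) (hperp B e f) (hperp C e' f')
        (B.restrict _) (C.restrict _) (hperp_symp hB e f hf) (hperp_symp hC e' f' hf')
        (by omega) (by omega) (U.comap (hperp B e f).subtype) (Z.comap (hperp C e' f').subtype)
        (fun u hu v hv => hU _ hu _ hv) (fun u hu v hv => hZ _ hu _ hv) hdim
      let Ψ : V ≃ₗ[F] W := (hypEquiv hB e f hf).trans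
        (((LinearEquiv.refl F (F × F)).prodCongr ψ).trans (hypEquiv hC e' f' hf').symm)
      have hΨ : ∀ a b r, Ψ ((hypEquiv hB e f hf).symm ((a, b), r)) =
          (hypEquiv hC e' f' hf').symm ((a, b), ψ r) := by
        intro a b r
        simp [Ψ]
      have hI : IsIso B C Ψ := by
        intro v w
        obtain ⟨⟨⟨a, b⟩, r⟩, rfl⟩ := (hypEquiv hB e f hf).symm.surjective v
        obtain ⟨⟨⟨a', b'⟩, r'⟩, rfl⟩ := (hypEquiv hB e f hf).symm.surjective w
        rw [hΨ, hΨ, hypEquiv_symm_iso, hypEquiv_symm_iso]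
        have := hψ r r'
        simp at this
        rw [this]
      refine ⟨Ψ, hI, ?_⟩
      rcases hcase with ⟨h1, h2⟩ | ⟨h1, h2⟩
      · apply Submodule.eq_of_le_of_finrank_eq
        · rintro _ ⟨u, hu, rfl⟩
          obtain ⟨⟨⟨a, b⟩, r⟩, rfl⟩ := (hypEquiv hB e f hf).symm.surjective u
          have hb : b = 0 := by
            have := hU _ h1 _ hu
            have h0 : B e (a • e + b • f + (r : V)) = b := by
              have := r.2
              simp only [hperp, Submodule.mem_inf, LinearMap.mem_ker] at this
              simp [hB.alt e, hf, this.1]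
            rw [← h0]; exact this
          subst hb
          have hr : (r : V) ∈ U := by
            have h0 : (a • e + (0 : F) • f + (r : V)) ∈ U := hu
            rw [zero_smul, add_zero] at h0
            exact (U.add_mem_iff_right (U.smul_mem _ h1)).mp h0
          have hr' : ψ r ∈ Z.comap (hperp C e' f').subtype := by
            rw [← hm]; exact ⟨r, hr, rfl⟩
          simp only [LinearEquiv.coe_coe]
          rw [hΨ]
          change a • e' + (0 : F) • f' + (ψ r : W) ∈ Z
          rw [zero_smul, add_zero]
          exact Z.add_mem (Z.smul_mem _ h2) hr'
        · rw [LinearEquiv.finrank_map_eq, hUZ]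
      · subst h1 h2; simp

theorem witt_iso [FiniteDimensional F V] [FiniteDimensional F W] (hB : IsSymp B) (hC : IsSymp C)
    (h : finrank F V = finrank F W) (U : Submodule F V) (Z : Submodule F W)
    (hU : ∀ u ∈ U, ∀ v ∈ U, B u v = 0) (hZ : ∀ u ∈ Z, ∀ v ∈ Z, C u v = 0)
    (hUZ : finrank F U = finrank F Z) :
    ∃ Ψ : V ≃ₗ[F] W, IsIso B C Ψ ∧ U.map (Ψ : V →ₗ[F] W) = Z :=
  witt_aux _ V W B C hB hC rfl h.symm U Z hU hZ hUZ

theorem exists_iso [FiniteDimensional F V] [FiniteDimensional F W] (hB : IsSymp B) (hC : IsSymp C)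
    (h : finrank F V = finrank F W) : ∃ Ψ : V ≃ₗ[F] W, IsIso B C Ψ := by
  obtain ⟨Ψ, h, -⟩ := witt_iso hB hC h ⊥ ⊥ (by simp) (by simp) (by simp)
  exact ⟨Ψ, h⟩

theorem symp_restrict [FiniteDimensional F V] (hB : IsSymp B) (U : Submodule F V)
    (hU : Disjoint U (B.orthogonal U)) : IsSymp (B.restrict U) := by
  refine ⟨fun v => hB.alt _, fun v hv => ?_⟩
  have : (v : V) ∈ U ⊓ B.orthogonal U := by
    refine ⟨v.2, ?_⟩
    intro n hn
    exact hB.eq_zero_comm (hv ⟨n, hn⟩)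
  rw [hU.eq_bot] at this
  exact Subtype.ext this

theorem disj_orth [FiniteDimensional F V] (hB : IsSymp B) (U : Submodule F V)
    (hU : Disjoint U (B.orthogonal U)) :
    Disjoint (B.orthogonal U) (B.orthogonal (B.orthogonal U)) := by
  rw [LinearMap.BilinForm.orthogonal_orthogonal hB.nondeg hB.isRefl]
  exact hU.symm

theorem finrank_even [FiniteDimensional F V] (hB : IsSymp B) : Even (finrank F V) := by
  suffices H : ∀ (n : ℕ) (V : Type) [AddCommGroup V] [Module F V] [FiniteDimensional F V]
      (B : LinearMap.BilinForm F V), IsSymp B → finrank F V = n → Even n from H _ V B hB rfl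
  intro n
  induction n using Nat.strong_induction_on with
  | _ n ih =>
    intro V _ _ _ B hB hV
    rcases Nat.eq_zero_or_pos n with hn | hn
    · subst hn; simp
    · have : Nontrivial V := nontrivial_of_finrank_pos (R := F) (by omega)
      obtain ⟨e, he⟩ := exists_ne (0 : V)
      obtain ⟨f, hf⟩ := hB.exists_one he
      have r1 := hyp_finrank hB e f hf
      have := ih (n - 2) (by omega) _ _ (hperp_symp hB e f hf) (by omega)
      have h2 : n = 2 + (n - 2) := by omega
      rw [h2]
      exact (by decide : Even 2).add this

theorem witt_nd [FiniteDimensional F V] [FiniteDimensional F W] (hB : IsSymp B) (hC : IsSymp C)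
    (h : finrank F V = finrank F W) (U : Submodule F V) (Z : Submodule F W)
    (hU : Disjoint U (B.orthogonal U)) (hZ : Disjoint Z (C.orthogonal Z))
    (hUZ : finrank F U = finrank F Z) :
    ∃ Ψ : V ≃ₗ[F] W, IsIso B C Ψ ∧ U.map (Ψ : V →ₗ[F] W) = Z ∧
      (B.orthogonal U).map (Ψ : V →ₗ[F] W) = C.orthogonal Z := by
  have cU := (LinearMap.BilinForm.isCompl_orthogonal_iff_disjoint hB.isRefl).mpr hU
  have cZ := (LinearMap.BilinForm.isCompl_orthogonal_iff_disjoint hC.isRefl).mpr hZ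
  obtain ⟨φ, hφ⟩ := exists_iso (symp_restrict hB U hU) (symp_restrict hC Z hZ) hUZ
  obtain ⟨ψ, hψ⟩ := exists_iso (symp_restrict hB _ (disj_orth hB U hU))
    (symp_restrict hC _ (disj_orth hC Z hZ)) (by
      rw [LinearMap.BilinForm.finrank_orthogonal hB.nondeg,
        LinearMap.BilinForm.finrank_orthogonal hC.nondeg, h, hUZ])
  let E1 := Submodule.prodEquivOfIsCompl U (B.orthogonal U) cU
  let E2 := Submodule.prodEquivOfIsCompl Z (C.orthogonal Z) cZ
  let Ψ : V ≃ₗ[F] W := E1.symm.trans ((φ.prodCongr ψ).trans E2)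
  have hΨ : ∀ (u : U) (u' : B.orthogonal U), Ψ ((u : V) + u') = φ u + ψ u' := by
    intro u u'
    have : (u : V) + u' = E1 (u, u') := by simp [E1]
    rw [this]
    simp [Ψ, E2]
  have h1 : ∀ u : U, Ψ u = φ u := by
    intro u; simpa using hΨ u 0
  have h2 : ∀ u : B.orthogonal U, Ψ u = ψ u := by
    intro u; simpa using hΨ 0 u
  refine ⟨Ψ, ?_, ?_, ?_⟩
  · intro v w
    obtain ⟨⟨u, u'⟩, rfl⟩ := E1.surjective v
    obtain ⟨⟨r, r'⟩, rfl⟩ := E1.surjective w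
    have e1 : E1 (u, u') = (u : V) + u' := by simp [E1]
    have e2 : E1 (r, r') = (r : V) + r' := by simp [E1]
    rw [e1, e2, hΨ, hΨ]
    have a1 : B u r' = 0 := r'.2 u u.2
    have a2 : B u' r = 0 := hB.eq_zero_comm (u'.2 r r.2)
    have a3 : C (φ u) (ψ r') = 0 := (ψ r').2 _ (φ u).2
    have a4 : C (ψ u') (φ r) = 0 := hC.eq_zero_comm ((ψ u').2 _ (φ r).2)
    have a5 := hφ u r
    have a6 := hψ u' r'
    simp only [LinearMap.BilinForm.restrict_apply] at a5 a6
    simp only [map_add, LinearMap.add_apply, a1, a2, a3, a4]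
    simp at a5 a6
    rw [a5, a6]
  · apply Submodule.eq_of_le_of_finrank_eq
    · rintro _ ⟨u, hu, rfl⟩
      have := h1 ⟨u, hu⟩
      simp only [LinearEquiv.coe_coe]
      rw [this]; exact (φ _).2
    · rw [LinearEquiv.finrank_map_eq, hUZ]
  · apply Submodule.eq_of_le_of_finrank_eq
    · rintro _ ⟨u, hu, rfl⟩
      have := h2 ⟨u, hu⟩
      simp only [LinearEquiv.coe_coe]
      rw [this]; exact (ψ _).2
    · rw [LinearEquiv.finrank_map_eq, LinearMap.BilinForm.finrank_orthogonal hB.nondeg,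
        LinearMap.BilinForm.finrank_orthogonal hC.nondeg, h, hUZ]

end part1
end SpGen

namespace SpGen
open Module LinearMap

section part2
variable {F : Type} [Field F]
variable {V W : Type} [AddCommGroup V] [Module F V] [AddCommGroup W] [Module F W]
  {B : LinearMap.BilinForm F V} {C : LinearMap.BilinForm F W}

def Sp (B : LinearMap.BilinForm F V) : Subgroup (V ≃ₗ[F] V) where
  carrier := {g | IsIso B B g}
  mul_mem' {a b} ha hb := fun v w => by
    change B (a (b v)) (a (b w)) = _
    rw [ha, hb]
  one_mem' := fun v w => rfl
  inv_mem' {a} ha := IsIso.symm ha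

theorem mem_Sp {g : V ≃ₗ[F] V} : g ∈ Sp B ↔ ∀ v w, B (g v) (g w) = B v w := Iff.rfl

theorem not_invGen_of {G : Type*} [Group G] {x y : G} (H : Subgroup G) (hH : H ≠ ⊤) (hx : x ∈ H)
    (h : G) (hy : h * y * h⁻¹ ∈ H) : ¬ InvGen x y := by
  intro hI
  have := hI 1 h
  apply hH
  rw [eq_top_iff, ← this, Subgroup.closure_le]
  rintro z (rfl | rfl)
  · simpa using hx
  · exact hy

def tvLin (B : LinearMap.BilinForm F V) (u : V) (c : F) : V →ₗ[F] V where
  toFun v := v + (c * B v u) • u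
  map_add' v w := by simp only [map_add, LinearMap.add_apply]; module
  map_smul' a v := by
    simp only [map_smul, LinearMap.smul_apply, RingHom.id_apply, smul_eq_mul]; module

theorem tvLin_comp (hB : IsSymp B) (u : V) (c d : F) (h : c + d = 0) (v : V) :
    tvLin B u c (tvLin B u d v) = v := by
  simp only [tvLin, LinearMap.coe_mk, AddHom.coe_mk, map_add, LinearMap.add_apply, map_smul,
    LinearMap.smul_apply, hB.alt, smul_eq_mul, mul_zero, add_zero]
  have : d = -c := by linear_combination h
  subst this
  module

def tvEquiv (hB : IsSymp B) (u : V) (c : F) : V ≃ₗ[F] V :=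
  { tvLin B u c with
    invFun := tvLin B u (-c)
    left_inv := fun v => tvLin_comp hB u (-c) c (by ring) v
    right_inv := fun v => tvLin_comp hB u c (-c) (by ring) v }

theorem tvEquiv_apply (hB : IsSymp B) (u : V) (c : F) (v : V) :
    tvEquiv hB u c v = v + (c * B v u) • u := rfl

theorem tvEquiv_mem (hB : IsSymp B) (u : V) (c : F) : tvEquiv hB u c ∈ Sp B := by
  intro v w
  simp only [tvEquiv_apply, map_add, LinearMap.add_apply, map_smul, LinearMap.smul_apply,
    smul_eq_mul, hB.alt]
  rw [hB.neg w u]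
  ring

structure IsQ (B : LinearMap.BilinForm F V) (Q : V → F) : Prop where
  add : ∀ v w, Q (v + w) = Q v + Q w + B v w
  smul : ∀ (c : F) v, Q (c • v) = c ^ 2 * Q v

def wp (c : F) : Prop := ∃ e, e ^ 2 + e = c

def shift (B : LinearMap.BilinForm F V) (Q : V → F) (w : V) : V → F := fun v => Q v + (B w v) ^ 2

variable [CharP F 2]

theorem two0 : (2 : F) = 0 := CharTwo.two_eq_zero

theorem add_eq_zero' {a b : F} : a + b = 0 ↔ a = b := by
  constructor
  · intro h; linear_combination h - b * two0 (F := F)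
  · intro h; linear_combination h + b * two0 (F := F)

theorem sq_inj {a b : F} (h : a ^ 2 = b ^ 2) : a = b := by
  have h2 := two0 (F := F)
  have : (a + b) ^ 2 = 0 := by linear_combination h + (b ^ 2 + a * b) * h2
  exact add_eq_zero'.mp (pow_eq_zero_iff (two_ne_zero) |>.mp this)

theorem IsSymp.symm (hB : IsSymp B) (v w : V) : B v w = B w v := by
  have := hB.neg v w
  linear_combination (-1 : F) * this + B v w * two0 (F := F)

theorem IsQ.shift {Q : V → F} (hQ : IsQ B Q) (w : V) : IsQ B (shift B Q w) := by
  constructor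
  · intro v v'
    simp only [SpGen.shift, hQ.add, map_add]
    linear_combination (B w v * B w v') * two0 (F := F)
  · intro c v
    simp only [SpGen.shift, hQ.smul, map_smul, smul_eq_mul]
    ring

theorem IsQ.comp {Q : W → F} (hQ : IsQ C Q) {Ψ : V ≃ₗ[F] W} (h : IsIso B C Ψ) :
    IsQ B (fun v => Q (Ψ v)) := by
  constructor
  · intro v v'
    simp only [map_add, hQ.add]
    rw [h]
  · intro c v
    simp only [map_smul, hQ.smul]

theorem exists_sqrt [Finite F] (a : F) : ∃ b, b ^ 2 = a := by
  have := Fintype.ofFinite F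
  obtain ⟨b, hb⟩ := FiniteField.isSquare_of_char_two (ringChar.eq F 2 ▸ rfl) a
  exact ⟨b, by rw [hb, sq]⟩

theorem exists_shift [Finite F] [FiniteDimensional F V] (hB : IsSymp B) {Q Q' : V → F}
    (hQ : IsQ B Q) (hQ' : IsQ B Q') : ∃ w, Q' = shift B Q w := by
  choose s hs using exists_sqrt (F := F)
  let f : V →ₗ[F] F :=
    { toFun := fun v => s (Q v + Q' v)
      map_add' := fun v w => by
        apply sq_inj
        rw [hs, add_sq, hs, hs, hQ.add, hQ'.add]
        linear_combination (B v w - s (Q v + Q' v) * s (Q w + Q' w)) * two0 (F := F)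
      map_smul' := fun c v => by
        apply sq_inj
        simp only [RingHom.id_apply, smul_eq_mul]
        rw [hs, mul_pow, hs, hQ.smul, hQ'.smul]
        ring }
  obtain ⟨w, hw⟩ := (B.toDual hB.nondeg).surjective f
  refine ⟨w, funext fun v => ?_⟩
  have h1 : B w v = s (Q v + Q' v) := by
    rw [← LinearMap.BilinForm.toDual_def hB.nondeg, hw]; rfl
  simp only [shift, h1, hs]
  linear_combination (-Q v) * two0 (F := F)

theorem dye [Finite F] [FiniteDimensional F V] (hB : IsSymp B) {Q0 : V → F}
    (hQ : IsQ B Q0) {g : V ≃ₗ[F] V} (hg : g ∈ Sp B) :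
    ∃ Q, IsQ B Q ∧ ∀ v, Q (g v) = Q v := by
  obtain ⟨a, ha⟩ := exists_shift hB hQ (hQ.comp hg)
  have ha' : ∀ v, Q0 (g v) = Q0 v + (B a v) ^ 2 := fun v => congrFun ha v
  let R : Submodule F V := LinearMap.range ((g.symm : V →ₗ[F] V) - LinearMap.id)
  have hR : a ∈ R := by
    rw [← LinearMap.BilinForm.orthogonal_orthogonal hB.nondeg hB.isRefl R]
    intro u hu
    have hgu : g u = u := by
      have : ∀ w, B (g u - u) w = 0 := by
        intro w
        have h1 := hu _ ⟨w, rfl⟩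
        change B ((g.symm w) - w) u = 0 at h1
        rw [map_sub, LinearMap.sub_apply, ← hg (g.symm w) u, LinearEquiv.apply_symm_apply] at h1
        rw [hB.neg]
        rw [map_sub, h1, neg_zero]
      exact sub_eq_zero.mp (hB.nd _ this)
    have h2 := ha' u
    rw [hgu] at h2
    have h3 : (B a u) ^ 2 = 0 := by linear_combination -h2
    exact hB.eq_zero_comm (pow_eq_zero_iff two_ne_zero |>.mp h3)
  obtain ⟨w, hw⟩ := hR
  refine ⟨shift B Q0 w, hQ.shift w, fun v => ?_⟩
  have h4 : B a v = B w (g v) - B w v := by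
    rw [← hw]
    change B (g.symm w - w) v = _
    rw [map_sub, LinearMap.sub_apply, ← hg (g.symm w) v, LinearEquiv.apply_symm_apply]
  simp only [shift, ha', h4]
  linear_combination ((B w (g v)) ^ 2 - B w (g v) * B w v) * two0 (F := F)

theorem conj_wp (hB : IsSymp B) {Q : V → F} (hQ : IsQ B Q) {w : V} (h : wp (Q w)) :
    ∃ g ∈ Sp B, ∀ v, shift B Q w v = Q (g v) := by
  have : ∃ e, e ^ 2 * Q w + e = 1 := by
    by_cases h0 : Q w = 0
    · exact ⟨1, by rw [h0]; ring⟩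
    · obtain ⟨z, hz⟩ := h
      refine ⟨z / Q w, ?_⟩
      field_simp
      linear_combination hz
  obtain ⟨e, he⟩ := this
  refine ⟨tvEquiv hB w e, tvEquiv_mem hB w e, fun v => ?_⟩
  rw [tvEquiv_apply, hQ.add, hQ.smul]
  simp only [shift, map_smul, smul_eq_mul]
  rw [hB.symm w v]
  linear_combination (-(B v w) ^ 2) * he

theorem wp_add (a b : F) (ha : wp a) (hb : wp b) : wp (a + b) := by
  obtain ⟨x, rfl⟩ := ha
  obtain ⟨y, rfl⟩ := hb
  exact ⟨x + y, by linear_combination x * y * two0 (F := F)⟩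

def wpHom (F : Type) [Field F] [CharP F 2] : F →+ F where
  toFun z := z ^ 2 + z
  map_zero' := by ring
  map_add' x y := by linear_combination x * y * two0 (F := F)

theorem wp_index [Finite F] : (wpHom F).range.index = 2 := by
  have hk : Nat.card (wpHom F).ker = 2 := by
    have : ((wpHom F).ker : Set F) = {0, 1} := by
      ext z
      simp only [SetLike.mem_coe, AddMonoidHom.mem_ker, Set.mem_insert_iff, Set.mem_singleton_iff]
      change z ^ 2 + z = 0 ↔ _
      have : z ^ 2 + z = z * (z - 1) := by linear_combination z * two0 (F := F)
      rw [this, mul_eq_zero, sub_eq_zero]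
    have h2 : Nat.card (wpHom F).ker = ((wpHom F).ker : Set F).ncard := rfl
    rw [h2, this, Set.ncard_pair zero_ne_one]
  have h1 := (wpHom F).range.card_mul_index
  have h3 := AddSubgroup.card_mul_index (wpHom F).ker
  rw [AddSubgroup.index_ker, hk, ← h1] at h3
  have hpos : 0 < Nat.card (wpHom F).range := Nat.card_pos
  nlinarith

theorem wp_iff (c : F) : wp c ↔ c ∈ (wpHom F).range := Iff.rfl

theorem wp_not_add [Finite F] (a b : F) (ha : ¬ wp a) (hb : ¬ wp b) : wp (a + b) := by
  rw [wp_iff] at *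
  rw [AddSubgroup.add_mem_iff_of_index_two wp_index]
  tauto

theorem shift_conj [Finite F] (hB : IsSymp B) {Q : V → F} (hQ : IsQ B Q) {w w' : V}
    (h : wp (Q w) ↔ wp (Q w')) : ∃ g ∈ Sp B, ∀ v, shift B Q w' v = shift B Q w (g v) := by
  have hs : wp (Q w + Q w') := by
    by_cases hw : wp (Q w)
    · exact wp_add _ _ hw (h.mp hw)
    · exact wp_not_add _ _ hw (fun h' => hw (h.mpr h'))
  have h1 : shift B Q w (w + w') = Q w + Q w' + ((B w w') ^ 2 + B w w') := by
    simp only [shift, hQ.add, map_add, hB.alt]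
    ring
  obtain ⟨g, hg, hg'⟩ := conj_wp hB (hQ.shift w) (w := w + w') (by
    rw [h1]; exact wp_add _ _ hs ⟨_, rfl⟩)
  refine ⟨g, hg, fun v => ?_⟩
  rw [← hg']
  simp only [shift, map_add, LinearMap.add_apply]
  linear_combination (-(B w v) ^ 2 - B w v * B w' v) * two0 (F := F)

def Hyp (B : LinearMap.BilinForm F V) (Q : V → F) : Prop :=
  IsQ B Q ∧ ∃ U : Submodule F V, (∀ u ∈ U, Q u = 0) ∧ 2 * finrank F U = finrank F V

theorem Hyp.comp {Q : W → F} (hQ : Hyp C Q) {Ψ : V ≃ₗ[F] W} (h : IsIso B C Ψ) :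
    Hyp B (fun v => Q (Ψ v)) := by
  obtain ⟨h1, U, hU, hU'⟩ := hQ
  refine ⟨h1.comp h, U.map (Ψ.symm : W →ₗ[F] V), ?_, ?_⟩
  · rintro _ ⟨u, hu, rfl⟩
    simpa using hU u hu
  · rw [LinearEquiv.finrank_map_eq, hU', Ψ.finrank_eq]

theorem hyp_conj [Finite F] [FiniteDimensional F V] (hB : IsSymp B) {Q Q' : V → F}
    (hQ : Hyp B Q) (hQ' : Hyp B Q') : ∃ g ∈ Sp B, ∀ v, Q' v = Q (g v) := by
  obtain ⟨h1, U, hU, hU'⟩ := hQ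
  obtain ⟨h2, Z, hZ, hZ'⟩ := hQ'
  have iU : ∀ u ∈ U, ∀ v ∈ U, B u v = 0 := by
    intro u hu v hv
    have := h1.add u v
    rw [hU _ (U.add_mem hu hv), hU u hu, hU v hv] at this
    simpa using this.symm
  have iZ : ∀ u ∈ Z, ∀ v ∈ Z, B u v = 0 := by
    intro u hu v hv
    have := h2.add u v
    rw [hZ _ (Z.add_mem hu hv), hZ u hu, hZ v hv] at this
    simpa using this.symm
  obtain ⟨Ψ, hΨ, hm⟩ := witt_iso hB hB rfl Z U iZ iU (by omega)
  have hq : IsQ B (fun v => Q (Ψ v)) := h1.comp hΨ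
  obtain ⟨w, hw⟩ := exists_shift hB hq h2
  have hwz : w ∈ Z := by
    have hZo : Z = B.orthogonal Z := by
      apply Submodule.eq_of_le_of_finrank_eq
      · intro z hz n hn; exact iZ n hn z hz
      · rw [LinearMap.BilinForm.finrank_orthogonal hB.nondeg]; omega
    rw [hZo]
    intro z hz
    have := congrFun hw z
    have h3 : Ψ z ∈ U := by rw [← hm]; exact ⟨z, hz, rfl⟩
    simp only [shift, hZ z hz, hU _ h3, zero_add] at this
    exact hB.eq_zero_comm (pow_eq_zero_iff two_ne_zero |>.mp this.symm)
  have hw0 : Q (Ψ w) = 0 := hU _ (by rw [← hm]; exact ⟨w, hwz, rfl⟩)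
  obtain ⟨g, hg, hg'⟩ := conj_wp hB hq (w := w) ⟨0, by simp [hw0]⟩
  refine ⟨Ψ * g, (Sp B).mul_mem hΨ hg, fun v => ?_⟩
  rw [hw, hg']
  rfl

def Ty (B : LinearMap.BilinForm F V) (p : Prop) (Q : V → F) : Prop :=
  ∃ Q0 w, Hyp B Q0 ∧ Q = shift B Q0 w ∧ (wp (Q0 w) ↔ p)

theorem Ty.isQ {p : Prop} {Q : V → F} (h : Ty B p Q) : IsQ B Q := by
  obtain ⟨Q0, w, h, rfl, -⟩ := h
  exact h.1.shift w

theorem Ty.comp {p : Prop} {Q : W → F} (hQ : Ty C p Q) {Ψ : V ≃ₗ[F] W} (h : IsIso B C Ψ) :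
    Ty B p (fun v => Q (Ψ v)) := by
  obtain ⟨Q0, w, h0, rfl, hp⟩ := hQ
  refine ⟨_, Ψ.symm w, h0.comp h, ?_, by simpa using hp⟩
  funext v
  simp only [shift]
  rw [← h (Ψ.symm w) v, LinearEquiv.apply_symm_apply]

theorem ty_conj [Finite F] [FiniteDimensional F V] (hB : IsSymp B) {p : Prop} {Q Q' : V → F}
    (hQ : Ty B p Q) (hQ' : Ty B p Q') : ∃ g ∈ Sp B, ∀ v, Q' v = Q (g v) := by
  obtain ⟨Q0, w, h0, rfl, hp⟩ := hQ
  obtain ⟨Q0', w', h0', rfl, hp'⟩ := hQ'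
  obtain ⟨g, hg, hgv⟩ := hyp_conj hB h0 h0'
  obtain ⟨k, hk, hkv⟩ := shift_conj hB h0.1 (w := w) (w' := g w') (by
    rw [hp, ← hp', hgv])
  refine ⟨k * g, (Sp B).mul_mem hk hg, fun v => ?_⟩
  change _ = shift B Q0 w (k (g v))
  rw [← hkv]
  simp only [shift, hgv]
  rw [hg]

def Pres (B : LinearMap.BilinForm F V) (p : Prop) (x : V ≃ₗ[F] V) : Prop :=
  ∃ Q, Ty B p Q ∧ ∀ v, Q (x v) = Q v

theorem pres_or [Finite F] [FiniteDimensional F V] (hB : IsSymp B) {Q0 : V → F} (h0 : Hyp B Q0)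
    {x : V ≃ₗ[F] V} (hx : x ∈ Sp B) : Pres B True x ∨ Pres B False x := by
  obtain ⟨Q, hQ, hQx⟩ := dye hB h0.1 hx
  obtain ⟨w, hw⟩ := exists_shift hB h0.1 hQ
  by_cases h : wp (Q0 w)
  · exact Or.inl ⟨Q, ⟨Q0, w, h0, hw, by simpa using h⟩, hQx⟩
  · exact Or.inr ⟨Q, ⟨Q0, w, h0, hw, by simpa using h⟩, hQx⟩

def stabQ (B : LinearMap.BilinForm F V) (Q : V → F) : Subgroup (Sp B) where
  carrier := {g | ∀ v, Q ((g : V ≃ₗ[F] V) v) = Q v}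
  mul_mem' {a b} ha hb := fun v => by
    change Q ((a : V ≃ₗ[F] V) ((b : V ≃ₗ[F] V) v)) = _
    rw [ha, hb]
  one_mem' := fun v => rfl
  inv_mem' {a} ha := fun v => by
    have := ha ((a : V ≃ₗ[F] V).symm v)
    rw [LinearEquiv.apply_symm_apply] at this
    exact this.symm

theorem stabQ_ne_top [Finite F] (hF : 2 < Nat.card F) [Nontrivial V] (hB : IsSymp B) {Q : V → F}
    (hQ : IsQ B Q) : stabQ B Q ≠ ⊤ := by
  intro h
  obtain ⟨u, hu⟩ := exists_ne (0 : V)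
  obtain ⟨v, hv⟩ := hB.exists_one hu
  have : ∃ c : F, c + c ^ 2 * Q u ≠ 0 := by
    by_contra! hc
    have h1 := hc 1
    have hc2 : ∀ c : F, c = 0 ∨ c = 1 := by
      intro c
      have h2 := hc c
      have : c * (1 - c) = 0 := by linear_combination h2 - c ^ 2 * h1
      rcases mul_eq_zero.mp this with h | h
      · exact Or.inl h
      · exact Or.inr (sub_eq_zero.mp h).symm
    have : Nat.card F ≤ 2 := by
      have h3 : (Set.univ : Set F) ⊆ {0, 1} := fun c _ => hc2 c
      have := Set.ncard_le_ncard h3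
      rw [Set.ncard_univ, Set.ncard_pair zero_ne_one] at this
      exact this
    omega
  obtain ⟨c, hc⟩ := this
  have hm : (⟨tvEquiv hB u c, tvEquiv_mem hB u c⟩ : Sp B) ∈ stabQ B Q := by rw [h]; trivial
  have h1 : Q (tvEquiv hB u c v) = Q v := hm v
  rw [tvEquiv_apply, hQ.add, hQ.smul, map_smul, hB.symm v u, hv] at h1
  apply hc
  simp only [smul_eq_mul] at h1
  linear_combination h1

theorem kill_pres [Finite F] (hF : 2 < Nat.card F) [Nontrivial V] [FiniteDimensional F V]
    (hB : IsSymp B) {p : Prop} (x y : Sp B) (hx : Pres B p x) (hy : Pres B p y) :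
    ¬ InvGen x y := by
  obtain ⟨Q, hQ, hx⟩ := hx
  obtain ⟨Q', hQ', hy⟩ := hy
  obtain ⟨g, hg, hgv⟩ := ty_conj hB hQ hQ'
  refine not_invGen_of (stabQ B Q) (stabQ_ne_top hF hB hQ.isQ) hx ⟨g, hg⟩ ?_
  intro v
  change Q (g ((y : V ≃ₗ[F] V) (g.symm v))) = Q v
  rw [← hgv, hy, hgv, LinearEquiv.apply_symm_apply]

end part2
end SpGen

namespace SpGen
open Module LinearMap

section part3
variable {F : Type} [Field F]
variable {V W : Type} [AddCommGroup V] [Module F V] [AddCommGroup W] [Module F W]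
  {B : LinearMap.BilinForm F V} {C : LinearMap.BilinForm F W}

def stabS (B : LinearMap.BilinForm F V) (S : Set V) : Subgroup (Sp B) where
  carrier := {g | ∀ v, ((g : V ≃ₗ[F] V) v) ∈ S ↔ v ∈ S}
  mul_mem' {a b} ha hb := fun v => by
    change ((a : V ≃ₗ[F] V) ((b : V ≃ₗ[F] V) v)) ∈ S ↔ _
    rw [ha, hb]
  one_mem' := fun v => Iff.rfl
  inv_mem' {a} ha := fun v => by
    have := ha ((a : V ≃ₗ[F] V).symm v)
    rw [LinearEquiv.apply_symm_apply] at this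
    exact this.symm

theorem kill_set (x y : Sp B) (S T : Set V) (hS : stabS B S ≠ ⊤)
    (hx : ∀ v, (x : V ≃ₗ[F] V) v ∈ S ↔ v ∈ S) (hy : ∀ v, (y : V ≃ₗ[F] V) v ∈ T ↔ v ∈ T)
    (g : V ≃ₗ[F] V) (hg : g ∈ Sp B) (hgT : ∀ v, g v ∈ S ↔ v ∈ T) : ¬ InvGen x y := by
  refine not_invGen_of (stabS B S) hS hx ⟨g, hg⟩ ?_
  intro v
  change g ((y : V ≃ₗ[F] V) (g.symm v)) ∈ S ↔ v ∈ S
  rw [hgT, hy, ← hgT, LinearEquiv.apply_symm_apply]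

theorem stabU_ne_top (hB : IsSymp B) (U : Submodule F V) (h0 : U ≠ ⊥) (h1 : U ≠ ⊤) :
    stabS B (U : Set V) ≠ ⊤ := by
  intro h
  obtain ⟨w, hw, hw0⟩ := Submodule.exists_mem_ne_zero_of_ne_bot h0
  obtain ⟨f, hf⟩ := hB.exists_one hw0
  obtain ⟨u0, hu0⟩ : ∃ u, u ∉ U := by
    by_contra! hc
    exact h1 (eq_top_iff.mpr fun v _ => hc v)
  have : ∃ u, u ∉ U ∧ B w u ≠ 0 := by
    by_cases h2 : f ∈ U
    · by_cases h3 : B w u0 = 0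
      · refine ⟨u0 + f, fun h => hu0 ?_, ?_⟩
        · simpa using U.sub_mem h h2
        · rw [map_add, h3, hf]; simp
      · exact ⟨u0, hu0, h3⟩
    · exact ⟨f, h2, by simp [hf]⟩
  obtain ⟨u, hu, hwu⟩ := this
  have hm : (⟨tvEquiv hB u 1, tvEquiv_mem hB u 1⟩ : Sp B) ∈ stabS B (U : Set V) := by
    rw [h]; trivial
  have h2 : tvEquiv hB u 1 w ∈ U := (hm w).mpr hw
  rw [tvEquiv_apply] at h2
  have h3 := U.sub_mem h2 hw
  rw [add_sub_cancel_left] at h3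
  apply hu
  rwa [U.smul_mem_iff (by simpa using hwu)] at h3

theorem map_mem_iff (g : V ≃ₗ[F] W) (U : Submodule F V) (Z : Submodule F W)
    (h : U.map (g : V →ₗ[F] W) = Z) (v : V) : g v ∈ Z ↔ v ∈ U := by
  subst h
  constructor
  · rintro ⟨u, hu, h⟩
    have : u = v := g.injective h
    rwa [← this]
  · intro h; exact ⟨v, h, rfl⟩

theorem inv_iff [FiniteDimensional F V] (x : V ≃ₗ[F] V) (U : Submodule F V)
    (h : ∀ v ∈ U, x v ∈ U) (v : V) : x v ∈ U ↔ v ∈ U := by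
  apply map_mem_iff
  apply Submodule.eq_of_le_of_finrank_eq
  · rintro _ ⟨u, hu, rfl⟩; exact h u hu
  · rw [LinearEquiv.finrank_map_eq]

theorem kill_isotropic [FiniteDimensional F V] (hB : IsSymp B) (x y : Sp B) (U Z : Submodule F V)
    (h0 : U ≠ ⊥) (h1 : U ≠ ⊤)
    (hx : ∀ v ∈ U, (x : V ≃ₗ[F] V) v ∈ U) (hy : ∀ v ∈ Z, (y : V ≃ₗ[F] V) v ∈ Z)
    (hU : ∀ u ∈ U, ∀ v ∈ U, B u v = 0) (hZ : ∀ u ∈ Z, ∀ v ∈ Z, B u v = 0)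
    (hUZ : finrank F U = finrank F Z) : ¬ InvGen x y := by
  obtain ⟨g, hg, hgZ⟩ := witt_iso hB hB rfl Z U hZ hU hUZ.symm
  exact kill_set x y U Z (stabU_ne_top hB U h0 h1) (inv_iff _ U hx) (inv_iff _ Z hy) g hg
    (map_mem_iff g Z U hgZ)

theorem kill_nondeg [FiniteDimensional F V] (hB : IsSymp B) (x y : Sp B) (U Z : Submodule F V)
    (h0 : U ≠ ⊥) (h1 : U ≠ ⊤)
    (hx : ∀ v ∈ U, (x : V ≃ₗ[F] V) v ∈ U) (hy : ∀ v ∈ Z, (y : V ≃ₗ[F] V) v ∈ Z)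
    (hU : Disjoint U (B.orthogonal U)) (hZ : Disjoint Z (B.orthogonal Z))
    (hUZ : finrank F U = finrank F Z) : ¬ InvGen x y := by
  obtain ⟨g, hg, hgZ, -⟩ := witt_nd hB hB rfl Z U hZ hU hUZ.symm
  exact kill_set x y U Z (stabU_ne_top hB U h0 h1) (inv_iff _ U hx) (inv_iff _ Z hy) g hg
    (map_mem_iff g Z U hgZ)

theorem stabW_ne_top [FiniteDimensional F V] (hB : IsSymp B) (U : Submodule F V) (h0 : U ≠ ⊥)
    (h1 : B.orthogonal U ≠ ⊥) (hU : Disjoint U (B.orthogonal U)) :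
    stabS B ((U : Set V) ∪ (B.orthogonal U : Submodule F V)) ≠ ⊤ := by
  intro h
  obtain ⟨a, ha, ha0⟩ := Submodule.exists_mem_ne_zero_of_ne_bot h0
  obtain ⟨b, hb, hb0⟩ := Submodule.exists_mem_ne_zero_of_ne_bot h1
  obtain ⟨v, hv⟩ := (symp_restrict hB U hU).exists_one (e := ⟨a, ha⟩)
    (by intro h; exact ha0 (congrArg Subtype.val h))
  have hv : B a v = 1 := hv
  have hm : (⟨tvEquiv hB (a + b) 1, tvEquiv_mem hB (a + b) 1⟩ : Sp B) ∈
    stabS B ((U : Set V) ∪ (B.orthogonal U : Submodule F V)) := by rw [h]; trivial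
  have h2 : tvEquiv hB (a + b) 1 (v : V) ∈ (U : Set V) ∪ (B.orthogonal U : Submodule F V) :=
    (hm v).mpr (Or.inl v.2)
  have hvb : B v b = 0 := hb v v.2
  rw [tvEquiv_apply, map_add, hvb, hB.neg a v, hv] at h2
  rw [Submodule.disjoint_def] at hU
  rcases h2 with h2 | h2
  · have h3 : b ∈ U := by
      have : b = v - a - ((v : V) + (1 * (-1 + 0) : F) • (a + b)) := by
        simp; abel
      rw [this]
      exact U.sub_mem (U.sub_mem v.2 ha) h2
    exact hb0 (hU b h3 hb)
  · have h3 : (v : V) - a ∈ B.orthogonal U := by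
      have : (v : V) - a = b + ((v : V) + (1 * (-1 + 0) : F) • (a + b)) := by
        simp; abel
      rw [this]
      exact (B.orthogonal U).add_mem hb h2
    have h4 := hU _ (U.sub_mem v.2 ha) h3
    rw [sub_eq_zero] at h4
    rw [h4, hB.alt] at hv
    exact zero_ne_one hv

theorem kill_wreath [FiniteDimensional F V] (hB : IsSymp B) (x y : Sp B) (U Z : Submodule F V)
    (h0 : U ≠ ⊥) (h1 : U ≠ ⊤)
    (hx : ∀ v ∈ U, (x : V ≃ₗ[F] V) v ∈ B.orthogonal U)
    (hx' : ∀ v ∈ B.orthogonal U, (x : V ≃ₗ[F] V) v ∈ U)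
    (hy : ∀ v ∈ Z, (y : V ≃ₗ[F] V) v ∈ Z)
    (hU : Disjoint U (B.orthogonal U)) (hZ : Disjoint Z (B.orthogonal Z))
    (hUZ : finrank F U = finrank F Z) : ¬ InvGen x y := by
  obtain ⟨g, hg, hgZ, hgZ'⟩ := witt_nd hB hB rfl Z U hZ hU hUZ.symm
  have hy2 := inv_iff _ Z hy
  have hy3 : ∀ v, (y : V ≃ₗ[F] V) v ∈ B.orthogonal Z ↔ v ∈ B.orthogonal Z := by
    apply inv_iff
    intro v hv z hz
    have h2 : (y : V ≃ₗ[F] V).symm z ∈ Z := by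
      rw [← hy2, LinearEquiv.apply_symm_apply]; exact hz
    have h3 := hv _ h2
    rw [← mem_Sp.mp y.2, LinearEquiv.apply_symm_apply] at h3
    exact h3
  have hx2 : ∀ v, ((x : V ≃ₗ[F] V) v) ∈ B.orthogonal U ↔ v ∈ U := by
    intro v
    refine ⟨fun h => ?_, hx v⟩
    have e2 : ∀ v, (x : V ≃ₗ[F] V) ((x : V ≃ₗ[F] V) v) ∈ U ↔ v ∈ U :=
      inv_iff ((x : V ≃ₗ[F] V).trans (x : V ≃ₗ[F] V)) U (fun v hv => hx' _ (hx _ hv))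
    exact (e2 v).mp (hx' _ h)
  have hx3 : ∀ v, ((x : V ≃ₗ[F] V) v) ∈ U ↔ v ∈ B.orthogonal U := by
    intro v
    refine ⟨fun h => ?_, hx' v⟩
    have e2 : ∀ v, (x : V ≃ₗ[F] V) ((x : V ≃ₗ[F] V) v) ∈ B.orthogonal U ↔ v ∈ B.orthogonal U :=
      inv_iff ((x : V ≃ₗ[F] V).trans (x : V ≃ₗ[F] V)) (B.orthogonal U) (fun v hv => hx _ (hx' _ hv))
    exact (e2 v).mp (hx _ h)
  have hperp : B.orthogonal U ≠ ⊥ := by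
    intro h
    apply h1
    rw [← LinearMap.BilinForm.orthogonal_orthogonal hB.nondeg hB.isRefl U, h]
    rw [eq_top_iff]; intro v _ n hn
    rw [(Submodule.mem_bot F).mp hn]; simp
  refine kill_set x y _ ((Z : Set V) ∪ (B.orthogonal Z : Submodule F V)) 
    (stabW_ne_top hB U h0 hperp hU) ?_ ?_ g hg ?_
  · intro v
    simp only [Set.mem_union, SetLike.mem_coe]
    rw [hx2, hx3, or_comm]
  · intro v
    simp only [Set.mem_union, SetLike.mem_coe]
    rw [hy2, hy3]
  · intro v
    simp only [Set.mem_union, SetLike.mem_coe]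
    rw [map_mem_iff g Z U hgZ, map_mem_iff g _ _ hgZ']

def KStr (K : Type) [Field K] [Algebra F K] (B : LinearMap.BilinForm F V) (x : V ≃ₗ[F] V) : Prop :=
  ∃ ρ : K →ₐ[F] Module.End F V, (∀ a v w, B (ρ a v) w = B v (ρ a w)) ∧
    ∀ a v, ρ a (x v) = x (ρ a v)

theorem kstr_model [Finite F] [CharP F 2] [FiniteDimensional F V] (hB : IsSymp B)
    {K : Type} [Field K] [Algebra F K] [FiniteDimensional F K] (hd : finrank F V = 2 * finrank F K)
    (ρ : K →ₐ[F] Module.End F V) (hρ : ∀ a v w, B (ρ a v) w = B v (ρ a w)) :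
    ∃ Θ : (K × K) ≃ₗ[F] V, (∀ c a b, Θ (c * a, c * b) = ρ c (Θ (a, b))) ∧
      ∀ v w, B (Θ v) (Θ w) = Algebra.trace F K (v.1 * w.2 + v.2 * w.1) := by
  have : Finite K := Module.finite_of_finite F
  have : CharP K 2 := charP_of_injective_algebraMap (algebraMap F K).injective 2
  have hV : Nontrivial V := nontrivial_of_finrank_pos (R := F) (by
    have := Module.finrank_pos (R := F) (M := K); omega)
  obtain ⟨v, hv⟩ := exists_ne (0 : V)
  have hinj : ∀ (v : V), v ≠ 0 → ∀ a, ρ a v = 0 → a = 0 := by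
    intro v hv a h
    by_contra ha
    apply hv
    have : ρ (a⁻¹ * a) v = 0 := by rw [map_mul]; change ρ a⁻¹ (ρ a v) = 0; rw [h, map_zero]
    rw [inv_mul_cancel₀ ha, map_one] at this
    exact this
  let i : K →ₗ[F] V := (LinearMap.applyₗ v).comp ρ.toLinearMap
  obtain ⟨l, hl⟩ := LinearMap.exists_leftInverse_of_injective i
    (LinearMap.ker_eq_bot'.mpr (fun a h => hinj v hv a h))
  let φ : Module.Dual F V := (Algebra.trace F K).comp l
  let w := (B.toDual hB.nondeg).symm φ
  have hw : ∀ d, B (ρ d v) w = Algebra.trace F K d := by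
    intro d
    rw [hB.symm]
    have : B w (ρ d v) = φ (ρ d v) := by
      exact LinearMap.BilinForm.apply_toDual_symm_apply (hB := hB.nondeg) φ (ρ d v)
    rw [this]
    change Algebra.trace F K (l (i d)) = _
    exact congrArg (Algebra.trace F K) (LinearMap.congr_fun hl d)
  have mulap : ∀ a b u, ρ a (ρ b u) = ρ (a * b) u := by
    intro a b u; rw [map_mul]; rfl
  have hself : ∀ u a c, B (ρ a u) (ρ c u) = 0 := by
    intro u a c
    rw [← hρ, mulap]
    obtain ⟨e, he⟩ := exists_sqrt (c * a)
    rw [← he, pow_two, ← mulap, hρ]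
    exact hB.alt _
  let Θ : (K × K) →ₗ[F] V := i.coprod ((LinearMap.applyₗ w).comp ρ.toLinearMap)
  have hΘ : ∀ a b, Θ (a, b) = ρ a v + ρ b w := fun a b => rfl
  have hiso : ∀ v w, B (Θ v) (Θ w) = Algebra.trace F K (v.1 * w.2 + v.2 * w.1) := by
    rintro ⟨a, b⟩ ⟨a', b'⟩
    rw [hΘ, hΘ]
    simp only [map_add, LinearMap.add_apply, hself]
    have h1 : ∀ a b, B (ρ a v) (ρ b w) = Algebra.trace F K (a * b) := by
      intro a b
      rw [← hρ, mulap, hw, mul_comm]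
    rw [hB.symm (ρ b w), h1, h1, zero_add, add_zero, mul_comm b a', add_comm]
  have hinjΘ : Function.Injective Θ := by
    rw [← LinearMap.ker_eq_bot, LinearMap.ker_eq_bot']
    have nd := traceForm_nondegenerate F K
    rintro ⟨a, b⟩ h
    have h1 : ∀ c, Algebra.trace F K (a * c) = 0 := fun c => by
      have := hiso (a, b) (0, c)
      rw [h] at this; simpa using this.symm
    have h2 : ∀ c, Algebra.trace F K (b * c) = 0 := fun c => by
      have := hiso (a, b) (c, 0)
      rw [h] at this; simpa using this.symm
    rw [nd.1 a h1, nd.1 b h2]; rfl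
  refine ⟨LinearEquiv.ofInjectiveOfFinrankEq Θ hinjΘ (by rw [Module.finrank_prod, hd]; ring), ?_, ?_⟩
  · intro c a b
    change Θ _ = ρ c (Θ _)
    rw [hΘ, hΘ, map_add, mulap, mulap]
  · exact hiso

def centK (B : LinearMap.BilinForm F V) {K : Type} [Field K] [Algebra F K]
    (ρ : K →ₐ[F] Module.End F V) : Subgroup (Sp B) where
  carrier := {g | ∀ a v, ρ a ((g : V ≃ₗ[F] V) v) = (g : V ≃ₗ[F] V) (ρ a v)}
  mul_mem' {g h} hg hh := fun a v => by
    change ρ a ((g : V ≃ₗ[F] V) ((h : V ≃ₗ[F] V) v)) = ((g : V ≃ₗ[F] V) ((h : V ≃ₗ[F] V) _))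
    rw [hg, hh]
  one_mem' := fun a v => rfl
  inv_mem' {g} hg := fun a v => by
    change ρ a ((g : V ≃ₗ[F] V).symm v) = (g : V ≃ₗ[F] V).symm (ρ a v)
    apply (g : V ≃ₗ[F] V).injective
    rw [← hg]; simp

theorem centK_ne_top (hB : IsSymp B) [Nontrivial V] {K : Type} [Field K] [Algebra F K]
    [FiniteDimensional F K]
    (hK : 2 ≤ finrank F K) (ρ : K →ₐ[F] Module.End F V) : centK B ρ ≠ ⊤ := by
  intro h
  obtain ⟨u, hu⟩ := exists_ne (0 : V)
  obtain ⟨v, hv⟩ := hB.exists_one hu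
  have hm : (⟨tvEquiv hB u 1, tvEquiv_mem hB u 1⟩ : Sp B) ∈ centK B ρ := by rw [h]; trivial
  have key : ∀ a : K, ∃ c : F, algebraMap F K c = a := by
    intro a
    have h1 : ρ a (tvEquiv hB u 1 v) = tvEquiv hB u 1 (ρ a v) := hm a v
    rw [tvEquiv_apply, tvEquiv_apply, map_add, map_smul, add_right_inj] at h1
    rw [hB.neg u v, hv] at h1
    refine ⟨- B (ρ a v) u, ?_⟩
    by_contra hc
    have hc' : a - algebraMap F K (- B (ρ a v) u) ≠ 0 := by
      intro h; rw [sub_eq_zero] at h; exact hc h.symm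
    apply hu
    have h3 : ρ (a - algebraMap F K (- B (ρ a v) u)) u = 0 := by
      rw [map_sub, AlgHom.commutes]
      simp only [LinearMap.sub_apply, Module.algebraMap_end_apply]
      rw [sub_eq_zero]
      have := congrArg (fun z => - z) h1
      simpa using this
    have : ρ ((a - algebraMap F K (- B (ρ a v) u))⁻¹ * (a - algebraMap F K (- B (ρ a v) u))) u = 0 := by
      rw [map_mul, Module.End.mul_apply, h3, map_zero]
    rw [inv_mul_cancel₀ hc', map_one] at this
    exact this
  have : finrank F K ≤ 1 := by
    apply finrank_le_one (1 : K)
    intro a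
    obtain ⟨c, hc⟩ := key a
    exact ⟨c, by rw [← hc, Algebra.smul_def, mul_one]⟩
  omega

theorem kill_K [Finite F] [CharP F 2] [FiniteDimensional F V] (hB : IsSymp B)
    {K : Type} [Field K] [Algebra F K] [FiniteDimensional F K] (hd : finrank F V = 2 * finrank F K)
    (hK : 2 ≤ finrank F K) (x y : Sp B) (hx : KStr K B (x : V ≃ₗ[F] V)) (hy : KStr K B (y : V ≃ₗ[F] V)) :
    ¬ InvGen x y := by
  have hV : Nontrivial V := nontrivial_of_finrank_pos (R := F) (by omega)
  obtain ⟨ρ, hρ, hx⟩ := hx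
  obtain ⟨ρ', hρ', hy⟩ := hy
  obtain ⟨Θ, h1, h2⟩ := kstr_model hB hd ρ hρ
  obtain ⟨Θ', h1', h2'⟩ := kstr_model hB hd ρ' hρ'
  let g := Θ'.symm.trans Θ
  have hg : g ∈ Sp B := by
    intro v w
    change B (Θ (Θ'.symm v)) (Θ (Θ'.symm w)) = _
    rw [h2, ← h2']; simp
  have hgρ : ∀ a v, ρ a (g v) = g (ρ' a v) := by
    intro a v
    obtain ⟨p, rfl⟩ := Θ'.surjective v
    change ρ a (Θ (Θ'.symm (Θ' p))) = Θ (Θ'.symm _)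
    rw [← h1', LinearEquiv.symm_apply_apply, LinearEquiv.symm_apply_apply, h1]
  refine not_invGen_of (centK B ρ) (centK_ne_top hB hK ρ) hx ⟨g, hg⟩ ?_
  intro a v
  change ρ a (g ((y : V ≃ₗ[F] V) (g.symm v))) = g ((y : V ≃ₗ[F] V) (g.symm _))
  rw [hgρ, hy]
  congr 2
  apply g.injective
  rw [← hgρ]; simp

end part3
end SpGen

namespace SpGen
open Module LinearMap Polynomial

section part4
variable {F : Type} [Field F]
variable {V W : Type} [AddCommGroup V] [Module F V] [AddCommGroup W] [Module F W]
  {B : LinearMap.BilinForm F V} {C : LinearMap.BilinForm F W}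

def Inv (x : V ≃ₗ[F] V) (U : Submodule F V) : Prop := ∀ v ∈ U, x v ∈ U

theorem Inv.orth [FiniteDimensional F V] {x : V ≃ₗ[F] V} (hx : x ∈ Sp B) {U : Submodule F V}
    (h : Inv x U) : Inv x (B.orthogonal U) := by
  intro v hv z hz
  have h2 : x.symm z ∈ U := by
    rw [← inv_iff x U h, LinearEquiv.apply_symm_apply]; exact hz
  have h3 := hv _ h2
  rw [← mem_Sp.mp hx, LinearEquiv.apply_symm_apply] at h3
  exact h3

theorem Inv.symm [FiniteDimensional F V] {x : V ≃ₗ[F] V} {U : Submodule F V}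
    (h : Inv x U) : Inv x.symm U := by
  intro v hv
  rw [← inv_iff x U h, LinearEquiv.apply_symm_apply]; exact hv

theorem Inv.inf {x : V ≃ₗ[F] V} {U Z : Submodule F V} (h : Inv x U) (h' : Inv x Z) :
    Inv x (U ⊓ Z) := fun v hv => ⟨h v hv.1, h' v hv.2⟩

theorem Inv.ker {x : V ≃ₗ[F] V} (T : Module.End F V) (h : ∀ v, T (x v) = x (T v)) :
    Inv x (LinearMap.ker T) := by
  intro v hv
  rw [LinearMap.mem_ker] at hv ⊢
  rw [h, hv, map_zero]

theorem Inv.map {x : V ≃ₗ[F] V} (T : Module.End F V) (h : ∀ v, T (x v) = x (T v))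
    {U : Submodule F V} (hU : Inv x U) : Inv x (U.map T) := by
  rintro _ ⟨v, hv, rfl⟩
  exact ⟨x v, hU v hv, h v⟩

theorem aeval_comm {x : V ≃ₗ[F] V} (T : Module.End F V) (h : ∀ v, T (x v) = x (T v)) (Q : F[X])
    (v : V) : aeval T Q (x v) = x (aeval T Q v) := by
  have : Commute (aeval T Q) (x : Module.End F V) := by
    have h0 : Commute T (x : Module.End F V) := LinearMap.ext fun v => h v
    induction Q using Polynomial.induction_on' with
    | add p q hp hq => rw [map_add]; exact hp.add_left hq
    | monomial n a =>
      rw [aeval_monomial]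
      exact Commute.mul_left (Algebra.commutes a _) (h0.pow_left n)
  exact LinearMap.congr_fun this v

theorem aeval_adj (T S : Module.End F V) (h : ∀ v w, B (T v) w = B v (S w)) (Q : F[X])
    (v w : V) : B (aeval T Q v) w = B v (aeval S Q w) := by
  induction Q using Polynomial.induction_on' generalizing v w with
  | add p q hp hq => simp only [map_add, LinearMap.add_apply, hp, hq]
  | monomial n a =>
    have hn : ∀ n : ℕ, ∀ v w, B ((T ^ n) v) w = B v ((S ^ n) w) := by
      intro n
      induction n with
      | zero => intro v w; rfl
      | succ n ih =>
        intro v w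
        rw [pow_succ, pow_succ', Module.End.mul_apply, Module.End.mul_apply, ih, h]
    simp only [aeval_monomial, Module.End.mul_apply, Module.algebraMap_end_apply, map_smul,
      LinearMap.smul_apply, hn]

theorem fieldOf [FiniteDimensional F V] [Nontrivial V] (T : Module.End F V)
    (h : ∀ Q : F[X], aeval T Q = 0 ∨ Function.Injective (aeval T Q)) :
    ∃ (L : Type) (_ : Field L) (_ : Algebra F L) (_ : FiniteDimensional F L)
      (ρ : L →ₐ[F] Module.End F V) (θ : L), ρ θ = T ∧ ∀ a, ∃ Q : F[X], a = aeval θ Q := by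
  have hT : IsIntegral F T := Algebra.IsIntegral.isIntegral T
  have hP0 := minpoly.ne_zero hT
  have hirr : Irreducible (minpoly F T) := by
    have hnu : minpoly F T ≠ 1 := minpoly.ne_one F T
    rw [Polynomial.irreducible_of_monic (minpoly.monic hT) hnu]
    intro f g hf hg hfg
    have h0 : aeval T (f * g) = 0 := by rw [hfg]; exact minpoly.aeval F T
    rw [map_mul] at h0
    have aux : ∀ f g : F[X], f.Monic → g.Monic → f * g = minpoly F T → aeval T f = 0 → g = 1 := by
      intro f g hf hg hfg h1
      have := minpoly.dvd F T h1
      rw [← hfg] at this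
      have h2 : IsUnit g := by
        obtain ⟨c, hc⟩ := this
        have : f * 1 = f * (g * c) := by rw [mul_one, ← mul_assoc]; exact hc
        exact IsUnit.of_mul_eq_one c (mul_left_cancel₀ hf.ne_zero this).symm
      exact hg.eq_one_of_isUnit h2
    rcases h f with h1 | h1
    · exact Or.inr (aux f g hf hg hfg h1)
    · left
      refine aux g f hg hf (by rw [mul_comm]; exact hfg) ?_
      ext v
      apply h1
      have := LinearMap.congr_fun h0 v
      simpa using this
  have := Fact.mk hirr
  refine ⟨AdjoinRoot (minpoly F T), inferInstance, inferInstance,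
    (AdjoinRoot.powerBasis hP0).finite, 
    Ideal.Quotient.liftₐ (Ideal.span {minpoly F T}) (aeval T) (by
      intro a ha
      obtain ⟨c, rfl⟩ := Ideal.mem_span_singleton.mp ha
      rw [map_mul, minpoly.aeval, zero_mul]),
    AdjoinRoot.root _, ?_, ?_⟩
  · exact (Ideal.Quotient.liftₐ_apply _ _ _ _).trans (aeval_X T)
  · intro a
    obtain ⟨Q, rfl⟩ := AdjoinRoot.mk_surjective a
    exact ⟨Q, by rw [AdjoinRoot.aeval_eq]⟩

theorem kstr_transfer [Finite F] {L K : Type} [Field L] [Algebra F L] [FiniteDimensional F L]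
    [Field K] [Algebra F K] [FiniteDimensional F K] (h : finrank F K = finrank F L)
    {x : V ≃ₗ[F] V} (hx : KStr L B x) : KStr K B x := by
  have : Finite L := Module.finite_of_finite F
  have : Finite K := Module.finite_of_finite F
  obtain ⟨f⟩ := FiniteField.nonempty_algHom_of_finrank_dvd (F := F) (K := K) (L := L) (by rw [h])
  obtain ⟨ρ, h1, h2⟩ := hx
  exact ⟨ρ.comp f, fun a => h1 _, fun a => h2 _⟩

theorem rho_inj {L : Type} [Field L] [Algebra F L] (ρ : L →ₐ[F] Module.End F V) {v : V} (hv : v ≠ 0)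
    {a : L} (h : ρ a v = 0) : a = 0 := by
  by_contra ha
  apply hv
  have : ρ (a⁻¹ * a) v = 0 := by rw [map_mul, Module.End.mul_apply, h, map_zero]
  rwa [inv_mul_cancel₀ ha, map_one] at this

def orb {L : Type} [Field L] [Algebra F L] (ρ : L →ₐ[F] Module.End F V) (v : V) : L →ₗ[F] V :=
  (LinearMap.applyₗ v).comp ρ.toLinearMap

theorem orb_apply {L : Type} [Field L] [Algebra F L] (ρ : L →ₐ[F] Module.End F V) (v : V) (a : L) :
    orb ρ v a = ρ a v := rfl

theorem orb_finrank {L : Type} [Field L] [Algebra F L] [FiniteDimensional F L]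
    (ρ : L →ₐ[F] Module.End F V) {v : V} (hv : v ≠ 0) :
    finrank F (LinearMap.range (orb ρ v)) = finrank F L := by
  apply LinearMap.finrank_range_of_inj
  rw [← LinearMap.ker_eq_bot, LinearMap.ker_eq_bot']
  intro a ha
  exact rho_inj ρ hv ha

theorem isotropic_finrank [FiniteDimensional F V] (hB : IsSymp B) (U : Submodule F V)
    (hU : ∀ u ∈ U, ∀ v ∈ U, B u v = 0) : 2 * finrank F U ≤ finrank F V := by
  have h1 : U ≤ B.orthogonal U := fun v hv u hu => hU u hu v hv
  have h2 := Submodule.finrank_mono h1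
  rw [LinearMap.BilinForm.finrank_orthogonal hB.nondeg] at h2
  have := Submodule.finrank_le U
  omega

theorem orth_self [FiniteDimensional F V] (hB : IsSymp B) (U : Submodule F V)
    (hU : ∀ u ∈ U, ∀ v ∈ U, B u v = 0) (h : finrank F V = 2 * finrank F U) :
    B.orthogonal U = U := by
  have h1 : U ≤ B.orthogonal U := fun v hv u hu => hU u hu v hv
  symm
  apply Submodule.eq_of_le_of_finrank_eq h1
  rw [LinearMap.BilinForm.finrank_orthogonal hB.nondeg]
  omega

theorem kstr_irr [Finite F] [CharP F 2] [FiniteDimensional F V] [Nontrivial V] (hB : IsSymp B)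
    {x : V ≃ₗ[F] V} (hx : x ∈ Sp B) (hirr : ∀ U : Submodule F V, Inv x U → U = ⊥ ∨ U = ⊤)
    {K : Type} [Field K] [Algebra F K] [FiniteDimensional F K] (hd : finrank F V = 2 * finrank F K) :
    KStr K B x := by
  let T : Module.End F V := (x : Module.End F V) + (x.symm : Module.End F V)
  have hTv : ∀ v, T v = x v + x.symm v := fun v => rfl
  have hxs : ∀ v w, B (x v) w = B v (x.symm w) := by
    intro v w
    rw [← mem_Sp.mp hx v, LinearEquiv.apply_symm_apply]
  have hxs' : ∀ v w, B (x.symm v) w = B v (x w) := by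
    intro v w
    rw [← mem_Sp.mp hx (x.symm v), LinearEquiv.apply_symm_apply]
  have hTadj : ∀ v w, B (T v) w = B v (T w) := by
    intro v w
    simp only [hTv, map_add, LinearMap.add_apply, hxs, hxs']
    rw [add_comm]
  have hTx : ∀ v, T (x v) = x (T v) := by
    intro v; simp [hTv]
  obtain ⟨L, _, _, _, ρ, θ, hθ, hL⟩ := fieldOf T (by
    intro Q
    rcases hirr _ (Inv.ker (aeval T Q) (aeval_comm T hTx Q)) with h | h
    · exact Or.inr (LinearMap.ker_eq_bot.mp h)
    · exact Or.inl (LinearMap.ker_eq_top.mp h))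
  have hρ : ∀ a, ∃ Q : F[X], ρ a = aeval T Q := by
    intro a
    obtain ⟨Q, rfl⟩ := hL a
    exact ⟨Q, by rw [← Polynomial.aeval_algHom_apply, hθ]⟩
  have hadj : ∀ a v w, B (ρ a v) w = B v (ρ a w) := by
    intro a
    obtain ⟨Q, hQ⟩ := hρ a
    rw [hQ]; exact aeval_adj T T hTadj Q
  have hcomm : ∀ a v, ρ a (x v) = x (ρ a v) := by
    intro a
    obtain ⟨Q, hQ⟩ := hρ a
    rw [hQ]; exact aeval_comm T hTx Q
  refine kstr_transfer ?_ ⟨ρ, hadj, hcomm⟩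
  have : Finite L := Module.finite_of_finite F
  have : CharP L 2 := charP_of_injective_algebraMap (algebraMap F L).injective 2
  obtain ⟨v, hv⟩ := exists_ne (0 : V)
  have h1 : 2 * finrank F L ≤ finrank F V := by
    rw [← orb_finrank ρ hv]
    apply isotropic_finrank hB
    rintro _ ⟨a, rfl⟩ _ ⟨c, rfl⟩
    rw [orb_apply, orb_apply, ← hadj, ← Module.End.mul_apply, ← map_mul]
    obtain ⟨e, he⟩ := exists_sqrt (c * a)
    rw [← he, pow_two, map_mul, Module.End.mul_apply, hadj]
    exact hB.alt _
  have h2 : finrank F V ≤ 2 * finrank F L := by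
    have hxv : x v ≠ 0 := by simpa using hv
    have hS : LinearMap.range (orb ρ v) ⊔ LinearMap.range (orb ρ (x v)) = ⊤ := by
      refine (hirr _ ?_).resolve_left ?_
      · intro u hu
        obtain ⟨_, ⟨a, rfl⟩, _, ⟨b, rfl⟩, rfl⟩ := Submodule.mem_sup.mp hu
        rw [Submodule.mem_sup]
        refine ⟨orb ρ v (-b), ⟨_, rfl⟩, orb ρ (x v) (a + b * θ), ⟨_, rfl⟩, ?_⟩
        simp only [orb_apply, map_add, map_neg, map_mul, hθ, LinearMap.add_apply,
          Module.End.mul_apply, hTv, hcomm, LinearMap.neg_apply, LinearEquiv.symm_apply_apply]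
        abel
      · intro h
        apply hv
        have : v ∈ LinearMap.range (orb ρ v) ⊔ LinearMap.range (orb ρ (x v)) :=
          Submodule.mem_sup_left ⟨1, by simp [orb_apply]⟩
        rw [h] at this
        simpa using this
    have h3 := Submodule.finrank_add_le_finrank_add_finrank (LinearMap.range (orb ρ v))
      (LinearMap.range (orb ρ (x v)))
    rw [hS, orb_finrank ρ hv, orb_finrank ρ hxv, finrank_top] at h3
    omega
  omega

end part4
end SpGen

namespace SpGen
open Module LinearMap Polynomial

section part5
variable {F : Type} [Field F]
variable {V W : Type} [AddCommGroup V] [Module F V] [AddCommGroup W] [Module F W]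
  {B : LinearMap.BilinForm F V} {C : LinearMap.BilinForm F W}

theorem sp_adj {x : V ≃ₗ[F] V} (hx : x ∈ Sp B) (v w : V) : B (x v) w = B v (x.symm w) := by
  rw [← mem_Sp.mp hx v, LinearEquiv.apply_symm_apply]

theorem sp_adj' {x : V ≃ₗ[F] V} (hx : x ∈ Sp B) (v w : V) : B (x.symm v) w = B v (x w) := by
  rw [← mem_Sp.mp hx (x.symm v), LinearEquiv.apply_symm_apply]

theorem kstr_pair [Finite F] [CharP F 2] [FiniteDimensional F V] [Nontrivial V] (hB : IsSymp B)
    {x : V ≃ₗ[F] V} (hx : x ∈ Sp B) (U U' : Submodule F V) (hU : Inv x U) (hU' : Inv x U')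
    (hc : IsCompl U U') (hi : ∀ u ∈ U, ∀ v ∈ U, B u v = 0) (hi' : ∀ u ∈ U', ∀ v ∈ U', B u v = 0)
    (hmin : ∀ Z : Submodule F V, Z ≤ U → Inv x Z → Z = ⊥ ∨ Z = U)
    {K : Type} [Field K] [Algebra F K] [FiniteDimensional F K]
    (hdU : finrank F U = finrank F K) :
    KStr K B x := by
  have hsplit : ∀ v, ∃ u ∈ U, ∃ u' ∈ U', v = u + u' := by
    intro v
    have : v ∈ U ⊔ U' := by rw [hc.sup_eq_top]; trivial
    obtain ⟨a, ha, b, hb, h⟩ := Submodule.mem_sup.mp this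
    exact ⟨a, ha, b, hb, h.symm⟩
  obtain ⟨T, hT1, hT2⟩ : ∃ T : Module.End F V, (∀ u ∈ U, T u = x u) ∧ ∀ u ∈ U', T u = x.symm u := by
    refine ⟨(x : Module.End F V) ∘ₗ U.projection U' hc + (x.symm : Module.End F V) ∘ₗ U'.projection U hc.symm,
      ?_, ?_⟩
    · intro u hu
      simp only [LinearMap.add_apply, LinearMap.comp_apply]
      rw [Submodule.projection_apply_of_mem_left hc hu,
        Submodule.projection_apply_of_mem_right hc.symm hu]
      simp
    · intro u hu
      simp only [LinearMap.add_apply, LinearMap.comp_apply]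
      rw [Submodule.projection_apply_of_mem_right hc hu,
        Submodule.projection_apply_of_mem_left hc.symm hu]
      simp
  have hTx : ∀ v, T (x v) = x (T v) := by
    intro v
    obtain ⟨u, hu, u', hu', rfl⟩ := hsplit v
    rw [map_add, map_add, map_add, hT1 _ (hU _ hu), hT2 _ (hU' _ hu'), hT1 _ hu, hT2 _ hu', map_add]
    simp
  have hTadj : ∀ v w, B (T v) w = B v (T w) := by
    intro v w
    obtain ⟨u, hu, u', hu', rfl⟩ := hsplit v
    obtain ⟨w, hw, w', hw', rfl⟩ := hsplit w
    simp only [map_add, LinearMap.add_apply]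
    rw [hT1 _ hu, hT1 _ hw, hT2 _ hu', hT2 _ hw']
    rw [hi _ (hU _ hu) _ hw, hi _ hu _ (hU _ hw), hi' _ (hU'.symm _ hu') _ hw',
      hi' _ hu' _ (hU'.symm _ hw'), sp_adj hx, sp_adj' hx]
  have hQadj := fun Q => aeval_adj T T hTadj Q
  have hTU : ∀ Q : F[X], ∀ u ∈ U, aeval T Q u ∈ U := by
    intro Q
    induction Q using Polynomial.induction_on' with
    | add p q hp hq =>
      intro u hu
      rw [map_add]; exact U.add_mem (hp u hu) (hq u hu)
    | monomial n a =>
      intro u hu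
      rw [aeval_monomial, Module.End.mul_apply, Module.algebraMap_end_apply]
      apply U.smul_mem
      induction n with
      | zero => simpa using hu
      | succ n ih =>
        rw [pow_succ', Module.End.mul_apply, hT1 _ ih]
        exact hU _ ih
  have horth : ∀ u' ∈ U', (∀ u ∈ U, B u u' = 0) → u' = 0 := by
    intro u' hu' h
    apply hB.nd
    intro w
    obtain ⟨w, hw, w', hw', rfl⟩ := hsplit w
    rw [map_add, hi' _ hu' _ hw', hB.eq_zero_comm (h w hw), add_zero]
  have hUbot : U ≠ ⊥ := by
    intro h
    rw [h, finrank_bot] at hdU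
    have := Module.finrank_pos (R := F) (M := K)
    omega
  obtain ⟨L, _, _, _, ρ, θ, hθ, hL⟩ := fieldOf T (by
    intro Q
    rcases hmin _ inf_le_left (hU.inf (Inv.ker (aeval T Q) (aeval_comm T hTx Q))) with h | h
    · right
      rw [← LinearMap.ker_eq_bot, LinearMap.ker_eq_bot']
      have hinjU : ∀ u ∈ U, aeval T Q u = 0 → u = 0 := by
        intro u hu hq
        have : u ∈ U ⊓ LinearMap.ker (aeval T Q) := ⟨hu, hq⟩
        rw [h] at this
        simpa using this
      have hmapU : U.map (aeval T Q) = U := by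
        rcases hmin (U.map (aeval T Q)) (by rintro _ ⟨u, hu, rfl⟩; exact hTU Q u hu)
          (hU.map _ (aeval_comm T hTx Q)) with h2 | h2
        · exfalso
          obtain ⟨u, hu, hu0⟩ := Submodule.exists_mem_ne_zero_of_ne_bot hUbot
          apply hu0
          apply hinjU u hu
          have : aeval T Q u ∈ U.map (aeval T Q) := ⟨u, hu, rfl⟩
          rw [h2] at this; simpa using this
        · exact h2
      intro v hv
      obtain ⟨u, hu, u', hu', rfl⟩ := hsplit v
      have h0 : u' = 0 := by
        apply horth u' hu'
        intro w hw
        rw [← hmapU] at hw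
        obtain ⟨w, hw, rfl⟩ := hw
        have h3 := hQadj Q w (u + u')
        rw [hv, map_zero, map_add, hi _ (hTU Q w hw) u hu, zero_add] at h3
        exact h3
      rw [h0, add_zero] at hv ⊢
      exact hinjU u hu hv
    · left
      have hz : ∀ u ∈ U, aeval T Q u = 0 := by
        intro u hu
        rw [← h] at hu; exact hu.2
      ext v
      rw [LinearMap.zero_apply]
      apply hB.nd
      intro w
      obtain ⟨u, hu, u', hu', rfl⟩ := hsplit v
      obtain ⟨w, hw, w', hw', rfl⟩ := hsplit w
      rw [map_add (aeval T Q) u u', hz u hu, zero_add, map_add, hQadj, hz w hw, map_zero, zero_add]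
      obtain ⟨a, ha, b, hb, hab⟩ := hsplit (aeval T Q u')
      have hb0 : b = 0 := by
        apply horth b hb
        intro r hr
        have h4 := hQadj Q r u'
        rw [hz r hr, map_zero, LinearMap.zero_apply, hab, map_add, hi r hr a ha, zero_add] at h4
        exact h4.symm
      rw [hb0, add_zero] at hab
      have ha0 : a = 0 := by
        have hU'T : ∀ Q : F[X], ∀ u ∈ U', aeval T Q u ∈ U' := by
          intro Q
          induction Q using Polynomial.induction_on' with
          | add p q hp hq =>
            intro u hu
            rw [map_add]; exact U'.add_mem (hp u hu) (hq u hu)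
          | monomial n a =>
            intro u hu
            rw [aeval_monomial, Module.End.mul_apply, Module.algebraMap_end_apply]
            apply U'.smul_mem
            induction n with
            | zero => simpa using hu
            | succ n ih =>
              rw [pow_succ', Module.End.mul_apply, hT2 _ ih]
              exact hU'.symm _ ih
        have := hU'T Q u' hu'
        rw [hab] at this
        exact Submodule.disjoint_def.mp hc.disjoint a ha this
      rw [hab, ha0]; simp)
  have hρ : ∀ a, ∃ Q : F[X], ρ a = aeval T Q := by
    intro a
    obtain ⟨Q, rfl⟩ := hL a
    exact ⟨Q, by rw [← Polynomial.aeval_algHom_apply, hθ]⟩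
  have hadj : ∀ a v w, B (ρ a v) w = B v (ρ a w) := by
    intro a
    obtain ⟨Q, hQ⟩ := hρ a
    rw [hQ]; exact hQadj Q
  have hcomm : ∀ a v, ρ a (x v) = x (ρ a v) := by
    intro a
    obtain ⟨Q, hQ⟩ := hρ a
    rw [hQ]; exact aeval_comm T hTx Q
  refine kstr_transfer ?_ ⟨ρ, hadj, hcomm⟩
  obtain ⟨v, hv, hv0⟩ := Submodule.exists_mem_ne_zero_of_ne_bot hUbot
  rw [← orb_finrank ρ hv0, ← hdU]
  have : LinearMap.range (orb ρ v) = U := by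
    refine (hmin _ ?_ ?_).resolve_left ?_
    · rintro _ ⟨a, rfl⟩
      obtain ⟨Q, hQ⟩ := hρ a
      rw [orb_apply, hQ]; exact hTU Q v hv
    · rintro _ ⟨a, rfl⟩
      refine ⟨a * θ, ?_⟩
      rw [orb_apply, orb_apply, map_mul, Module.End.mul_apply, hθ, hT1 _ hv, hcomm]
    · intro h
      apply hv0
      have : v ∈ LinearMap.range (orb ρ v) := ⟨1, by simp [orb_apply]⟩
      rw [h] at this
      simpa using this
  rw [this]

end part5
end SpGen

namespace SpGen
open Module LinearMap Polynomial

section part6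
variable {F : Type} [Field F]
variable {V W : Type} [AddCommGroup V] [Module F V] [AddCommGroup W] [Module F W]
  {B : LinearMap.BilinForm F V} {C : LinearMap.BilinForm F W}

theorem poly_sqrt [Finite F] [CharP F 2] (P : F[X]) : ∃ P' : F[X], ∀ {A : Type} [Ring A] [Algebra F A]
    (a : A), aeval (a ^ 2) P = (aeval a P') ^ 2 := by
  have : ∃ P' : F[X], Polynomial.expand F 2 P = P' ^ 2 := by
    induction P using Polynomial.induction_on' with
    | add p q hp hq =>
      obtain ⟨p', hp⟩ := hp
      obtain ⟨q', hq⟩ := hq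
      exact ⟨p' + q', by rw [map_add, hp, hq, add_pow_char]⟩
    | monomial n a =>
      obtain ⟨b, rfl⟩ := exists_sqrt a
      exact ⟨monomial n b, by rw [Polynomial.expand_monomial, Polynomial.monomial_pow]⟩
  obtain ⟨P', h⟩ := this
  refine ⟨P', fun a => ?_⟩
  rw [← map_pow, ← h, Polynomial.expand_aeval]

theorem wreath [Finite F] [CharP F 2] [FiniteDimensional F V] (hB : IsSymp B)
    {x : V ≃ₗ[F] V} (hx : x ∈ Sp B) (U : Submodule F V) (hU : Inv x U)
    (hi : ∀ u ∈ U, ∀ v ∈ U, B u v = 0) (hd : finrank F V = 2 * finrank F U) (h2 : 2 ≤ finrank F U)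
    (three : ∀ Z : Submodule F V, Inv x Z → Z = ⊥ ∨ Z = U ∨ Z = ⊤) :
    ∃ U1 : Submodule F V, Disjoint U1 (B.orthogonal U1) ∧ 2 * finrank F U1 = finrank F V ∧
      (∀ v ∈ U1, x v ∈ B.orthogonal U1) ∧ ∀ v ∈ B.orthogonal U1, x v ∈ U1 := by
  have hV : Nontrivial V := nontrivial_of_finrank_pos (R := F) (by omega)
  have hUbot : U ≠ ⊥ := by rintro rfl; simp at h2
  have hUtop : U ≠ ⊤ := by rintro rfl; rw [finrank_top] at hd h2; omega
  set X : Module.End F V := (x : Module.End F V) with hX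
  have hXv : ∀ v, X v = x v := fun v => rfl
  have hUo := orth_self hB U hi hd
  -- the field generated by the square
  have hXx : ∀ v, X (x v) = x (X v) := fun v => rfl
  have hXx2 : ∀ v, (X ^ 2) (x v) = x ((X ^ 2) v) := fun v => rfl
  obtain ⟨L, _, _, _, ρ, θ, hθ, hL⟩ := fieldOf (X ^ 2) (by
    intro Q
    obtain ⟨P, hP⟩ := poly_sqrt Q
    rw [hP]
    set n := aeval X P with hn
    have hnx : ∀ v, n (x v) = x (n v) := aeval_comm X hXx P
    have hk : Inv x (LinearMap.ker n) := Inv.ker n hnx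
    have hr : Inv x (LinearMap.range n) := by
      rw [LinearMap.range_eq_map]
      exact Inv.map n hnx (fun v _ => trivial)
    rcases three _ hk with h | h | h
    · right
      have := LinearMap.ker_eq_bot.mp h
      rw [pow_two]; exact this.comp this
    · left
      have hrn := LinearMap.finrank_range_add_finrank_ker n
      rw [h] at hrn
      have hrU : LinearMap.range n = U := by
        rcases three _ hr with h' | h' | h'
        · rw [h', finrank_bot] at hrn; omega
        · exact h'
        · rw [h', finrank_top] at hrn; omega
      ext v
      have : n v ∈ LinearMap.ker n := by rw [h, ← hrU]; exact ⟨v, rfl⟩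
      rw [pow_two]; exact this
    · left
      rw [LinearMap.ker_eq_top.mp h]; simp)
  have : Finite L := Module.finite_of_finite F
  have : CharP L 2 := charP_of_injective_algebraMap (algebraMap F L).injective 2
  have hθv : ∀ v, ρ θ v = x (x v) := by intro v; rw [hθ]; rfl
  have hθ0 : θ ≠ 0 := by
    rintro rfl
    obtain ⟨v, hv⟩ := exists_ne (0 : V)
    have := hθv v
    rw [map_zero] at this
    apply hv
    simpa using this.symm
  have hmul : ∀ a b v, ρ (a * b) v = ρ a (ρ b v) := by
    intro a b v; rw [map_mul]; rfl
  have hθi : ∀ v, ρ θ⁻¹ v = x.symm (x.symm v) := by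
    intro v
    have : ρ (θ⁻¹ * θ) (x.symm (x.symm v)) = ρ θ⁻¹ v := by
      rw [hmul, hθv]; simp
    rw [inv_mul_cancel₀ hθ0, map_one] at this
    exact this.symm
  have hρ : ∀ a, ∃ Q : F[X], ρ a = aeval (X ^ 2) Q := by
    intro a
    obtain ⟨Q, rfl⟩ := hL a
    exact ⟨Q, by rw [← Polynomial.aeval_algHom_apply, hθ]⟩
  have hcomm : ∀ a v, ρ a (x v) = x (ρ a v) := by
    intro a
    obtain ⟨Q, hQ⟩ := hρ a
    rw [hQ]; exact aeval_comm _ hXx2 Q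
  have hcomm' : ∀ a v, ρ a (x.symm v) = x.symm (ρ a v) := by
    intro a v
    apply x.injective
    rw [← hcomm]; simp
  have hadj : ∀ a, ∃ a', ∀ v w, B (ρ a v) w = B v (ρ a' w) := by
    intro a
    obtain ⟨Q, hQ⟩ := hL a
    refine ⟨aeval θ⁻¹ Q, ?_⟩
    rw [hQ, ← Polynomial.aeval_algHom_apply, ← Polynomial.aeval_algHom_apply]
    apply aeval_adj
    intro v w
    rw [hθv, hθi, sp_adj hx, sp_adj hx]
  have hρU : ∀ a, ∀ u ∈ U, ρ a u ∈ U := by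
    intro a
    obtain ⟨Q, hQ⟩ := hρ a
    rw [hQ]
    induction Q using Polynomial.induction_on' generalizing a with
    | add p q hp hq =>
      intro u hu
      rw [map_add]
      have e1 := hp (aeval θ p) (by rw [← Polynomial.aeval_algHom_apply, hθ]) u hu
      have e2 := hq (aeval θ q) (by rw [← Polynomial.aeval_algHom_apply, hθ]) u hu
      exact U.add_mem e1 e2
    | monomial n a =>
      intro u hu
      rw [aeval_monomial, Module.End.mul_apply, Module.algebraMap_end_apply]
      apply U.smul_mem
      rw [← pow_mul]
      generalize 2 * n = r
      induction r with
      | zero => simpa using hu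
      | succ n ih =>
        rw [pow_succ', Module.End.mul_apply, hXv]
        exact hU _ ih
  -- nontrivial involution
  have hc0 : θ + θ⁻¹ ≠ 0 := by
    intro h
    have h1 : θ = 1 := by
      have : θ ^ 2 = 1 ^ 2 := by
        have := congrArg (fun z => z * θ) h
        simp only [add_mul, inv_mul_cancel₀ hθ0, zero_mul] at this
        rw [one_pow, pow_two]
        exact add_eq_zero'.mp this
      exact sq_inj this
    have h1v : ∀ v, x (x v) = v := by
      intro v; rw [← hθv, h1, map_one]; rfl
    obtain ⟨v, hv⟩ := exists_ne (0 : V)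
    obtain ⟨w, hw, hw0⟩ : ∃ w, x w = w ∧ w ≠ 0 := by
      by_cases h3 : x v + v = 0
      · refine ⟨v, ?_, hv⟩
        have : v + v = 0 := by rw [← two_smul F v, two0, zero_smul]
        calc x v = (x v + v) + v - (v + v) := by abel
          _ = v := by rw [h3, this]; simp
      · refine ⟨x v + v, ?_, h3⟩
        rw [map_add, h1v, add_comm]
    have hI : Inv x (F ∙ w) := by
      intro u hu
      obtain ⟨c, rfl⟩ := Submodule.mem_span_singleton.mp hu
      rw [map_smul, hw]; exact hu
    have hf := finrank_span_singleton (K := F) hw0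
    rcases three _ hI with h | h | h
    · rw [h, finrank_bot] at hf; omega
    · rw [h] at hf; omega
    · rw [h, finrank_top] at hf; omega
  obtain ⟨e, e', he, hee⟩ : ∃ e e' : L, e + e' = 1 ∧ ∀ v w, B (ρ e v) w = B v (ρ e' w) := by
    have hcs : ∀ v w, B (ρ (θ + θ⁻¹) v) w = B v (ρ (θ + θ⁻¹) w) := by
      intro v w
      rw [map_add, LinearMap.add_apply, LinearMap.add_apply, map_add, map_add, LinearMap.add_apply,
        hθv, hθi, hθv, hθi, sp_adj hx, sp_adj hx, sp_adj' hx, sp_adj' hx, add_comm]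
    set c := θ + θ⁻¹ with hc
    have hci : ∀ v w, B (ρ c⁻¹ v) w = B v (ρ c⁻¹ w) := by
      intro v w
      have h1 : w = ρ c (ρ c⁻¹ w) := by rw [← hmul, mul_inv_cancel₀ hc0, map_one]; rfl
      have h2 : v = ρ c (ρ c⁻¹ v) := by rw [← hmul, mul_inv_cancel₀ hc0, map_one]; rfl
      conv_lhs => rw [h1]
      conv_rhs => rw [h2]
      rw [hcs]
    refine ⟨θ * c⁻¹, c⁻¹ * θ⁻¹, ?_, ?_⟩
    · rw [mul_comm c⁻¹, ← add_mul, ← hc, mul_inv_cancel₀ hc0]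
    · intro v w
      rw [hmul, hmul, hθv, sp_adj hx, sp_adj hx, ← hθi, hci]
  -- pick v outside U
  obtain ⟨v, hvU⟩ : ∃ u, u ∉ U := by
    by_contra! hc
    exact hUtop (eq_top_iff.mpr fun v _ => hc v)
  obtain ⟨w, hwU, hw⟩ : ∃ w ∈ U, ∀ k, B v (ρ k (x w)) + B w (ρ k (x v)) = B v (ρ k (x v)) := by
    let β : U →ₗ[F] Module.Dual F L := LinearMap.mk₂ F
      (fun (w : U) (k : L) => B v (ρ k (x (w : V))) + B (w : V) (ρ k (x v)))
      (by intro a b k; simp only [Submodule.coe_add, map_add, LinearMap.add_apply]; abel)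
      (by intro c a k; simp only [Submodule.coe_smul, map_smul, LinearMap.smul_apply, smul_add])
      (by intro a k l; simp only [map_add, LinearMap.add_apply]; abel)
      (by intro c a k; simp only [map_smul, LinearMap.smul_apply, smul_add])
    let α : Module.Dual F L := (B v).comp (orb ρ (x v))
    have hβ : ∀ (w : U) k, β w k = B v (ρ k (x (w : V))) + B (w : V) (ρ k (x v)) := fun _ _ => rfl
    have hα : ∀ k, α k = B v (ρ k (x v)) := fun _ => rfl
    have hmem : α ∈ LinearMap.range β := by
      rw [← Subspace.dualCoannihilator_dualAnnihilator_eq (W := LinearMap.range β),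
        Submodule.mem_dualAnnihilator]
      intro k hk
      rw [Submodule.mem_dualCoannihilator] at hk
      have hk : ∀ w ∈ U, B v (ρ k (x w)) + B w (ρ k (x v)) = 0 := fun w hw =>
        hk (β ⟨w, hw⟩) ⟨_, rfl⟩
      obtain ⟨k', hk'⟩ := hadj k
      let D : L := k + k' * θ⁻¹
      -- x D = k x + adjoint
      have hDv : ∀ u, x (ρ D u) = ρ k (x u) + ρ k' (x.symm u) := by
        intro u
        rw [map_add, LinearMap.add_apply, map_add, ← hcomm, hmul, hθi, ← hcomm,
          LinearEquiv.apply_symm_apply]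
      have hBD : ∀ u u', B u (x (ρ D u')) = B u (ρ k (x u')) + B (ρ k (x u)) u' := by
        intro u u'
        rw [hDv, map_add, hk', sp_adj hx, ← hcomm']
      have hD0 : D = 0 := by
        by_contra hD
        apply hvU
        rw [← hUo]
        have hmU : U.map (ρ D) = U := by
          apply Submodule.eq_of_le_of_finrank_eq
          · rintro _ ⟨u, hu, rfl⟩; exact hρU D u hu
          · have hinj : Function.Injective (ρ D) := by
              rw [← LinearMap.ker_eq_bot, LinearMap.ker_eq_bot']
              intro u hu
              by_contra hu0
              exact hD (rho_inj ρ hu0 hu)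
            exact (LinearEquiv.finrank_eq (Submodule.equivMapOfInjective (ρ D) hinj U)).symm
        intro u hu
        have hu1 := hU.symm u hu
        rw [← hmU] at hu1
        obtain ⟨w, hw, hwu⟩ := hu1
        have h3 := hBD v w
        rw [hwu, LinearEquiv.apply_symm_apply, hB.symm (ρ k (x v)), hk w hw] at h3
        exact hB.eq_zero_comm h3
      have hself : ∀ u u', B (ρ k (x u)) u' = B u (ρ k (x u')) := by
        intro u u'
        have := hBD u u'
        rw [hD0, map_zero, LinearMap.zero_apply, map_zero, map_zero] at this
        exact (add_eq_zero'.mp this.symm).symm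
      rw [hα]
      have h1 : ρ k (x v) = ρ k (x (ρ e v)) + ρ e' (ρ k (x v)) := by
        rw [← hcomm, ← hmul, ← hmul, ← LinearMap.add_apply, ← map_add, mul_comm k e, ← add_mul, he,
          one_mul]
      rw [h1, map_add, ← hself, ← hee, hB.symm]
      exact add_eq_zero'.mpr rfl
    obtain ⟨w, hw⟩ := hmem
    exact ⟨w, w.2, fun k => by rw [← hβ, hw, hα]⟩
  have hvw : ∀ k, B (v + w) (ρ k (x (v + w))) = 0 := by
    intro k
    simp only [map_add, LinearMap.add_apply]
    rw [hi w hwU _ (hρU k _ (hU w hwU)), add_zero]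
    have := hw k
    linear_combination (norm := ring_nf) this + B v (ρ k (x v)) * (two0 (F := F))
    try simp
  have hvwU : v + w ∉ U := fun h => hvU (by simpa using U.sub_mem h hwU)
  generalize v + w = v' at hvw hvwU
  have hv0 : v' ≠ 0 := by rintro rfl; exact hvwU U.zero_mem
  have hxv0 : x v' ≠ 0 := by simpa using hv0
  have f1 := orb_finrank ρ hv0
  have f2 := orb_finrank ρ hxv0
  have hperp : LinearMap.range (orb ρ (x v')) ≤ B.orthogonal (LinearMap.range (orb ρ v')) := by
    rintro _ ⟨b, rfl⟩ _ ⟨a, rfl⟩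
    rw [orb_apply, orb_apply]
    obtain ⟨a', ha'⟩ := hadj a
    change B (ρ a v') (ρ b (x v')) = 0
    rw [ha', ← hmul, hvw]
  have hS : LinearMap.range (orb ρ v') ⊔ LinearMap.range (orb ρ (x v')) = ⊤ := by
    have hmem : v' ∈ LinearMap.range (orb ρ v') ⊔ LinearMap.range (orb ρ (x v')) :=
      Submodule.mem_sup_left ⟨1, by simp [orb_apply]⟩
    have hI : Inv x (LinearMap.range (orb ρ v') ⊔ LinearMap.range (orb ρ (x v'))) := by
      intro u hu
      obtain ⟨_, ⟨a, rfl⟩, _, ⟨b, rfl⟩, rfl⟩ := Submodule.mem_sup.mp hu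
      rw [Submodule.mem_sup]
      refine ⟨orb ρ v' (b * θ), ⟨_, rfl⟩, orb ρ (x v') a, ⟨_, rfl⟩, ?_⟩
      simp only [orb_apply, map_add, hmul, hθv, hcomm]
      abel
    rcases three _ hI with h | h | h
    · rw [h] at hmem; exact absurd (by simpa using hmem) hv0
    · rw [h] at hmem; exact absurd hmem hvwU
    · exact h
  have h3 := Submodule.finrank_add_le_finrank_add_finrank (LinearMap.range (orb ρ v'))
      (LinearMap.range (orb ρ (x v')))
  rw [hS, f1, f2, finrank_top] at h3
  have hle := Submodule.finrank_mono hperp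
  have hfo := LinearMap.BilinForm.finrank_orthogonal hB.nondeg (LinearMap.range (orb ρ v'))
  rw [f2, hfo, f1] at hle
  have hle2 := Submodule.finrank_le (LinearMap.range (orb ρ v'))
  rw [f1] at hle2
  have heq : LinearMap.range (orb ρ (x v')) = B.orthogonal (LinearMap.range (orb ρ v')) := by
    apply Submodule.eq_of_le_of_finrank_eq hperp
    rw [f2, hfo, f1]; omega
  refine ⟨LinearMap.range (orb ρ v'), ?_, by rw [f1]; omega, ?_, ?_⟩
  · rw [Submodule.disjoint_def]
    intro u hu hu'
    apply hB.nd
    intro r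
    have : r ∈ LinearMap.range (orb ρ v') ⊔ LinearMap.range (orb ρ (x v')) := by rw [hS]; trivial
    obtain ⟨a, ha, b, hb, rfl⟩ := Submodule.mem_sup.mp this
    rw [map_add, hB.eq_zero_comm (hu' a ha), hperp hb u hu, add_zero]
  · rintro _ ⟨a, rfl⟩
    rw [← heq]
    exact ⟨a, by rw [orb_apply, orb_apply, hcomm]⟩
  · intro u hu
    rw [← heq] at hu
    obtain ⟨a, rfl⟩ := hu
    exact ⟨a * θ, by rw [orb_apply, orb_apply, hmul, hθv, ← hcomm]⟩

def NdK (B : LinearMap.BilinForm F V) (x : V ≃ₗ[F] V) (k : ℕ) : Prop :=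
  ∃ U : Submodule F V, Inv x U ∧ Disjoint U (B.orthogonal U) ∧ finrank F U = 2 * k

def IsoK (B : LinearMap.BilinForm F V) (x : V ≃ₗ[F] V) (k : ℕ) : Prop :=
  ∃ U : Submodule F V, Inv x U ∧ (∀ u ∈ U, ∀ v ∈ U, B u v = 0) ∧ finrank F U = k

def Wr (B : LinearMap.BilinForm F V) (x : V ≃ₗ[F] V) : Prop :=
  ∃ U1 : Submodule F V, Disjoint U1 (B.orthogonal U1) ∧ 2 * finrank F U1 = finrank F V ∧
      (∀ v ∈ U1, x v ∈ B.orthogonal U1) ∧ ∀ v ∈ B.orthogonal U1, x v ∈ U1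

theorem exists_min [FiniteDimensional F V] [Nontrivial V] (x : V ≃ₗ[F] V) :
    ∃ U : Submodule F V, Inv x U ∧ U ≠ ⊥ ∧
      ∀ Z : Submodule F V, Inv x Z → Z ≠ ⊥ → finrank F U ≤ finrank F Z := by
  classical
  have hex : ∃ n, ∃ U : Submodule F V, Inv x U ∧ U ≠ ⊥ ∧ finrank F U = n :=
    ⟨_, ⊤, fun _ _ => trivial, top_ne_bot, rfl⟩
  obtain ⟨U, h1, h2, h3⟩ := Nat.find_spec hex
  refine ⟨U, h1, h2, fun Z hZ hZ0 => ?_⟩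
  rw [h3]
  exact Nat.find_min' hex ⟨Z, hZ, hZ0, rfl⟩

theorem min_le [FiniteDimensional F V] {x : V ≃ₗ[F] V} {U : Submodule F V} 
    (hmin : ∀ Z : Submodule F V, Inv x Z → Z ≠ ⊥ → finrank F U ≤ finrank F Z)
    {Z : Submodule F V} (hZ : Inv x Z) (hle : Z ≤ U) : Z = ⊥ ∨ Z = U := by
  by_cases h : Z = ⊥
  · exact Or.inl h
  · right
    exact Submodule.eq_of_le_of_finrank_le hle (hmin Z hZ h)

theorem min_type [FiniteDimensional F V] (hB : IsSymp B) {x : V ≃ₗ[F] V} (hx : x ∈ Sp B)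
    {m : ℕ} (hd : finrank F V = 2 * m)
    {U : Submodule F V} (hU : Inv x U) (h0 : U ≠ ⊥) (h1 : U ≠ ⊤)
    (hmin : ∀ Z : Submodule F V, Inv x Z → Z ≠ ⊥ → finrank F U ≤ finrank F Z) :
    (∃ k, 1 ≤ k ∧ k < m ∧ NdK B x k) ∨
      ((∀ u ∈ U, ∀ v ∈ U, B u v = 0) ∧ 1 ≤ finrank F U ∧ finrank F U ≤ m) := by
  have hpos : 1 ≤ finrank F U := by
    rw [Nat.one_le_iff_ne_zero]
    intro h
    exact h0 (Submodule.finrank_eq_zero.mp h)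
  rcases min_le hmin (hU.inf (hU.orth hx)) inf_le_left with h | h
  · left
    have hdis : Disjoint U (B.orthogonal U) := disjoint_iff.mpr h
    obtain ⟨k, hk⟩ := finrank_even (symp_restrict hB U hdis)
    have hlt := Submodule.finrank_lt h1
    exact ⟨k, by omega, by omega, U, hU, hdis, by omega⟩
  · right
    have hi : ∀ u ∈ U, ∀ v ∈ U, B u v = 0 := by
      intro u hu v hv
      rw [← h] at hv
      exact hv.2 u hu
    have := isotropic_finrank hB U hi
    exact ⟨hi, hpos, by omega⟩

theorem x_red [Finite F] [CharP F 2] [FiniteDimensional F V] (hB : IsSymp B)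
    {x : V ≃ₗ[F] V} (hx : x ∈ Sp B) {m : ℕ} (hm : 2 ≤ m) (hd : finrank F V = 2 * m)
    {K : Type} [Field K] [Algebra F K] [FiniteDimensional F K] (hK : finrank F K = m) :
    (∃ k, 1 ≤ k ∧ k < m ∧ NdK B x k) ∨ (∃ k, 1 ≤ k ∧ k ≤ m ∧ IsoK B x k) ∨ KStr K B x := by
  have hV : Nontrivial V := nontrivial_of_finrank_pos (R := F) (by omega)
  obtain ⟨U, hU, h0, hmin⟩ := exists_min x
  by_cases h1 : U = ⊤
  · right; right
    apply kstr_irr hB hx _ (by rw [hd, hK])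
    intro Z hZ
    rw [h1] at hmin
    have := min_le hmin hZ le_top
    exact this
  · rcases min_type hB hx hd hU h0 h1 hmin with h | ⟨h, h2, h3⟩
    · exact Or.inl h
    · exact Or.inr (Or.inl ⟨_, h2, h3, U, hU, h, rfl⟩)

theorem x_types [Finite F] [CharP F 2] [FiniteDimensional F V] (hB : IsSymp B)
    {x : V ≃ₗ[F] V} (hx : x ∈ Sp B) {m : ℕ} (hm : 2 ≤ m) (hd : finrank F V = 2 * m)
    {K : Type} [Field K] [Algebra F K] [FiniteDimensional F K] (hK : finrank F K = m) :
    KStr K B x ∨ (∃ k, 1 ≤ k ∧ k < m ∧ (NdK B x k ∨ IsoK B x k)) ∨ Wr B x := by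
  have hV : Nontrivial V := nontrivial_of_finrank_pos (R := F) (by omega)
  obtain ⟨U, hU, h0, hmin⟩ := exists_min x
  by_cases h1 : U = ⊤
  · left
    apply kstr_irr hB hx _ (by rw [hd, hK])
    intro Z hZ
    rw [h1] at hmin
    have := min_le hmin hZ le_top
    exact this
  rcases min_type hB hx hd hU h0 h1 hmin with ⟨k, hk, hk', h⟩ | ⟨hi, h2, h3⟩
  · exact Or.inr (Or.inl ⟨k, hk, hk', Or.inl h⟩)
  by_cases h4 : finrank F U < m
  · exact Or.inr (Or.inl ⟨_, h2, h4, Or.inr ⟨U, hU, hi, rfl⟩⟩)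
  have hfU : finrank F U = m := by omega
  by_cases hcomp : ∃ U' : Submodule F V, Inv x U' ∧ U' ≠ ⊥ ∧ U ⊓ U' = ⊥
  · obtain ⟨U', hU', h0', hdis⟩ := hcomp
    have hsum := Submodule.finrank_sup_add_finrank_inf_eq U U'
    rw [hdis, finrank_bot, add_zero] at hsum
    have hle := Submodule.finrank_le (U ⊔ U')
    have hge := hmin U' hU' h0'
    have hfU' : finrank F U' = m := by omega
    have hc : IsCompl U U' := by
      refine ⟨disjoint_iff.mpr hdis, codisjoint_iff.mpr ?_⟩
      apply Submodule.eq_top_of_finrank_eq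
      omega
    have hmin' : ∀ Z : Submodule F V, Inv x Z → Z ≠ ⊥ → finrank F U' ≤ finrank F Z := by
      intro Z hZ hZ0; rw [hfU', ← hfU]; exact hmin Z hZ hZ0
    have h1' : U' ≠ ⊤ := by
      rintro rfl
      rw [finrank_top] at hfU'; omega
    rcases min_type hB hx hd hU' h0' h1' hmin' with ⟨k, hk, hk', h⟩ | ⟨hi', -, -⟩
    · exact Or.inr (Or.inl ⟨k, hk, hk', Or.inl h⟩)
    · left
      exact kstr_pair hB hx U U' hU hU' hc hi hi' (fun Z hZ hZI => min_le hmin hZI hZ)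
        (by rw [hfU, hK])
  · push Not at hcomp
    right; right
    refine wreath hB hx U hU hi (by rw [hd, hfU]) (by rw [hfU]; exact hm) ?_
    have hUo := orth_self hB U hi (by rw [hd, hfU])
    intro Z hZ
    by_cases hZ0 : Z = ⊥
    · exact Or.inl hZ0
    right
    have h5 : U ≤ Z := by
      rcases min_le hmin (hU.inf hZ) inf_le_left with h | h
      · exact absurd h (hcomp Z hZ hZ0)
      · exact inf_eq_left.mp h
    have h6 : B.orthogonal Z ≤ U := by
      rw [← hUo]
      exact LinearMap.BilinForm.orthogonal_le h5
    rcases min_le hmin (hZ.orth hx) h6 with h | h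
    · right
      have := LinearMap.BilinForm.finrank_orthogonal hB.nondeg Z
      rw [h, finrank_bot] at this
      apply Submodule.eq_top_of_finrank_eq
      have := Submodule.finrank_le Z
      omega
    · left
      have := LinearMap.BilinForm.finrank_orthogonal hB.nondeg Z
      rw [h] at this
      symm
      apply Submodule.eq_of_le_of_finrank_eq h5
      omega

end part6
end SpGen

namespace SpGen
open Module LinearMap Polynomial

section part7
set_option linter.unusedSectionVars false
variable {F : Type} [Field F]

theorem trace_sq [Finite F] [CharP F 2] {K : Type} [Field K] [Algebra F K] [FiniteDimensional F K] (x : K) :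
    Algebra.trace F K (x ^ 2) = (Algebra.trace F K x) ^ 2 := by
  have : Finite K := Module.finite_of_finite F
  have : Fact (Nat.Prime 2) := ⟨Nat.prime_two⟩
  have : CharP K 2 := charP_of_injective_algebraMap (algebraMap F K).injective 2
  apply (algebraMap F K).injective
  rw [map_pow (algebraMap F K), FiniteField.algebraMap_trace_eq_sum_pow, FiniteField.algebraMap_trace_eq_sum_pow,
    sum_pow_char]
  refine Finset.sum_congr rfl fun i _ => ?_
  rw [← pow_mul, ← pow_mul, mul_comm]

theorem wp_trace [Finite F] [CharP F 2] {K : Type} [Field K] [Algebra F K] [FiniteDimensional F K] (c : K) :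
    wp (Algebra.trace F K c) ↔ wp c := by
  have : Finite K := Module.finite_of_finite F
  have : CharP K 2 := charP_of_injective_algebraMap (algebraMap F K).injective 2
  have h1 : ∀ c : K, wp c → wp (Algebra.trace F K c) := by
    rintro c ⟨z, rfl⟩
    exact ⟨Algebra.trace F K z, by rw [map_add, trace_sq]⟩
  refine ⟨fun h => ?_, h1 c⟩
  by_contra hc
  have : ∃ d : F, ¬ wp d := by
    by_contra! hd
    have h2 : (wpHom F).range = ⊤ := by
      rw [eq_top_iff]; intro d _; exact hd d
    have := wp_index (F := F)
    rw [h2] at this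
    simp at this
  obtain ⟨d, hd⟩ := this
  obtain ⟨z, hz⟩ := Algebra.trace_surjective F K d
  have hz' : ¬ wp z := fun h => hd (hz ▸ h1 z h)
  have h3 := h1 _ (wp_not_add c z hc hz')
  rw [map_add, hz] at h3
  have := wp_add _ _ h h3
  apply hd
  convert this using 1
  linear_combination (-(Algebra.trace F K) c) * two0 (F := F)

variable {ι : Type} [Fintype ι] [DecidableEq ι] (K : ι → Type) [∀ i, Field (K i)]
  [∀ i, Algebra F (K i)] [∀ i, FiniteDimensional F (K i)]

variable (F) in
noncomputable def BM : LinearMap.BilinForm F (∀ i, K i × K i) :=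
  LinearMap.mk₂ F (fun v w => ∑ i, Algebra.trace F (K i) ((v i).1 * (w i).2 + (v i).2 * (w i).1))
    (fun v v' w => by
      rw [← Finset.sum_add_distrib]
      refine Finset.sum_congr rfl fun i _ => ?_
      rw [← map_add]; congr 1
      simp only [Pi.add_apply, Prod.fst_add, Prod.snd_add]; ring)
    (fun c v w => by
      rw [Finset.smul_sum]
      refine Finset.sum_congr rfl fun i _ => ?_
      rw [← map_smul]; congr 1
      simp only [Pi.smul_apply, Prod.smul_fst, Prod.smul_snd, smul_add, smul_mul_assoc])
    (fun v w w' => by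
      rw [← Finset.sum_add_distrib]
      refine Finset.sum_congr rfl fun i _ => ?_
      rw [← map_add]; congr 1
      simp only [Pi.add_apply, Prod.fst_add, Prod.snd_add]; ring)
    (fun c v w => by
      rw [Finset.smul_sum]
      refine Finset.sum_congr rfl fun i _ => ?_
      rw [← map_smul]; congr 1
      simp only [Pi.smul_apply, Prod.smul_fst, Prod.smul_snd, smul_add, mul_smul_comm])

theorem BM_apply (v w : ∀ i, K i × K i) : BM F K v w =
    ∑ i, Algebra.trace F (K i) ((v i).1 * (w i).2 + (v i).2 * (w i).1) := rfl

variable {K}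

theorem BM_single (v : ∀ i, K i × K i) (i : ι) (z : K i × K i) : BM F K v (Pi.single i z) =
    Algebra.trace F (K i) ((v i).1 * z.2 + (v i).2 * z.1) := by
  rw [BM_apply, Finset.sum_eq_single i]
  · simp
  · intro j _ hj
    simp [Pi.single_eq_of_ne hj]
  · simp

theorem trace_nd [Finite F] {K : Type} [Field K] [Algebra F K] [FiniteDimensional F K] {a : K}
    (h : ∀ z, Algebra.trace F K (a * z) = 0) : a = 0 := by
  by_contra ha
  obtain ⟨c, hc⟩ := Algebra.trace_surjective F K 1
  have := h (a⁻¹ * c)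
  rw [mul_inv_cancel_left₀ ha, hc] at this
  exact one_ne_zero this

variable [Finite F] [CharP F 2]

theorem char_two (L : Type) [Field L] [Algebra F L] : CharP L 2 :=
  charP_of_injective_algebraMap (algebraMap F L).injective 2

variable (F K) in
theorem BM_symp : IsSymp (BM F K) := by
  refine ⟨fun v => ?_, fun v hv => ?_⟩
  · rw [BM_apply]
    refine Finset.sum_eq_zero fun i _ => ?_
    rw [mul_comm, ← two_mul, ]
    have := char_two (F := F) (K i)
    rw [two0, zero_mul, map_zero]
  · funext i
    have h1 := fun z => hv (Pi.single i z)
    simp only [BM_single] at h1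
    refine Prod.ext (trace_nd (F := F) fun z => ?_) (trace_nd (F := F) fun z => ?_)
    · simpa using h1 (0, z)
    · simpa using h1 (z, 0)

variable (F K) in
theorem finrank_M : finrank F (∀ i, K i × K i) = 2 * ∑ i, finrank F (K i) := by
  rw [Module.finrank_pi_fintype, Finset.mul_sum]
  refine Finset.sum_congr rfl fun i _ => ?_
  rw [Module.finrank_prod, two_mul]

variable (F) in
def yM (τ : ∀ i, K i) : (∀ i, K i × K i) ≃ₗ[F] (∀ i, K i × K i) where
  toFun v i := ((v i).2, (v i).1 + τ i * (v i).2)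
  invFun v i := ((v i).2 - τ i * (v i).1, (v i).1)
  map_add' v w := by funext i; ext <;> simp; ring
  map_smul' c v := by funext i; ext <;> simp
  left_inv v := by funext i; ext <;> simp
  right_inv v := by funext i; ext <;> simp

theorem yM_apply (τ : ∀ i, K i) (v : ∀ i, K i × K i) (i : ι) :
    yM F τ v i = ((v i).2, (v i).1 + τ i * (v i).2) := rfl

theorem yM_mem (τ : ∀ i, K i) : yM F τ ∈ Sp (BM F K) := by
  intro v w
  rw [BM_apply, BM_apply]
  refine Finset.sum_congr rfl fun i _ => ?_
  congr 1
  have := char_two (F := F) (K i)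
  simp only [yM_apply]
  linear_combination (τ i * (v i).2 * (w i).2) * two0 (F := K i)

variable (F K) in
noncomputable def Q0M (v : ∀ i, K i × K i) : F := ∑ i, Algebra.trace F (K i) ((v i).1 * (v i).2)

variable (F K) in
theorem Q0M_hyp : Hyp (BM F K) (Q0M F K) := by
  refine ⟨⟨fun v w => ?_, fun c v => ?_⟩, ?_⟩
  · simp only [Q0M, BM_apply, ← Finset.sum_add_distrib, ← map_add]
    refine Finset.sum_congr rfl fun i _ => ?_
    congr 1
    simp only [Pi.add_apply, Prod.fst_add, Prod.snd_add]; ring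
  · simp only [Q0M, Finset.mul_sum]
    refine Finset.sum_congr rfl fun i _ => ?_
    rw [← smul_eq_mul (c ^ 2), ← map_smul]
    congr 1
    simp only [Pi.smul_apply, Prod.smul_fst, Prod.smul_snd, smul_mul_smul_comm, sq]
  · let e : (∀ i, K i) →ₗ[F] (∀ i, K i × K i) :=
      LinearMap.pi fun i => (LinearMap.inl F (K i) (K i)).comp (LinearMap.proj i)
    have he : Function.Injective e := by
      intro a b h
      funext i
      have := congrFun h i
      simpa [e] using this
    refine ⟨LinearMap.range e, ?_, ?_⟩
    · rintro _ ⟨a, rfl⟩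
      simp [Q0M, e]
    · rw [LinearMap.finrank_range_of_inj he, finrank_M, Module.finrank_pi_fintype]

theorem model_pres (τ : ∀ i, K i) (hτ : ∀ i, τ i ≠ 0) {p : Prop}
    (hp : wp (∑ i, Algebra.trace F (K i) (τ i)⁻¹) ↔ p) : Pres (BM F K) p (yM F τ) := by
  have hs : ∀ i, ∃ s : K i, s ^ 2 = (τ i)⁻¹ := fun i => by
    have := char_two (F := F) (K i)
    have : Finite (K i) := Module.finite_of_finite F
    exact exists_sqrt _
  choose s hs using hs
  refine ⟨_, ⟨Q0M F K, fun i => (s i, s i), Q0M_hyp F K, rfl, ?_⟩, fun v => ?_⟩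
  · simpa only [Q0M, ← sq, hs] using hp
  · have : ∀ v, shift (BM F K) (Q0M F K) (fun i => (s i, s i)) v =
        ∑ i, Algebra.trace F (K i) ((v i).1 * (v i).2 + ((v i).1 ^ 2 + (v i).2 ^ 2) * (τ i)⁻¹) := by
      intro v
      have : Fact (Nat.Prime 2) := ⟨Nat.prime_two⟩
      simp only [shift, Q0M, BM_apply, sum_pow_char, ← trace_sq, ← Finset.sum_add_distrib,
        ← map_add]
      refine Finset.sum_congr rfl fun i _ => ?_
      congr 1
      have := char_two (F := F) (K i)
      rw [← hs]
      linear_combination ((s i) ^ 2 * (v i).2 * (v i).1) * two0 (F := K i)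
    rw [this, this]
    refine Finset.sum_congr rfl fun i _ => ?_
    congr 1
    have := char_two (F := F) (K i)
    simp only [yM_apply]
    have h := mul_inv_cancel₀ (hτ i)
    linear_combination ((v i).2 ^ 2 * τ i + 2 * (v i).1 * (v i).2) * h +
      ((v i).2 ^ 2 * τ i + (v i).1 * (v i).2) * two0 (F := K i)

theorem model_nd (τ : ∀ i, K i) (S : Finset ι) : NdK (BM F K) (yM F τ) (∑ i ∈ S, finrank F (K i)) := by
  let e : (∀ i : S, K i × K i) →ₗ[F] (∀ i, K i × K i) :=
    LinearMap.pi fun i => if h : i ∈ S then LinearMap.proj (φ := fun i : S => K i × K i) ⟨i, h⟩ else 0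
  have he1 : ∀ a i (h : i ∈ S), e a i = a ⟨i, h⟩ := fun a i h => by simp [e, h]
  have he2 : ∀ a i, i ∉ S → e a i = 0 := fun a i h => by simp [e, h]
  have he : Function.Injective e := by
    intro a b h
    funext i
    have := congrFun h i
    rwa [he1 _ _ i.2, he1 _ _ i.2] at this
  have hr : ∀ v, v ∈ LinearMap.range e ↔ ∀ i, i ∉ S → v i = 0 := by
    intro v
    constructor
    · rintro ⟨a, rfl⟩; exact he2 a
    · intro h
      refine ⟨fun i => v i, ?_⟩
      funext i
      by_cases hi : i ∈ S
      · rw [he1 _ _ hi]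
      · rw [he2 _ _ hi, h i hi]
  refine ⟨LinearMap.range e, ?_, ?_, ?_⟩
  · intro v hv
    rw [hr] at hv ⊢
    intro i hi
    rw [yM_apply, hv i hi]; simp
  · rw [Submodule.disjoint_def]
    intro v hv hv'
    rw [hr] at hv
    apply (BM_symp F K).nd
    intro w
    let w' : ∀ i, K i × K i := fun i => if i ∈ S then w i else 0
    have hw' : w' ∈ LinearMap.range e := by
      rw [hr]; intro i hi; simp [w', hi]
    have h1 := (BM_symp F K).eq_zero_comm (hv' w' hw')
    rw [← h1, BM_apply, BM_apply]
    refine Finset.sum_congr rfl fun i _ => ?_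
    by_cases hi : i ∈ S
    · simp [w', hi]
    · simp [hv i hi]
  · rw [LinearMap.finrank_range_of_inj he, finrank_M]
    rw [Finset.sum_coe_sort S (fun i => finrank F (K i))]

theorem model_iso (τ : ∀ i, K i) (S : Finset ι) (h : ∀ i ∈ S, ∃ t : K i, t ^ 2 = 1 + τ i * t) :
    IsoK (BM F K) (yM F τ) (∑ i ∈ S, finrank F (K i)) := by
  have : ∀ i, ∃ t : K i, i ∈ S → t ^ 2 = 1 + τ i * t := fun i => by
    by_cases hi : i ∈ S
    · obtain ⟨t, ht⟩ := h i hi; exact ⟨t, fun _ => ht⟩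
    · exact ⟨0, fun h => absurd h hi⟩
  choose t ht using this
  let e : (∀ i : S, K i) →ₗ[F] (∀ i, K i × K i) :=
    LinearMap.pi fun i => if h : i ∈ S then
      (LinearMap.prod LinearMap.id (LinearMap.mulLeft F (t i))).comp
       (LinearMap.proj (φ := fun i : S => K i) ⟨i, h⟩) else 0
  have he1 : ∀ a i (h : i ∈ S), e a i = (a ⟨i, h⟩, t i * a ⟨i, h⟩) := fun a i h => by simp [e, h]
  have he2 : ∀ a i, i ∉ S → e a i = 0 := fun a i h => by simp [e, h]
  have he : Function.Injective e := by
    intro a b h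
    funext i
    have := congrArg Prod.fst (congrFun h i)
    rwa [he1 _ _ i.2, he1 _ _ i.2] at this
  refine ⟨LinearMap.range e, ?_, ?_, ?_⟩
  · rintro _ ⟨a, rfl⟩
    refine ⟨fun i => t i * a i, ?_⟩
    funext i
    by_cases hi : i ∈ S
    · rw [yM_apply, he1 _ _ hi, he1 _ _ hi]
      ext
      · rfl
      · simp only
        linear_combination (a ⟨i, hi⟩) * ht i hi
    · rw [yM_apply, he2 _ _ hi, he2 _ _ hi]; simp; rfl
  · rintro _ ⟨a, rfl⟩ _ ⟨b, rfl⟩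
    rw [BM_apply]
    refine Finset.sum_eq_zero fun i _ => ?_
    by_cases hi : i ∈ S
    · rw [he1 _ _ hi, he1 _ _ hi]
      have := char_two (F := F) (K i)
      rw [← map_zero (Algebra.trace F (K i))]
      congr 1
      linear_combination (t i * a ⟨i, hi⟩ * b ⟨i, hi⟩) * two0 (F := K i)
    · rw [he2 _ _ hi, he2 _ _ hi]; simp
  · rw [LinearMap.finrank_range_of_inj he, Module.finrank_pi_fintype]
    rw [Finset.sum_coe_sort S (fun i => finrank F (K i))]

theorem model_kstr {L : Type} [Field L] [Algebra F L] [FiniteDimensional F L] (τ : ι → L) :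
    KStr L (BM F (fun _ : ι => L)) (yM F (K := fun _ : ι => L) τ) := by
  refine ⟨Algebra.lsmul F F (ι → L × L), fun a v w => ?_, fun a v => ?_⟩
  · rw [BM_apply, BM_apply]
    refine Finset.sum_congr rfl fun i _ => ?_
    congr 1
    simp; ring
  · funext i
    simp only [yM_apply, Algebra.lsmul_coe, Pi.smul_apply]
    ext
    · simp
    · simp; ring

end part7
end SpGen

namespace SpGen
open Module LinearMap Polynomial

section part8
set_option linter.unusedSectionVars false
variable {F : Type} [Field F] [Finite F]
variable {Om : Type} [Field Om] [Algebra F Om]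

theorem frob_aeval (p : F[X]) (z : Om) (l : ℕ) :
    (aeval z p) ^ (Nat.card F ^ l) = aeval (z ^ (Nat.card F ^ l)) p := by
  have := Fintype.ofFinite F
  rw [Nat.card_eq_fintype_card]
  induction l with
  | zero => simp
  | succ l ih =>
    rw [pow_succ, pow_mul, ih, pow_mul]
    have := Polynomial.aeval_algHom_apply (FiniteField.frobeniusAlgHom F Om)
      (z ^ Fintype.card F ^ l) p
    simpa using this.symm

theorem frob_add (z w : Om) (l : ℕ) :
    (z + w) ^ (Nat.card F ^ l) = z ^ (Nat.card F ^ l) + w ^ (Nat.card F ^ l) := by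
  have := Fintype.ofFinite F
  rw [Nat.card_eq_fintype_card]
  induction l with
  | zero => simp
  | succ l ih =>
    rw [pow_succ, pow_mul, pow_mul, pow_mul, ih]
    have := map_add (FiniteField.frobeniusAlgHom F Om) (z ^ Fintype.card F ^ l) (w ^ Fintype.card F ^ l)
    simpa using this

theorem range_j {K : Type} [Field K] [Algebra F K] [FiniteDimensional F K] (j : K →ₐ[F] Om) (z : Om)
    (hz : z ^ (Nat.card F ^ finrank F K) = z) : ∃ a, j a = z := by
  have : Finite K := Module.finite_of_finite F
  classical
  have := Fintype.ofFinite K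
  have hc : Nat.card F ^ finrank F K = Fintype.card K := by
    rw [← Module.natCard_eq_pow_finrank, Nat.card_eq_fintype_card]
  rw [hc] at hz
  have hne := FiniteField.X_pow_card_sub_X_ne_zero Om (Fintype.one_lt_card (α := K))
  have h1 : (Finset.univ.image j).val ⊆ (X ^ Fintype.card K - X : Om[X]).roots := by
    intro w hw
    simp only [Finset.mem_val, Finset.mem_image, Finset.mem_univ, true_and] at hw
    obtain ⟨a, rfl⟩ := hw
    rw [mem_roots hne, IsRoot.def, eval_sub, eval_pow, eval_X, ← map_pow, FiniteField.pow_card, sub_self]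
  have h2 : z ∈ Finset.univ.image j := by
    by_contra h
    have := Polynomial.card_le_degree_of_subset_roots (p := (X ^ Fintype.card K - X : Om[X]))
      (Z := insert z (Finset.univ.image j)) (by
        intro w hw
        rw [Finset.mem_val, Finset.mem_insert] at hw
        rcases hw with rfl | hw
        · rw [mem_roots hne, IsRoot.def, eval_sub, eval_pow, eval_X, hz, sub_self]
        · exact h1 hw)
    rw [Finset.card_insert_of_notMem h, Finset.card_image_of_injective _ (show Function.Injective j from j.injective),
      FiniteField.X_pow_card_sub_X_natDegree_eq _ Fintype.one_lt_card, Finset.card_univ] at this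
    omega
  simpa using h2

noncomputable def pm (s : Bool) (z : Om) : Om := if s then z else z⁻¹

theorem pm_inv (s : Bool) (z : Om) : pm s z⁻¹ = (pm s z)⁻¹ := by
  cases s <;> simp [pm]

variable {ι : Type} [Fintype ι] [DecidableEq ι] {K : ι → Type} [∀ i, Field (K i)]
  [∀ i, Algebra F (K i)] [∀ i, FiniteDimensional F (K i)]

variable (F K) in
abbrev E := (i : ι) × (Fin (finrank F (K i)) × Bool)

variable (F K) in
theorem card_E : Fintype.card (E F K) = 2 * ∑ i, finrank F (K i) := by
  simp [E, Finset.mul_sum, mul_comm]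

variable (F K) in
noncomputable def chi (t : ι → Om) (e : E F K) : Om := (pm e.2.2 (t e.1)) ^ (Nat.card F ^ (e.2.1 : ℕ))

variable (F K) in
def Reg (t : ι → Om) : Prop := Function.Injective (chi F K t)

variable (F K) in
def TH (sg : ι → Bool) (t : ι → Om) : Prop := ∀ i, t i ≠ 0 ∧
  (t i) ^ (Nat.card F ^ finrank F (K i)) = pm (sg i) (t i)

theorem reg_pm {t : ι → Om} (h : Reg F K t) {i i' : ι} {s s' : Bool} (hh : pm s (t i) = pm s' (t i')) :
    i = i' ∧ s = s' := by
  have h0 : ∀ i, 0 < finrank F (K i) := fun i => Module.finrank_pos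
  have := @h ⟨i, ⟨0, h0 i⟩, s⟩ ⟨i', ⟨0, h0 i'⟩, s'⟩ (by simpa [chi] using hh)
  simp only [Sigma.mk.injEq] at this
  obtain ⟨rfl, h2⟩ := this
  simpa using h2

theorem reg_ne {t : ι → Om} (h : Reg F K t) (i : ι) : t i ≠ (t i)⁻¹ := by
  intro hh
  have := reg_pm h (i := i) (i' := i) (s := true) (s' := false) (by simpa [pm] using hh)
  simp at this

theorem reg_deg {t : ι → Om} (h : Reg F K t) {p : F[X]} (hp : p ≠ 0)
    (h0 : ∀ i s, aeval (pm s (t i)) p = 0) : 2 * ∑ i, finrank F (K i) ≤ p.natDegree := by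
  classical
  rw [← card_E F K, ← Finset.card_univ, ← Finset.card_image_of_injective _ h,
    ← natDegree_map (algebraMap F Om)]
  apply Polynomial.card_le_degree_of_subset_roots
  intro z hz
  simp only [Finset.mem_val, Finset.mem_image, Finset.mem_univ, true_and] at hz
  obtain ⟨e, rfl⟩ := hz
  rw [mem_roots (by rwa [Polynomial.map_ne_zero_iff (algebraMap F Om).injective]), IsRoot.def, eval_map_algebraMap,
    chi, ← frob_aeval, h0, zero_pow]
  exact (pow_pos Nat.card_pos _).ne'

variable [CharP F 2] (j : ∀ i, K i →ₐ[F] Om)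

theorem exists_tau {sg : ι → Bool} {t : ι → Om} (h : TH F K sg t) :
    ∃ τ : ∀ i, K i, ∀ i, j i (τ i) = t i + (t i)⁻¹ := by
  have : ∀ i, ∃ a, j i a = t i + (t i)⁻¹ := fun i => by
    apply range_j
    rw [frob_add, inv_pow, (h i).2]
    cases sg i <;> simp [pm, add_comm]
  choose τ hτ using this
  exact ⟨τ, hτ⟩

theorem tau_ne {t : ι → Om} (hr : Reg F K t) {τ : ∀ i, K i}
    (hτ : ∀ i, j i (τ i) = t i + (t i)⁻¹) (i : ι) : τ i ≠ 0 := by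
  intro h0
  have := hτ i
  rw [h0, map_zero] at this
  have := char_two (F := F) Om
  exact reg_ne hr i (add_eq_zero'.mp (by simp_all))

theorem tau_sg {sg : ι → Bool} {t : ι → Om} (h : TH F K sg t) (hr : Reg F K t) {τ : ∀ i, K i}
    (hτ : ∀ i, j i (τ i) = t i + (t i)⁻¹) (i : ι) :
    (∃ r : K i, r ^ 2 = 1 + τ i * r) ↔ sg i = true := by
  have := char_two (F := F) Om
  have h2 := two0 (F := Om)
  obtain ⟨h0, h1⟩ := h i
  have hc := mul_inv_cancel₀ h0
  constructor
  · rintro ⟨r, hr1⟩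
    by_contra hs
    simp only [Bool.not_eq_true] at hs
    have hr2 := congrArg (j i) hr1
    rw [map_pow, map_add, map_one, map_mul, hτ] at hr2
    have hK : Nat.card F ^ finrank F (K i) = Nat.card (K i) := by
      rw [← Module.natCard_eq_pow_finrank]
    have : Finite (K i) := Module.finite_of_finite F
    have := Fintype.ofFinite (K i)
    have hj : ∀ r, (j i r) ^ (Nat.card F ^ finrank F (K i)) = j i r := fun r => by
      rw [← map_pow, hK, Nat.card_eq_fintype_card, FiniteField.pow_card]
    have : (j i r - t i) * (j i r - (t i)⁻¹) = 0 := by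
      linear_combination hr2 + hc + h2 * (1 - (j i r) * (t i + (t i)⁻¹) + (j i r) * (t i + (t i)⁻¹))
    rcases mul_eq_zero.mp this with h3 | h3
    · have := hj r
      rw [sub_eq_zero.mp h3, h1, hs] at this
      exact reg_ne hr i (by simpa [pm] using this.symm)
    · have := hj r
      rw [sub_eq_zero.mp h3, inv_pow, h1, hs] at this
      exact reg_ne hr i (by simpa [pm] using this)
  · intro hs
    obtain ⟨r, hr⟩ := range_j (j i) (t i) (by rw [h1, hs]; rfl)
    refine ⟨r, (j i).injective ?_⟩
    change j i _ = j i _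
    rw [map_pow, map_add, map_one, map_mul, hτ, hr]
    linear_combination -hc - h2

variable (t : ι → Om)

noncomputable def phi (i : ι) (s : Bool) : (∀ i, K i × K i) →ₗ[F] Om where
  toFun v := j i (v i).1 + pm s (t i) * j i (v i).2
  map_add' v w := by simp; ring
  map_smul' c v := by simp

variable {t}

theorem phi_y (h0 : ∀ i, t i ≠ 0) {τ : ∀ i, K i}
    (hτ : ∀ i, j i (τ i) = t i + (t i)⁻¹) (i : ι) (s : Bool) (v : ∀ i, K i × K i) :
    phi j t i s (yM F τ v) = pm s (t i) * phi j t i s v := by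
  have := char_two (F := F) Om
  have h2 := two0 (F := Om)
  have hc := mul_inv_cancel₀ (h0 i)
  simp only [phi, LinearMap.coe_mk, AddHom.coe_mk, yM_apply, map_add, map_mul, hτ]
  cases s
  · simp [pm]
    linear_combination (j i (v i).2) * (h2 + hc)
  · simp [pm]
    linear_combination (j i (v i).2) * (h2 + hc)

theorem phi_aeval_gen {V : Type} [AddCommGroup V] [Module F V] (φ : V →ₗ[F] Om) (T : Module.End F V)
    (z : Om) (h : ∀ v, φ (T v) = z * φ v) (p : F[X]) (v : V) :
    φ (aeval T p v) = aeval z p * φ v := by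
  induction p using Polynomial.induction_on' with
  | add p q hp hq => simp only [map_add, LinearMap.add_apply, hp, hq, add_mul]
  | monomial n a =>
    have hn : ∀ n : ℕ, φ ((T ^ n) v) = z ^ n * φ v := by
      intro n
      induction n with
      | zero => simp
      | succ n ih => rw [pow_succ', Module.End.mul_apply, h, ih]; ring
    rw [aeval_monomial, aeval_monomial, Module.End.mul_apply, Module.algebraMap_end_apply, map_smul, hn,
      Algebra.smul_def, mul_assoc]

theorem phi_aeval (h0 : ∀ i, t i ≠ 0) {τ : ∀ i, K i}
    (hτ : ∀ i, j i (τ i) = t i + (t i)⁻¹) (i : ι) (s : Bool) (p : F[X]) (v : ∀ i, K i × K i) :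
    phi j t i s (aeval (yM F τ : Module.End F (∀ i, K i × K i)) p v) =
      aeval (pm s (t i)) p * phi j t i s v :=
  phi_aeval_gen _ _ _ (phi_y j h0 hτ i s) p v

theorem phi_aeval_symm (h0 : ∀ i, t i ≠ 0) {τ : ∀ i, K i}
    (hτ : ∀ i, j i (τ i) = t i + (t i)⁻¹) (i : ι) (s : Bool) (p : F[X]) (v : ∀ i, K i × K i) :
    phi j t i s (aeval ((yM F τ).symm : Module.End F (∀ i, K i × K i)) p v) =
      aeval (pm s (t i))⁻¹ p * phi j t i s v := by
  refine phi_aeval_gen _ _ _ (fun v => ?_) p v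
  have := phi_y j h0 hτ i s ((yM F τ).symm v)
  rw [LinearEquiv.apply_symm_apply] at this
  have hp : pm s (t i) ≠ 0 := by cases s <;> simp [pm, h0]
  rw [this, inv_mul_cancel_left₀ hp]; rfl

variable (K) in
def v0 : ∀ i, K i × K i := fun _ => (1, 0)

theorem phi_v0 (i : ι) (s : Bool) : phi j t i s (v0 K) = 1 := by
  simp [phi, v0]

theorem cyclic (h0 : ∀ i, t i ≠ 0) (hr : Reg F K t) {τ : ∀ i, K i}
    (hτ : ∀ i, j i (τ i) = t i + (t i)⁻¹) (v : ∀ i, K i × K i) :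
    ∃ p : F[X], p ∈ degreeLT F (2 * ∑ i, finrank F (K i)) ∧
      aeval (yM F τ : Module.End F (∀ i, K i × K i)) p (v0 K) = v := by
  let f : degreeLT F (2 * ∑ i, finrank F (K i)) →ₗ[F] (∀ i, K i × K i) :=
    ((LinearMap.applyₗ (v0 K)).comp
      (aeval (R := F) (yM F τ : Module.End F (∀ i, K i × K i))).toLinearMap).comp (Submodule.subtype _)
  have hf : ∀ p, f p = aeval (yM F τ : Module.End F (∀ i, K i × K i)) (p : F[X]) (v0 K) := fun p => rfl
  have hinj : Function.Injective f := by
    rw [← LinearMap.ker_eq_bot, LinearMap.ker_eq_bot']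
    intro p hp
    rw [hf] at hp
    by_contra hp0
    have hp1 : (p : F[X]) ≠ 0 := fun h => hp0 (Subtype.ext h)
    have h1 := reg_deg hr hp1 (fun i s => by
      have := phi_aeval j h0 hτ i s p (v0 K)
      rw [hp, map_zero, phi_v0, mul_one] at this
      exact this.symm)
    have h2 := mem_degreeLT.mp p.2
    rw [degree_eq_natDegree hp1] at h2
    have := WithBot.coe_lt_coe.mp h2
    exact absurd this (by simpa using h1)
  have hfd : FiniteDimensional F (degreeLT F (2 * ∑ i, finrank F (K i))) :=
    Module.Finite.equiv (degreeLTEquiv F (2 * ∑ i, finrank F (K i))).symm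
  have hsurj : Function.Surjective f := by
    rw [← LinearMap.injective_iff_surjective_of_finrank_eq_finrank]
    · exact hinj
    · rw [finrank_M, (degreeLTEquiv F (2 * ∑ i, finrank F (K i))).finrank_eq]; simp
  obtain ⟨p, hp⟩ := hsurj v
  exact ⟨p, p.2, hp⟩

end part8
end SpGen

namespace SpGen
open Module LinearMap Polynomial

section part9
set_option linter.unusedSectionVars false

theorem count_abs {G T : Type} [Group G] [Finite G] [Finite T] (f : T → G) (N D : ℕ) (S : Set G)
    (hS : ∀ t g, g * f t * g⁻¹ ∈ S) (hN : ∀ t, Nat.card (Subgroup.centralizer {f t}) ≤ N)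
    (hD : ∀ t, Nat.card {t' // IsConj (f t) (f t')} ≤ D) :
    Nat.card T * Nat.card G ≤ N * (D * Nat.card S) := by
  classical
  have := Fintype.ofFinite G
  have := Fintype.ofFinite T
  let φ : T × G → T × G := fun a => (a.1, a.2 * f a.1 * a.2⁻¹)
  have h1 := Finset.card_le_mul_card_image (f := φ) (Finset.univ : Finset (T × G)) N (by
    rintro ⟨t, s⟩ hs
    obtain ⟨⟨t0, g0⟩, -, h0⟩ := Finset.mem_image.mp hs
    simp only [φ, Prod.mk.injEq] at h0
    obtain ⟨rfl, h0⟩ := h0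
    refine le_trans ?_ (hN t0)
    rw [← Fintype.card_coe, ← Nat.card_eq_fintype_card]
    have key : ∀ g : G, g * f t0 * g⁻¹ = s → (g0⁻¹ * g) ∈ Subgroup.centralizer {f t0} := by
      intro g hg
      rw [Subgroup.mem_centralizer_singleton_iff]
      rw [← h0] at hg
      have h2 : g * f t0 = g0 * f t0 * g0⁻¹ * g := by rw [← hg]; group
      rw [mul_assoc, h2]; group
    have key' : ∀ a : {a ∈ (Finset.univ : Finset (T × G)) | φ a = (t0, s)},
        a.1.1 = t0 ∧ a.1.2 * f t0 * a.1.2⁻¹ = s := by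
      rintro ⟨⟨t, g⟩, ha⟩
      have hb := (Finset.mem_filter.mp ha).2
      simp only [φ, Prod.mk.injEq] at hb
      obtain ⟨rfl, hb⟩ := hb
      exact ⟨rfl, hb⟩
    refine Nat.card_le_card_of_injective
      (fun a => (⟨g0⁻¹ * a.1.2, key _ (key' a).2⟩ : Subgroup.centralizer {f t0})) ?_
    intro a b hab
    simp only [Subtype.mk.injEq, mul_right_inj] at hab
    exact Subtype.ext (Prod.ext ((key' a).1.trans (key' b).1.symm) hab))
  have h2 := Finset.card_le_mul_card_image (f := Prod.snd)
    ((Finset.univ : Finset (T × G)).image φ) D (by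
    intro s hs
    obtain ⟨⟨t, s'⟩, hs1, rfl⟩ := Finset.mem_image.mp hs
    obtain ⟨⟨t0, g0⟩, -, h0⟩ := Finset.mem_image.mp hs1
    have h0 : g0 * f t0 * g0⁻¹ = s' := (Prod.mk.inj h0).2
    change _ ≤ _
    refine le_trans ?_ (hD t0)
    rw [← Fintype.card_coe, ← Nat.card_eq_fintype_card]
    have key : ∀ a : {a ∈ ((Finset.univ : Finset (T × G)).image φ) | a.2 = s'},
        a.1.2 = s' ∧ IsConj (f t0) (f a.1.1) := by
      rintro ⟨⟨t, g⟩, ha⟩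
      obtain ⟨hb, hb'⟩ := Finset.mem_filter.mp ha
      obtain ⟨⟨t1, g1⟩, -, h1⟩ := Finset.mem_image.mp hb
      obtain ⟨h2, h3⟩ := Prod.mk.inj h1
      have hb' : g = s' := hb'
      have h3 : g1 * f t1 * g1⁻¹ = g := h3
      have h2 : t1 = t := h2
      refine ⟨hb', ?_⟩
      have e1 : IsConj (f t0) s' := isConj_iff.mpr ⟨g0, h0⟩
      have e2 : IsConj (f t1) s' := isConj_iff.mpr ⟨g1, h3.trans hb'⟩
      change IsConj (f t0) (f t)
      rw [← h2]
      exact e1.trans e2.symm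
    refine Nat.card_le_card_of_injective
      (fun a => (⟨a.1.1, (key a).2⟩ : {t' // IsConj (f t0) (f t')})) ?_
    intro a b hab
    simp only [Subtype.mk.injEq] at hab
    exact Subtype.ext (Prod.ext hab ((key a).1.trans (key b).1.symm)))
  have h3 : (((Finset.univ : Finset (T × G)).image φ).image Prod.snd).card ≤ Nat.card S := by
    rw [← Fintype.card_coe, ← Nat.card_eq_fintype_card]
    refine Nat.card_le_card_of_injective (fun a => (⟨a.1, ?_⟩ : S)) ?_
    · obtain ⟨a, ha⟩ := a
      change a ∈ S
      obtain ⟨b, hb, rfl⟩ := Finset.mem_image.mp ha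
      obtain ⟨⟨t1, g1⟩, -, rfl⟩ := Finset.mem_image.mp hb
      exact hS _ _
    · intro a b hab
      exact Subtype.ext (congrArg (fun x : S => (x : G)) hab)
  calc Nat.card T * Nat.card G = (Finset.univ : Finset (T × G)).card := by
        rw [Finset.card_univ, Fintype.card_prod, Nat.card_eq_fintype_card, Nat.card_eq_fintype_card]
    _ ≤ _ := h1
    _ ≤ _ := Nat.mul_le_mul_left _ (h2.trans (Nat.mul_le_mul_left _ h3))

theorem count_sel {Om ι : Type} [Field Om] [Fintype ι] [DecidableEq ι] (m : ℕ) (hm : Fintype.card ι ≤ m)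
    (R : Finset Om) (hR : R.card ≤ 2 * m) :
    Nat.card {t : ι → Om // (∀ i, t i ≠ 0 ∧ t i ∈ R ∧ (t i)⁻¹ ∈ R ∧ t i ≠ (t i)⁻¹) ∧
      ∀ i i', i ≠ i' → t i ≠ t i' ∧ t i ≠ (t i')⁻¹} ≤ 2 ^ m * m.factorial := by
  classical
  let c : Om → Om := fun r => r + r⁻¹
  have hc : ∀ r r', r ≠ 0 → r' ≠ 0 → c r = c r' → r = r' ∨ r = r'⁻¹ := by
    intro r r' h h' hh
    have hh : r + r⁻¹ = r' + r'⁻¹ := hh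
    have h1 := mul_inv_cancel₀ h
    have h2 := mul_inv_cancel₀ h'
    have : (r - r') * (r - r'⁻¹) = 0 := by
      linear_combination r * hh + h2 - h1
    rcases mul_eq_zero.mp this with h | h
    · exact Or.inl (sub_eq_zero.mp h)
    · exact Or.inr (sub_eq_zero.mp h)
  have hci : ∀ r, c r⁻¹ = c r := fun r => by simp [c, add_comm]
  let R0 := R.filter fun r => r ≠ 0 ∧ r⁻¹ ∈ R ∧ r ≠ r⁻¹
  let X := R0.image c
  have hX : X.card ≤ m := by
    have := Finset.mul_card_image_le_card (f := c) R0 2 (by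
      intro a ha
      obtain ⟨r, hr, rfl⟩ := Finset.mem_image.mp ha
      obtain ⟨h1, h2, h3, h4⟩ := Finset.mem_filter.mp hr
      rw [← Finset.card_pair h4]
      apply Finset.card_le_card
      intro z hz
      simp only [Finset.mem_insert, Finset.mem_singleton] at hz
      rcases hz with rfl | rfl
      · exact Finset.mem_filter.mpr ⟨hr, rfl⟩
      · refine Finset.mem_filter.mpr ⟨Finset.mem_filter.mpr ⟨h3, inv_ne_zero h2, by simpa using h1,
          by simpa using h4.symm⟩, hci r⟩)
    have h2 : R0.card ≤ R.card := Finset.card_filter_le _ _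
    change 2 * X.card ≤ _ at this
    omega
  have : ∀ x, ∃ s : Om, (∃ r, r ≠ 0 ∧ c r = x) → s ≠ 0 ∧ c s = x := fun x => by
    by_cases h : ∃ r, r ≠ 0 ∧ c r = x
    · obtain ⟨r, h⟩ := h; exact ⟨r, fun _ => h⟩
    · exact ⟨0, fun h' => absurd h' h⟩
  choose σ hσ using this
  have hmem : ∀ t : {t : ι → Om // (∀ i, t i ≠ 0 ∧ t i ∈ R ∧ (t i)⁻¹ ∈ R ∧ t i ≠ (t i)⁻¹) ∧
      ∀ i i', i ≠ i' → t i ≠ t i' ∧ t i ≠ (t i')⁻¹}, ∀ i, c (t.1 i) ∈ X := by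
    rintro ⟨t, h1, h2⟩ i
    obtain ⟨a1, a2, a3, a4⟩ := h1 i
    exact Finset.mem_image.mpr ⟨t i, Finset.mem_filter.mpr ⟨a2, a1, a3, a4⟩, rfl⟩
  let Φ : {t : ι → Om // (∀ i, t i ≠ 0 ∧ t i ∈ R ∧ (t i)⁻¹ ∈ R ∧ t i ≠ (t i)⁻¹) ∧
      ∀ i i', i ≠ i' → t i ≠ t i' ∧ t i ≠ (t i')⁻¹} → (ι → Bool) × (ι ↪ X) := fun t =>
    (fun i => decide (t.1 i = σ (c (t.1 i))), ⟨fun i => ⟨c (t.1 i), hmem t i⟩, fun i i' h => by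
      by_contra hne
      simp only [Subtype.mk.injEq] at h
      obtain ⟨h1, h2⟩ := t.2.2 i i' hne
      rcases hc _ _ (t.2.1 i).1 (t.2.1 i').1 h with h3 | h3
      · exact h1 h3
      · exact h2 h3⟩)
  have hΦ : Function.Injective Φ := by
    intro t t' h
    apply Subtype.ext
    funext i
    simp only [Φ, Prod.mk.injEq] at h
    have h1 := congrFun h.1 i
    have h2 : c (t.1 i) = c (t'.1 i) := congrArg Subtype.val (DFunLike.congr_fun h.2 i)
    rw [h2, decide_eq_decide] at h1
    by_cases h3 : t.1 i = σ (c (t'.1 i))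
    · rw [h3, ← h1.mp h3]
    · rcases hc _ _ (t.2.1 i).1 (t'.2.1 i).1 h2 with h4 | h4
      · exact h4
      · exfalso
        have h5 : t'.1 i ≠ σ (c (t'.1 i)) := fun h => h3 (h1.mpr h)
        obtain ⟨hs0, hs⟩ := hσ (c (t'.1 i)) ⟨t'.1 i, (t'.2.1 i).1, rfl⟩
        rcases hc _ _ hs0 (t'.2.1 i).1 hs with h6 | h6
        · exact h5 h6.symm
        · exact h3 (h4.trans h6.symm)
  refine (Nat.card_le_card_of_injective Φ hΦ).trans ?_
  rw [Nat.card_prod]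
  refine Nat.mul_le_mul ?_ ?_
  · rw [Nat.card_eq_fintype_card, Fintype.card_fun, Fintype.card_bool]
    exact Nat.pow_le_pow_right (by norm_num) hm
  · rw [Nat.card_eq_fintype_card, Fintype.card_embedding_eq, Fintype.card_coe]
    refine le_trans ?_ (Nat.factorial_le hX)
    rcases le_or_gt (Fintype.card ι) X.card with h | h
    · rw [← Nat.factorial_mul_descFactorial h]
      exact Nat.le_mul_of_pos_left _ (Nat.factorial_pos _)
    · rw [Nat.descFactorial_eq_zero_iff_lt.mpr h]; exact Nat.zero_le _

end part9
end SpGen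

namespace SpGen
open Module LinearMap Polynomial

section part10
set_option linter.unusedSectionVars false
variable {F : Type} [Field F] [Finite F]
variable {Om : Type} [Field Om] [Algebra F Om]
variable {ι : Type} [Fintype ι] [DecidableEq ι] {K : ι → Type} [∀ i, Field (K i)]
  [∀ i, Algebra F (K i)] [∀ i, FiniteDimensional F (K i)]
variable [CharP F 2] (j : ∀ i, K i →ₐ[F] Om)

theorem cent_poly {t : ι → Om} (h0 : ∀ i, t i ≠ 0) (hr : Reg F K t) {τ : ∀ i, K i}
    (hτ : ∀ i, j i (τ i) = t i + (t i)⁻¹) {g : (∀ i, K i × K i) ≃ₗ[F] (∀ i, K i × K i)}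
    (hg : g ∈ Sp (BM F K)) (hc : ∀ v, g (yM F τ v) = yM F τ (g v)) :
    ∃ p : F[X], p ∈ degreeLT F (2 * ∑ i, finrank F (K i)) ∧
      (∀ v, g v = aeval (yM F τ : Module.End F (∀ i, K i × K i)) p v) ∧
      ∀ i, aeval (t i) p * aeval (t i)⁻¹ p = 1 := by
  obtain ⟨p, hp, hpv⟩ := cyclic j h0 hr hτ (g (v0 K))
  have hgp : ∀ v, g v = aeval (yM F τ : Module.End F (∀ i, K i × K i)) p v := by
    intro v
    obtain ⟨b, -, rfl⟩ := cyclic j h0 hr hτ v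
    have h1 := aeval_comm (x := g) (yM F τ : Module.End F (∀ i, K i × K i)) (fun v => (hc v).symm) b
      (v0 K)
    rw [← h1, ← hpv]
    rw [← Module.End.mul_apply, ← Module.End.mul_apply, ← map_mul, ← map_mul, mul_comm]
  refine ⟨p, hp, hgp, fun i => ?_⟩
  have h2 : ∀ w, aeval ((yM F τ).symm : Module.End F (∀ i, K i × K i)) p (g w) = w := by
    intro w
    rw [← sub_eq_zero]
    apply (BM_symp F K).nd
    intro v
    have h3 := aeval_adj (B := BM F K) (yM F τ : Module.End F (∀ i, K i × K i))
      ((yM F τ).symm : Module.End F (∀ i, K i × K i)) (fun v w => sp_adj (yM_mem τ) v w) p v (g w)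
    rw [← hgp, mem_Sp.mp hg] at h3
    rw [map_sub, LinearMap.sub_apply, (BM_symp F K).symm _ v, (BM_symp F K).symm _ v, h3, sub_self]
  have h4 := congrArg (phi j t i true) (h2 (v0 K))
  rw [phi_aeval_symm j h0 hτ, hgp, phi_aeval j h0 hτ, phi_v0] at h4
  simp only [pm, if_true, mul_one] at h4
  rw [mul_comm]; exact h4

theorem cent_card {sg : ι → Bool} [Finite {t : ι → Om // TH F K sg t}] {t : ι → Om}
    (h : TH F K sg t) (hr : Reg F K t) {τ : ∀ i, K i}
    (hτ : ∀ i, j i (τ i) = t i + (t i)⁻¹) :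
    Nat.card (Subgroup.centralizer {(⟨yM F τ, yM_mem τ⟩ : Sp (BM F K))}) ≤
      Nat.card {t : ι → Om // TH F K sg t} := by
  have h0 := fun i => (h i).1
  have key : ∀ g : Subgroup.centralizer {(⟨yM F τ, yM_mem τ⟩ : Sp (BM F K))},
    ∃ p : F[X], p ∈ degreeLT F (2 * ∑ i, finrank F (K i)) ∧
      (∀ v, g.1.1 v = aeval (yM F τ : Module.End F (∀ i, K i × K i)) p v) ∧
      ∀ i, aeval (t i) p * aeval (t i)⁻¹ p = 1 := by
    rintro ⟨⟨g, hg⟩, hgc⟩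
    rw [Subgroup.mem_centralizer_singleton_iff] at hgc
    refine cent_poly j h0 hr hτ hg fun v => ?_
    have := congrArg Subtype.val hgc
    exact LinearEquiv.congr_fun this v
  choose p hp1 hp2 hp3 using key
  refine Nat.card_le_card_of_injective (fun g => ⟨fun i => aeval (t i) (p g), fun i => ?_⟩) ?_
  · refine ⟨fun hz => ?_, ?_⟩
    · have := hp3 g i
      rw [show aeval (t i) (p g) = 0 from hz, zero_mul] at this
      exact zero_ne_one this
    · rw [frob_aeval, (h i).2]
      cases sg i
      · simp only [pm, Bool.false_eq_true, if_false]
        exact eq_inv_of_mul_eq_one_right (hp3 g i)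
      · simp [pm]
  · intro g g' hgg
    have hgg := congrArg Subtype.val hgg
    have h1 : ∀ i, aeval (t i) (p g) = aeval (t i) (p g') := fun i => congrFun hgg i
    have h2 : p g = p g' := by
      rw [← sub_eq_zero]
      by_contra hne
      have h3 := reg_deg hr hne (fun i s => by
        cases s
        · simp only [pm, Bool.false_eq_true, if_false, map_sub]
          rw [eq_inv_of_mul_eq_one_right (hp3 g i), eq_inv_of_mul_eq_one_right (hp3 g' i), h1,
            sub_self]
        · simp [pm, h1])
      have h4 := mem_degreeLT.mp (Submodule.sub_mem _ (hp1 g) (hp1 g'))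
      rw [degree_eq_natDegree hne] at h4
      exact absurd (WithBot.coe_lt_coe.mp h4) (by simpa using h3)
    apply Subtype.ext
    apply Subtype.ext
    ext v
    all_goals rw [hp2 g, hp2 g', h2]

theorem conj_card {sg : ι → Bool} (tau : {t : ι → Om // TH F K sg t ∧ Reg F K t} → ∀ i, K i)
    (htau : ∀ t i, j i (tau t i) = t.1 i + (t.1 i)⁻¹)
    (t : {t : ι → Om // TH F K sg t ∧ Reg F K t}) :
    Nat.card {t' // IsConj (⟨yM F (tau t), yM_mem _⟩ : Sp (BM F K)) ⟨yM F (tau t'), yM_mem _⟩} ≤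
      2 ^ (∑ i, finrank F (K i)) * (∑ i, finrank F (K i)).factorial := by
  classical
  let P := (yM F (tau t) : Module.End F (∀ i, K i × K i)).charpoly
  have hP : P.natDegree = 2 * ∑ i, finrank F (K i) := by
    rw [LinearMap.charpoly_natDegree, finrank_M]
  have hP0 : P ≠ 0 := (LinearMap.charpoly_monic _).ne_zero
  have hP1 : P.map (algebraMap F Om) ≠ 0 := by
    rwa [Polynomial.map_ne_zero_iff (algebraMap F Om).injective]
  let R : Finset Om := (P.map (algebraMap F Om)).roots.toFinset
  have hR : R.card ≤ 2 * ∑ i, finrank F (K i) := by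
    refine (Multiset.toFinset_card_le _).trans ((Polynomial.card_roots' _).trans ?_)
    rw [natDegree_map, hP]
  have hroot : ∀ t' : {t' // IsConj (⟨yM F (tau t), yM_mem _⟩ : Sp (BM F K)) ⟨yM F (tau t'), yM_mem _⟩},
      ∀ i s, pm s (t'.1.1 i) ∈ R := by
    rintro ⟨⟨t', h1, h2⟩, hc⟩ i s
    obtain ⟨⟨g, hg⟩, hgc⟩ := isConj_iff.mp hc
    rw [mul_inv_eq_iff_eq_mul] at hgc
    have h3 : ∀ v, g (yM F (tau t) v) = yM F (tau ⟨t', h1, h2⟩) (g v) := fun v =>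
      LinearEquiv.congr_fun (congrArg Subtype.val hgc) v
    have h4 := phi_aeval_gen ((phi j t' i s).comp (g : (∀ i, K i × K i) →ₗ[F] (∀ i, K i × K i)))
      (yM F (tau t) : Module.End F (∀ i, K i × K i)) (pm s (t' i)) (fun v => by
        simp only [LinearMap.comp_apply, LinearEquiv.coe_coe]
        rw [h3, phi_y j (fun i => (h1 i).1) (htau ⟨t', h1, h2⟩)]) P (g.symm (v0 K))
    rw [LinearMap.aeval_self_charpoly] at h4
    simp only [LinearMap.zero_apply, map_zero, LinearMap.comp_apply, LinearEquiv.coe_coe,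
      LinearEquiv.apply_symm_apply, phi_v0, mul_one] at h4
    rw [Multiset.mem_toFinset, mem_roots hP1, IsRoot.def, eval_map_algebraMap]
    exact h4.symm
  refine le_trans ?_ (count_sel (ι := ι) (∑ i, finrank F (K i)) ?_ R hR)
  · have : Finite {t : ι → Om // (∀ i, t i ≠ 0 ∧ t i ∈ R ∧ (t i)⁻¹ ∈ R ∧ t i ≠ (t i)⁻¹) ∧
      ∀ i i', i ≠ i' → t i ≠ t i' ∧ t i ≠ (t i')⁻¹} := by
      refine Finite.of_injective (β := ι → R) (fun t i => ⟨t.1 i, (t.2.1 i).2.1⟩) ?_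
      intro a b hab
      apply Subtype.ext
      funext i
      exact congrArg Subtype.val (congrFun hab i)
    refine Nat.card_le_card_of_injective (fun t' => ⟨t'.1.1, fun i => ⟨(t'.1.2.1 i).1,
      hroot t' i true, hroot t' i false, reg_ne t'.1.2.2 i⟩, fun i i' hne => ⟨fun h => ?_, fun h => ?_⟩⟩) ?_
    · exact hne (reg_pm t'.1.2.2 (s := true) (s' := true) (by simpa [pm] using h)).1
    · exact hne (reg_pm t'.1.2.2 (s := true) (s' := false) (by simpa [pm] using h)).1
    · intro a b hab
      simp only [Subtype.mk.injEq] at hab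
      exact Subtype.ext (Subtype.ext hab)
  · rw [← Finset.card_univ, Finset.card_eq_sum_ones]
    exact Finset.sum_le_sum fun i _ => Module.finrank_pos

end part10
end SpGen

namespace SpGen
open Module LinearMap Polynomial

section part11
set_option linter.unusedSectionVars false
variable {F : Type} [Field F] [Finite F]
variable {Om : Type} [Field Om] [Algebra F Om]

theorem card_Tc_aux [IsAlgClosed Om] [CharP Om 2] (N : ℕ) (hN : Even N) (hN2 : 2 ≤ N) (s : Bool) :
    Finite {z : Om // z ≠ 0 ∧ z ^ N = pm s z} ∧ N ≤ 2 * Nat.card {z : Om // z ≠ 0 ∧ z ^ N = pm s z} := by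
  let n := if s then N - 1 else N + 1
  have hn : n ≠ 0 := by simp only [n]; split_ifs <;> omega
  have hodd : ¬ 2 ∣ n := by
    obtain ⟨a, rfl⟩ := hN
    simp only [n]; split_ifs <;> omega
  have hnz : NeZero n := ⟨hn⟩
  have hnz' : NeZero (n : Om) := ⟨fun h => hodd ((CharP.cast_eq_zero_iff Om 2 n).mp h)⟩
  have hiff : ∀ z : Om, z ≠ 0 → (z ^ N = pm s z ↔ z ^ n = 1) := by
    intro z hz
    simp only [n, pm]
    cases s
    · simp only [Bool.false_eq_true, if_false]
      rw [pow_succ]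
      constructor
      · intro h; rw [h, inv_mul_cancel₀ hz]
      · intro h; exact eq_inv_of_mul_eq_one_left h
    · simp only [if_true]
      obtain ⟨M, rfl⟩ : ∃ M, N = M + 1 := ⟨N - 1, by omega⟩
      rw [pow_succ, Nat.add_sub_cancel]
      constructor
      · intro h; exact mul_right_cancel₀ hz (by rw [h, one_mul])
      · intro h; rw [h, one_mul]
  let e : rootsOfUnity n Om ≃ {z : Om // z ≠ 0 ∧ z ^ N = pm s z} :=
    { toFun := fun u => ⟨(u : Omˣ), u.1.ne_zero, (hiff _ u.1.ne_zero).mpr (by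
        have := u.2
        rw [mem_rootsOfUnity] at this
        rw [← Units.val_pow_eq_pow_val, this, Units.val_one])⟩
      invFun := fun z => ⟨Units.mk0 z.1 z.2.1, by
        rw [mem_rootsOfUnity]
        ext
        simpa using (hiff _ z.2.1).mp z.2.2⟩
      left_inv := fun u => by ext; rfl
      right_inv := fun z => by ext; rfl }
  refine ⟨Finite.of_equiv _ e, ?_⟩
  rw [← Nat.card_congr e, HasEnoughRootsOfUnity.natCard_rootsOfUnity]
  simp only [n]; split_ifs <;> omega

variable {ι : Type} [Fintype ι] [DecidableEq ι] {K : ι → Type} [∀ i, Field (K i)]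
  [∀ i, Algebra F (K i)] [∀ i, FiniteDimensional F (K i)]

theorem q_ge : 2 ≤ Nat.card F := Finite.one_lt_card

theorem pow_lt_aux {k : ℕ} (l : Fin k) : Nat.card F ^ (l : ℕ) ≤ Nat.card F ^ (k - 1) :=
  Nat.pow_le_pow_right Nat.card_pos (by omega)

theorem root_bound (e e' : E F K) (hne : e ≠ e') (t0 : ι → Om) :
    ∃ P : Om[X], P ≠ 0 ∧ P.natDegree ≤ 2 * Nat.card F ^ (finrank F (K e.1) - 1) ∧
      ∀ t : ι → Om, (∀ j, j ≠ e.1 → t j = t0 j) → (∀ j, t j ≠ 0) → chi F K t e = chi F K t e' →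
        P.IsRoot (t e.1) := by
  obtain ⟨i, l, s⟩ := e
  obtain ⟨i', l', s'⟩ := e'
  have hl := pow_lt_aux (F := F) l
  have hq : ∀ n : ℕ, 0 < Nat.card F ^ n := fun n => pow_pos Nat.card_pos n
  by_cases hi : i = i'
  · subst hi
    have hl' := pow_lt_aux (F := F) l'
    by_cases hs : s = s'
    · subst hs
      have hll : Nat.card F ^ (l : ℕ) ≠ Nat.card F ^ (l' : ℕ) := by
        intro h
        have := Nat.pow_right_injective (q_ge (F := F)) h
        apply hne
        rw [Fin.ext this]
      refine ⟨X ^ (Nat.card F ^ (l : ℕ)) - X ^ (Nat.card F ^ (l' : ℕ)), ?_, ?_, ?_⟩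
      · rw [sub_ne_zero]
        intro h
        have := congrArg natDegree h
        rw [natDegree_X_pow, natDegree_X_pow] at this
        exact hll this
      · refine (natDegree_sub_le _ _).trans ?_
        rw [natDegree_X_pow, natDegree_X_pow]
        simp only
        omega
      · intro t _ ht h
        simp only [chi] at h
        rw [IsRoot.def, eval_sub, eval_pow, eval_pow, eval_X, sub_eq_zero]
        cases s
        · simpa [pm] using h
        · simpa [pm] using h
    · refine ⟨X ^ (Nat.card F ^ (l : ℕ) + Nat.card F ^ (l' : ℕ)) - C 1, ?_, ?_, ?_⟩
      · exact X_pow_sub_C_ne_zero (by have := hq l; omega) _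
      · rw [natDegree_X_pow_sub_C]
        simp only
        omega
      · intro t _ ht h
        simp only [chi] at h
        rw [IsRoot.def, eval_sub, eval_pow, eval_X, eval_C, sub_eq_zero, pow_add]
        have h0 := ht i
        cases s <;> cases s' <;> simp [pm] at h hs ⊢
        · rw [← h]; field_simp
        · rw [h]; field_simp
  · let c := chi F K t0 ⟨i', l', s'⟩
    refine ⟨X ^ (Nat.card F ^ (l : ℕ)) - C (if s then c else c⁻¹), ?_, ?_, ?_⟩
    · exact X_pow_sub_C_ne_zero (hq l) _
    · rw [natDegree_X_pow_sub_C]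
      simp only
      omega
    · intro t ht0 ht h
      have hc : chi F K t ⟨i', l', s'⟩ = c := by
        simp only [chi, c]; rw [ht0 i' (fun h => hi h.symm)]
      rw [hc] at h
      rw [IsRoot.def, eval_sub, eval_pow, eval_X, eval_C, sub_eq_zero, ← h]
      cases s <;> simp [chi, pm]

variable [CharP F 2] [IsAlgClosed Om]

abbrev Tc (F : Type) [Field F] {Om : Type} [Field Om] (K : Type) [Field K] [Algebra F K] (s : Bool) : Type :=
  {z : Om // z ≠ 0 ∧ z ^ (Nat.card F ^ finrank F K) = pm s z}

theorem card_Tc (L : Type) [Field L] [Algebra F L] [FiniteDimensional F L] (s : Bool) :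
    Finite (Tc F (Om := Om) L s) ∧ Nat.card F ^ finrank F L ≤ 2 * Nat.card (Tc F (Om := Om) L s) := by
  have := char_two (F := F) Om
  have h1 : Even (Nat.card F) := by
    have := Fintype.ofFinite F
    rw [Nat.card_eq_fintype_card]
    exact Nat.even_iff.mpr ((FiniteField.even_card_iff_char_two (F := F)).mp (ringChar.eq F 2))
  have h2 : finrank F L ≠ 0 := Module.finrank_pos.ne'
  refine card_Tc_aux _ (h1.pow_of_ne_zero h2) ?_ s
  calc 2 ≤ Nat.card F := q_ge
    _ = Nat.card F ^ 1 := (pow_one _).symm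
    _ ≤ _ := Nat.pow_le_pow_right Nat.card_pos (by omega)

def TTe (sg : ι → Bool) : {t : ι → Om // TH F K sg t} ≃ ∀ i, Tc F (Om := Om) (K i) (sg i) :=
  Equiv.subtypePiEquivPi (p := fun i (z : Om) => z ≠ 0 ∧ z ^ (Nat.card F ^ finrank F (K i)) = pm (sg i) z)

theorem finite_TT (sg : ι → Bool) : Finite {t : ι → Om // TH F K sg t} := by
  have := fun i => (card_Tc (F := F) (Om := Om) (K i) (sg i)).1
  exact Finite.of_equiv _ (TTe sg).symm

theorem pair_bound (sg : ι → Bool) (e e' : E F K) (hne : e ≠ e') :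
    Nat.card F * Nat.card {t : {t : ι → Om // TH F K sg t} // chi F K t.1 e = chi F K t.1 e'} ≤
      4 * Nat.card {t : ι → Om // TH F K sg t} := by
  classical
  have := finite_TT (F := F) (K := K) (Om := Om) sg
  have hfin := fun i => (card_Tc (F := F) (Om := Om) (K i) (sg i)).1
  let i := e.1
  let Rest := ∀ j : {j // j ≠ i}, Tc F (Om := Om) (K j) (sg j)
  have hT : Nat.card {t : ι → Om // TH F K sg t} = Nat.card (Tc F (Om := Om) (K i) (sg i)) * Nat.card Rest := by
    rw [← Nat.card_prod]
    exact Nat.card_congr ((TTe sg).trans (Equiv.piSplitAt i _))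
  let N := {t : {t : ι → Om // TH F K sg t} // chi F K t.1 e = chi F K t.1 e'}
  have := Fintype.ofFinite N
  have := Fintype.ofFinite Rest
  let f : N → Rest := fun t j => ⟨t.1.1 j, t.1.2 j⟩
  have hN : Nat.card N ≤ 2 * Nat.card F ^ (finrank F (K i) - 1) * Nat.card Rest := by
    have := Finset.card_le_mul_card_image (f := f) Finset.univ (2 * Nat.card F ^ (finrank F (K i) - 1)) (by
      intro b hb
      obtain ⟨t0, -, rfl⟩ := Finset.mem_image.mp hb
      obtain ⟨P, hP0, hP1, hP2⟩ := root_bound e e' hne t0.1.1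
      have hinj : Set.InjOn (fun t : N => t.1.1 i) ({t ∈ (Finset.univ : Finset N) | f t = f t0} : Finset N) := by
        intro a ha b hb hab
        have ha := (Finset.mem_filter.mp (Finset.mem_coe.mp ha)).2
        have hb := (Finset.mem_filter.mp (Finset.mem_coe.mp hb)).2
        apply Subtype.ext; apply Subtype.ext
        funext j
        by_cases hj : j = i
        · rw [hj]; exact hab
        · exact congrArg Subtype.val (congrFun (ha.trans hb.symm) ⟨j, hj⟩)
      rw [← Finset.card_image_of_injOn hinj]
      refine le_trans ?_ hP1
      apply Polynomial.card_le_degree_of_subset_roots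
      intro z hz
      obtain ⟨a, ha, rfl⟩ := Finset.mem_image.mp (Finset.mem_val.mp hz)
      have ha := (Finset.mem_filter.mp ha).2
      rw [mem_roots hP0]
      exact hP2 a.1.1 (fun j hj => congrArg Subtype.val (congrFun ha ⟨j, hj⟩)) (fun j => (a.1.2 j).1) a.2)
    rw [Finset.card_univ, ← Nat.card_eq_fintype_card] at this
    refine this.trans (Nat.mul_le_mul_left _ ?_)
    exact (Finset.card_le_univ _).trans_eq (Nat.card_eq_fintype_card (α := Rest)).symm
  have h1 := (card_Tc (F := F) (Om := Om) (K i) (sg i)).2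
  have h2 : Nat.card F ^ finrank F (K i) = Nat.card F * Nat.card F ^ (finrank F (K i) - 1) := by
    rw [← pow_succ']
    congr 1
    have : 0 < finrank F (K i) := Module.finrank_pos
    omega
  rw [hT]
  calc Nat.card F * Nat.card N ≤ Nat.card F * (2 * Nat.card F ^ (finrank F (K i) - 1) * Nat.card Rest) :=
        Nat.mul_le_mul_left _ hN
    _ = 2 * Nat.card F ^ finrank F (K i) * Nat.card Rest := by rw [h2]; ring
    _ ≤ 2 * (2 * Nat.card (Tc F (Om := Om) (K i) (sg i))) * Nat.card Rest := by gcongr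
    _ = _ := by ring

theorem nonreg_bound (sg : ι → Bool) :
    Nat.card F * Nat.card {t : ι → Om // TH F K sg t} ≤
      Nat.card F * Nat.card {t : ι → Om // TH F K sg t ∧ Reg F K t} +
       16 * (∑ i, finrank F (K i)) ^ 2 * Nat.card {t : ι → Om // TH F K sg t} := by
  classical
  have := finite_TT (F := F) (K := K) (Om := Om) sg
  let T := {t : ι → Om // TH F K sg t}
  have := Fintype.ofFinite T
  let A : Finset T := {t | Reg F K t.1}
  let N : E F K × E F K → Finset T := fun p => {t | chi F K t.1 p.1 = chi F K t.1 p.2}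
  have h1 : (Finset.univ : Finset T) ⊆ A ∪ (Finset.univ.filter fun p : E F K × E F K => p.1 ≠ p.2).biUnion N := by
    intro t _
    by_cases h : Reg F K t.1
    · exact Finset.mem_union_left _ (by simp [A, h])
    · apply Finset.mem_union_right
      simp only [Reg, Function.Injective] at h
      push Not at h
      obtain ⟨a, b, hab, hne⟩ := h
      exact Finset.mem_biUnion.mpr ⟨(a, b), by simpa using hne, by simpa [N] using hab⟩
  have h2 := (Finset.card_le_card h1).trans (Finset.card_union_le _ _)
  have h3 : ∀ p ∈ Finset.univ.filter fun p : E F K × E F K => p.1 ≠ p.2,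
      Nat.card F * (N p).card ≤ 4 * Nat.card T := by
    intro p hp
    have := pair_bound (Om := Om) sg p.1 p.2 (Finset.mem_filter.mp hp).2
    have h9 : Nat.card {t : T // chi F K t.1 p.1 = chi F K t.1 p.2} = (N p).card := by
      rw [Nat.card_eq_fintype_card, Fintype.card_subtype]
    rw [← h9]
    exact this
  have hA : A.card = Nat.card {t : ι → Om // TH F K sg t ∧ Reg F K t} := by
    rw [← Fintype.card_coe, ← Nat.card_eq_fintype_card]
    refine Nat.card_congr ?_
    refine (Equiv.subtypeEquivRight (fun t => ?_)).trans (Equiv.subtypeSubtypeEquivSubtypeInter (TH F K sg) (Reg F K))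
    simp [A]
  have h4 : Nat.card F * ((Finset.univ.filter fun p : E F K × E F K => p.1 ≠ p.2).biUnion N).card ≤
      (Finset.univ.filter fun p : E F K × E F K => p.1 ≠ p.2).card * (4 * Nat.card T) := by
    refine (Nat.mul_le_mul_left _ Finset.card_biUnion_le).trans ?_
    rw [Finset.mul_sum, ← smul_eq_mul]
    exact Finset.sum_le_card_nsmul _ _ _ h3
  have h5 : (Finset.univ.filter fun p : E F K × E F K => p.1 ≠ p.2).card ≤ (2 * ∑ i, finrank F (K i)) ^ 2 := by
    refine (Finset.card_filter_le _ _).trans ?_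
    rw [Finset.card_univ, Fintype.card_prod, card_E, sq]
  rw [Finset.card_univ, ← Nat.card_eq_fintype_card, hA] at h2
  calc Nat.card F * Nat.card T ≤ Nat.card F * _ := Nat.mul_le_mul_left _ h2
    _ = _ := mul_add _ _ _
    _ ≤ _ + (2 * ∑ i, finrank F (K i)) ^ 2 * (4 * Nat.card T) :=
        Nat.add_le_add_left (h4.trans (Nat.mul_le_mul_right _ h5)) _
    _ = _ := by ring

end part11
end SpGen

namespace SpGen
open Module LinearMap Polynomial

section part12
set_option linter.unusedSectionVars false
variable {F : Type} [Field F]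
variable {V W : Type} [AddCommGroup V] [Module F V] [AddCommGroup W] [Module F W]
variable {B : LinearMap.BilinForm F V} {C : LinearMap.BilinForm F W}

def cj (Φ : W ≃ₗ[F] V) (y : W ≃ₗ[F] W) : V ≃ₗ[F] V := Φ.symm.trans (y.trans Φ)

theorem cj_apply (Φ : W ≃ₗ[F] V) (y : W ≃ₗ[F] W) (v : V) : cj Φ y v = Φ (y (Φ.symm v)) := rfl

def spE {Φ : W ≃ₗ[F] V} (h : IsIso C B Φ) : Sp C ≃* Sp B where
  toFun y := ⟨cj Φ y, fun v w => by
    rw [cj_apply, cj_apply, h, mem_Sp.mp y.2, IsIso.symm h]⟩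
  invFun y := ⟨cj Φ.symm y, fun v w => by
    rw [cj_apply, cj_apply, IsIso.symm h, mem_Sp.mp y.2, LinearEquiv.symm_symm, h]⟩
  left_inv y := by
    apply Subtype.ext; ext v
    simp [cj_apply]
  right_inv y := by
    apply Subtype.ext; ext v
    simp [cj_apply]
  map_mul' x y := by
    apply Subtype.ext; ext v
    simp [cj_apply]

theorem spE_coe {Φ : W ≃ₗ[F] V} (h : IsIso C B Φ) (y : Sp C) :
    ((spE h y : Sp B) : V ≃ₗ[F] V) = cj Φ y := rfl

theorem tr_pres [CharP F 2] {Φ : W ≃ₗ[F] V} (h : IsIso C B Φ) {p : Prop} {y : W ≃ₗ[F] W} (hy : Pres C p y) :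
    Pres B p (cj Φ y) := by
  obtain ⟨Q, hQ, hy⟩ := hy
  refine ⟨fun v => Q (Φ.symm v), hQ.comp (IsIso.symm h), fun v => ?_⟩
  change Q (Φ.symm (Φ (y (Φ.symm v)))) = Q (Φ.symm v)
  rw [LinearEquiv.symm_apply_apply, hy]

theorem tr_nd {Φ : W ≃ₗ[F] V} (h : IsIso C B Φ) {k : ℕ} {y : W ≃ₗ[F] W} (hy : NdK C y k) :
    NdK B (cj Φ y) k := by
  obtain ⟨U, h1, h2, h3⟩ := hy
  refine ⟨U.map (Φ : W →ₗ[F] V), ?_, ?_, ?_⟩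
  · rintro _ ⟨u, hu, rfl⟩
    refine ⟨y u, h1 u hu, ?_⟩
    simp [cj_apply]
  · rw [Submodule.disjoint_def] at h2 ⊢
    rintro _ ⟨u, hu, rfl⟩ hx
    have : u = 0 := h2 u hu (by
      intro v hv
      have := hx (Φ v) ⟨v, hv, rfl⟩
      change B (Φ v) (Φ u) = 0 at this
      rw [h] at this
      exact this)
    rw [this, map_zero]
  · rw [← h3]
    exact LinearEquiv.finrank_map_eq Φ U

theorem tr_iso {Φ : W ≃ₗ[F] V} (h : IsIso C B Φ) {k : ℕ} {y : W ≃ₗ[F] W} (hy : IsoK C y k) :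
    IsoK B (cj Φ y) k := by
  obtain ⟨U, h1, h2, h3⟩ := hy
  refine ⟨U.map (Φ : W →ₗ[F] V), ?_, ?_, ?_⟩
  · rintro _ ⟨u, hu, rfl⟩
    refine ⟨y u, h1 u hu, ?_⟩
    simp [cj_apply]
  · rintro _ ⟨u, hu, rfl⟩ _ ⟨v, hv, rfl⟩
    exact (h u v).trans (h2 u hu v hv)
  · rw [← h3]
    exact LinearEquiv.finrank_map_eq Φ U

theorem tr_kstr {Φ : W ≃ₗ[F] V} (h : IsIso C B Φ) {L : Type} [Field L] [Algebra F L]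
    {y : W ≃ₗ[F] W} (hy : KStr L C y) : KStr L B (cj Φ y) := by
  obtain ⟨ρ, h1, h2⟩ := hy
  refine ⟨(LinearEquiv.conjAlgEquiv F Φ : Module.End F W →ₐ[F] Module.End F V).comp ρ, fun a v w => ?_, fun a v => ?_⟩
  · have e1 : ∀ v : V, ((LinearEquiv.conjAlgEquiv F Φ : Module.End F W →ₐ[F] Module.End F V).comp ρ) a v
        = Φ (ρ a (Φ.symm v)) := fun v => rfl
    rw [e1, e1]
    obtain ⟨v, rfl⟩ := Φ.surjective v
    obtain ⟨w, rfl⟩ := Φ.surjective w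
    rw [LinearEquiv.symm_apply_apply, LinearEquiv.symm_apply_apply, h, h, h1]
  · have e1 : ∀ v : V, ((LinearEquiv.conjAlgEquiv F Φ : Module.End F W →ₐ[F] Module.End F V).comp ρ) a v
        = Φ (ρ a (Φ.symm v)) := fun v => rfl
    rw [e1, e1, cj_apply, cj_apply, LinearEquiv.symm_apply_apply, LinearEquiv.symm_apply_apply, h2]

theorem finite_Sp [Finite F] [FiniteDimensional F V] : Finite (Sp B) := by
  have : Finite V := Module.finite_of_finite F
  have : Finite (V ≃ₗ[F] V) := DFunLike.finite _
  infer_instance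

variable [Finite F] [CharP F 2]
variable {ι : Type} [Fintype ι] [DecidableEq ι] (K : ι → Type) [∀ i, Field (K i)]
  [∀ i, Algebra F (K i)] [∀ i, FiniteDimensional F (K i)]

theorem torus_count [FiniteDimensional F V] (hB : IsSymp B) (m : ℕ) (hm : ∑ i, finrank F (K i) = m)
    (hd : finrank F V = 2 * m) (sg : ι → Bool)
    (S : Set (Sp B)) (hS : ∀ (Φ : (∀ i, K i × K i) ≃ₗ[F] V) (hΦ : IsIso (BM F K) B Φ) (τ : ∀ i, K i),
      (∀ i, τ i ≠ 0) → (∀ i, (∃ r : K i, r ^ 2 = 1 + τ i * r) ↔ sg i = true) →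
      spE hΦ ⟨yM F τ, yM_mem τ⟩ ∈ S) :
    Nat.card F * Nat.card (Sp B) ≤ Nat.card F * (2 ^ m * m.factorial * Nat.card S) +
      16 * m ^ 2 * Nat.card (Sp B) := by
  obtain ⟨Φ, hΦ⟩ := exists_iso (BM_symp F K) hB (by rw [finrank_M, hm, hd])
  let Om := AlgebraicClosure F
  let j : ∀ i, K i →ₐ[F] Om := fun i => IsAlgClosed.lift
  have hfin := finite_TT (F := F) (K := K) (Om := Om) sg
  have hfG : Finite (Sp (BM F K)) := finite_Sp
  let T := {t : ι → Om // TH F K sg t ∧ Reg F K t}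
  have hfT : Finite T := Finite.of_injective (β := {t : ι → Om // TH F K sg t}) (fun t => ⟨t.1, t.2.1⟩)
    (fun a b h => Subtype.ext (by simpa [Subtype.ext_iff] using h))
  have htau : ∀ t : T, ∃ τ : ∀ i, K i, ∀ i, j i (τ i) = t.1 i + (t.1 i)⁻¹ := fun t => exists_tau j t.2.1
  choose tau htau using htau
  let S' : Set (Sp (BM F K)) := spE hΦ ⁻¹' S
  have hS' : Nat.card S' = Nat.card S := by
    refine Nat.card_congr ((spE hΦ).toEquiv.subtypeEquiv fun a => ?_)
    rfl
  have hG : Nat.card (Sp (BM F K)) = Nat.card (Sp B) := Nat.card_congr (spE hΦ).toEquiv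
  have h1 := count_abs (T := T) (fun t => (⟨yM F (tau t), yM_mem _⟩ : Sp (BM F K)))
    (Nat.card {t : ι → Om // TH F K sg t})
    (2 ^ m * m.factorial) S' (by
      intro t g
      change spE hΦ _ ∈ S
      have := hS _ (IsIso.trans g.2 hΦ) (tau t) (tau_ne j t.2.2 (htau t)) (tau_sg j t.2.1 t.2.2 (htau t))
      convert this using 1
      apply Subtype.ext; ext v; rfl)
    (fun t => cent_card j t.2.1 t.2.2 (htau t)) (fun t => by rw [← hm]; exact conj_card j tau htau t)
  have h2 := nonreg_bound (F := F) (K := K) (Om := Om) sg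
  have hpos : 0 < Nat.card {t : ι → Om // TH F K sg t} := by
    have : Nonempty {t : ι → Om // TH F K sg t} := ⟨⟨fun _ => 1, fun i => ⟨one_ne_zero, by
      cases sg i <;> simp [pm]⟩⟩⟩
    exact Nat.card_pos
  rw [hS', hG] at h1
  rw [hm] at h2
  refine Nat.le_of_mul_le_mul_left ?_ hpos
  have h3 := Nat.mul_le_mul_right (Nat.card (Sp B)) h2
  have h4 := Nat.mul_le_mul_left (Nat.card F) h1
  change _ * (Nat.card T * _) ≤ _ at h4
  change _ ≤ (_ * Nat.card T + _) * _ at h3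
  nlinarith

end part12
end SpGen

namespace SpGen
open Module LinearMap Polynomial

section part13
set_option linter.unusedSectionVars false

theorem wp_sq {L : Type} [Field L] [CharP L 2] [Finite L] (c : L) : wp (c ^ 2) ↔ wp c := by
  constructor
  · rintro ⟨e, he⟩
    obtain ⟨d, rfl⟩ := exists_sqrt e
    refine ⟨d, sq_inj ?_⟩
    linear_combination he + (d ^ 3) * two0 (F := L)
  · rintro ⟨e, rfl⟩
    exact ⟨e ^ 2, by linear_combination (- e ^ 3) * two0 (F := L)⟩

theorem wp_inv {L : Type} [Field L] [CharP L 2] [Finite L] (τ : L) (h : τ ≠ 0) :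
    wp τ⁻¹ ↔ ∃ r : L, r ^ 2 = 1 + τ * r := by
  have h2 := two0 (F := L)
  rw [← wp_sq]
  constructor
  · rintro ⟨e, he⟩
    refine ⟨τ * e, ?_⟩
    have : τ ^ 2 * (τ⁻¹ ^ 2) = 1 := by field_simp
    linear_combination τ ^ 2 * he + this - τ ^ 2 * e * h2
  · rintro ⟨r, hr⟩
    refine ⟨r / τ, ?_⟩
    field_simp
    linear_combination hr + τ * r * h2

variable {F : Type} [Field F] [Finite F] [CharP F 2]
variable {ι : Type} [Fintype ι] [DecidableEq ι] {K : ι → Type} [∀ i, Field (K i)]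
  [∀ i, Algebra F (K i)] [∀ i, FiniteDimensional F (K i)]

theorem wp_zero : wp (0 : F) := ⟨0, by ring⟩

theorem wp_sum (s : Finset ι) (f : ι → F) (h : ∀ i ∈ s, wp (f i)) : wp (∑ i ∈ s, f i) :=
  Finset.sum_induction f wp wp_add wp_zero h

theorem wp_tr {sg : ι → Bool} {τ : ∀ i, K i} (h0 : ∀ i, τ i ≠ 0)
    (h : ∀ i, (∃ r : K i, r ^ 2 = 1 + τ i * r) ↔ sg i = true) (i : ι) :
    wp (Algebra.trace F (K i) (τ i)⁻¹) ↔ sg i = true := by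
  have := char_two (F := F) (K i)
  have : Finite (K i) := Module.finite_of_finite F
  rw [wp_trace, wp_inv _ (h0 i), h]

theorem pres_pos {sg : ι → Bool} {τ : ∀ i, K i} (h0 : ∀ i, τ i ≠ 0)
    (h : ∀ i, (∃ r : K i, r ^ 2 = 1 + τ i * r) ↔ sg i = true) (hs : ∀ i, sg i = true) :
    Pres (BM F K) True (yM F τ) := by
  refine model_pres τ h0 (iff_true_intro ?_)
  exact wp_sum _ _ fun i _ => (wp_tr h0 h i).mpr (hs i)

theorem pres_neg {sg : ι → Bool} {τ : ∀ i, K i} (h0 : ∀ i, τ i ≠ 0)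
    (h : ∀ i, (∃ r : K i, r ^ 2 = 1 + τ i * r) ↔ sg i = true) (i0 : ι)
    (hs0 : sg i0 = false) (hs : ∀ i, i ≠ i0 → sg i = true) :
    Pres (BM F K) False (yM F τ) := by
  refine model_pres τ h0 (iff_false_intro ?_)
  intro hw
  rw [← Finset.add_sum_erase _ _ (Finset.mem_univ i0)] at hw
  have h1 : wp (∑ i ∈ Finset.univ.erase i0, Algebra.trace F (K i) (τ i)⁻¹) :=
    wp_sum _ _ fun i hi => (wp_tr h0 h i).mpr (hs i (Finset.ne_of_mem_erase hi))
  have h2 := wp_add _ _ hw h1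
  have h3 : wp (Algebra.trace F (K i0) (τ i0)⁻¹) := by
    convert h2 using 1
    linear_combination (-∑ i ∈ Finset.univ.erase i0, Algebra.trace F (K i) (τ i)⁻¹) * two0 (F := F)
  rw [wp_tr h0 h, hs0] at h3
  exact Bool.false_ne_true h3

variable {V : Type} [AddCommGroup V] [Module F V] [FiniteDimensional F V] {B : LinearMap.BilinForm F V}

theorem kill_nd (hB : IsSymp B) {m k : ℕ} (hd : finrank F V = 2 * m) (hk : 1 ≤ k) (hkm : k < m)
    (x y : Sp B) (hx : NdK B x k) (hy : NdK B y k) : ¬ InvGen x y := by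
  obtain ⟨U, h1, h2, h3⟩ := hx
  obtain ⟨Z, h4, h5, h6⟩ := hy
  refine kill_nondeg hB x y U Z ?_ ?_ h1 h4 h2 h5 (h3.trans h6.symm)
  · rintro rfl; rw [finrank_bot] at h3; omega
  · rintro rfl; rw [finrank_top] at h3; omega

theorem kill_is (hB : IsSymp B) {m k : ℕ} (hd : finrank F V = 2 * m) (hk : 1 ≤ k) (hkm : k ≤ m)
    (x y : Sp B) (hx : IsoK B x k) (hy : IsoK B y k) : ¬ InvGen x y := by
  obtain ⟨U, h1, h2, h3⟩ := hx
  obtain ⟨Z, h4, h5, h6⟩ := hy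
  refine kill_isotropic hB x y U Z ?_ ?_ h1 h4 h2 h5 (h3.trans h6.symm)
  · rintro rfl; rw [finrank_bot] at h3; omega
  · rintro rfl; rw [finrank_top] at h3; omega

theorem wr_half (hB : IsSymp B) {m : ℕ} (hm : 2 ≤ m) (hd : finrank F V = 2 * m)
    (x : Sp B) (hx : Wr B x) : ∃ k, 1 ≤ k ∧ k < m ∧ ∀ y : Sp B, NdK B y k → ¬ InvGen x y := by
  obtain ⟨U, h1, h2, h3, h4⟩ := hx
  obtain ⟨k, hk⟩ := finrank_even (symp_restrict hB U h1)
  refine ⟨k, by omega, by omega, fun y hy => ?_⟩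
  obtain ⟨Z, h5, h6, h7⟩ := hy
  refine kill_wreath hB x y U Z ?_ ?_ h3 h4 h5 h1 h6 (by omega)
  · rintro rfl; rw [finrank_bot] at h2; omega
  · rintro rfl; rw [finrank_top] at h2; omega

theorem main_bound (hF : 2 < Nat.card F) (hB : IsSymp B) {m : ℕ} (hm : 2 ≤ m) (hd : finrank F V = 2 * m)
    (Y : Finset (Sp B)) (hY : Y.card ≤ 3) :
    Nat.card F * Nat.card (Sp B) ≤
      Nat.card F * (2 ^ m * m.factorial * Nat.card {y : Sp B | ∀ x ∈ Y, ¬ InvGen x y}) +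
      16 * m ^ 2 * Nat.card (Sp B) := by
  classical
  have hV : Nontrivial V := nontrivial_of_finrank_pos (R := F) (by omega)
  have : Fact (Nat.Prime 2) := ⟨Nat.prime_two⟩
  have hmz : NeZero m := ⟨by omega⟩
  let L := FiniteField.Extension F 2 m
  have hL : finrank F L = m := FiniteField.finrank_extension F 2 m
  have hsplit : ∑ i : Fin m, finrank F F = m := by simp
  have hone : ∑ i : Unit, finrank F L = m := by simp [hL]
  have hpo : ∀ x : Sp B, Pres B True x ∨ Pres B False x := by
    intro x
    obtain ⟨Φ, hΦ⟩ := exists_iso hB (BM_symp F (fun _ : Fin m => F)) (by rw [finrank_M, hd, hsplit])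
    exact pres_or hB ((Q0M_hyp F (fun _ : Fin m => F)).comp hΦ) x.2
  by_cases c1 : ∀ x ∈ Y, Pres B True x ∨ (∃ k, 1 ≤ k ∧ k < m ∧ NdK B x k) ∨ (∃ k, 1 ≤ k ∧ k ≤ m ∧ IsoK B x k)
  · refine torus_count (fun _ : Fin m => F) hB m hsplit hd (fun _ => true) _ ?_
    intro Φ hΦ τ h0 hs x hx
    rcases c1 x hx with h | ⟨k, hk, hkm, h⟩ | ⟨k, hk, hkm, h⟩
    · exact kill_pres hF hB _ _ h (tr_pres hΦ (pres_pos h0 hs fun _ => rfl))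
    · refine kill_nd hB hd hk hkm _ _ h (tr_nd hΦ ?_)
      obtain ⟨S, -, hS⟩ := Finset.exists_subset_card_eq (s := (Finset.univ : Finset (Fin m))) (n := k)
        (by simpa using hkm.le)
      convert model_nd (F := F) τ S
      simp [hS]
    · refine kill_is hB hd hk hkm _ _ h (tr_iso hΦ ?_)
      obtain ⟨S, -, hS⟩ := Finset.exists_subset_card_eq (s := (Finset.univ : Finset (Fin m))) (n := k)
        (by simpa using hkm)
      convert model_iso (F := F) τ S (fun i _ => (hs i).mpr rfl)
      simp [hS]
  push Not at c1
  obtain ⟨x1, hx1, n1, n2, n3⟩ := c1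
  have k1 : KStr L B (x1 : V ≃ₗ[F] V) := by
    rcases x_red hB x1.2 hm hd hL with ⟨k, a, b, c⟩ | ⟨k, a, b, c⟩ | h
    · exact absurd c (n2 k a b)
    · exact absurd c (n3 k a b)
    · exact h
  by_cases c2 : ∀ x ∈ Y, Pres B False x ∨ KStr L B (x : V ≃ₗ[F] V)
  · refine torus_count (fun _ : Unit => L) hB m hone hd (fun _ => false) _ ?_
    intro Φ hΦ τ h0 hs x hx
    rcases c2 x hx with h | h
    · exact kill_pres hF hB _ _ h (tr_pres hΦ (pres_neg h0 hs () rfl fun i hi => absurd rfl hi))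
    · exact kill_K hB (by rw [hd, hL]) (by rw [hL]; exact hm) _ _ h (tr_kstr hΦ (model_kstr τ))
  by_cases c3 : ∀ x ∈ Y, Pres B True x ∨ KStr L B (x : V ≃ₗ[F] V)
  · refine torus_count (fun _ : Unit => L) hB m hone hd (fun _ => true) _ ?_
    intro Φ hΦ τ h0 hs x hx
    rcases c3 x hx with h | h
    · exact kill_pres hF hB _ _ h (tr_pres hΦ (pres_pos h0 hs fun _ => rfl))
    · exact kill_K hB (by rw [hd, hL]) (by rw [hL]; exact hm) _ _ h (tr_kstr hΦ (model_kstr τ))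
  push Not at c2 c3
  obtain ⟨x3, hx3, a3, b3⟩ := c2
  obtain ⟨x2, hx2, a2, b2⟩ := c3
  have h12 : x1 ≠ x2 := by rintro rfl; exact b2 k1
  have h13 : x1 ≠ x3 := by rintro rfl; exact b3 k1
  have h23 : x2 ≠ x3 := by rintro rfl; exact (hpo x2).elim a2 a3
  have hYeq : ({x1, x2, x3} : Finset (Sp B)) = Y := by
    apply Finset.eq_of_subset_of_card_le
    · intro z hz
      simp only [Finset.mem_insert, Finset.mem_singleton] at hz
      rcases hz with rfl | rfl | rfl <;> assumption
    · rw [Finset.card_eq_three.mpr ⟨x1, x2, x3, h12, h13, h23, rfl⟩]; exact hY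
  have key : ∃ k, 1 ≤ k ∧ k < m ∧ ∀ y : Sp B, NdK B y k → IsoK B y k → ¬ InvGen x3 y := by
    rcases x_types hB x3.2 hm hd hL with h | ⟨k, hk, hkm, h | h⟩ | h
    · exact absurd h b3
    · exact ⟨k, hk, hkm, fun y hy _ => kill_nd hB hd hk hkm _ _ h hy⟩
    · exact ⟨k, hk, hkm, fun y _ hy => kill_is hB hd hk hkm.le _ _ h hy⟩
    · obtain ⟨k, hk, hkm, h⟩ := wr_half hB hm hd x3 h
      exact ⟨k, hk, hkm, fun y hy _ => h y hy⟩
  obtain ⟨k, hk, hkm, key⟩ := key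
  have hnz : ∀ b : Bool, NeZero (if b then k else m - k) := by
    intro b; constructor; split_ifs <;> omega
  let K2 : Bool → Type := fun b => FiniteField.Extension F 2 (if b then k else m - k)
  have hK2 : ∀ b, finrank F (K2 b) = if b then k else m - k := fun b =>
    FiniteField.finrank_extension F 2 (if b then k else m - k)
  refine torus_count K2 hB m (by simp only [Fintype.sum_bool, hK2]; simp; omega) hd (fun b => b) _ ?_
  intro Φ hΦ τ h0 hs x hx
  have pf : Pres B False (cj Φ (yM F τ)) :=
    tr_pres hΦ (pres_neg h0 hs false rfl fun i hi => by simpa using hi)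
  rw [← hYeq] at hx
  simp only [Finset.mem_insert, Finset.mem_singleton] at hx
  rcases hx with rfl | rfl | rfl
  · exact kill_pres hF hB _ _ ((hpo x).resolve_left n1) pf
  · exact kill_pres hF hB _ _ ((hpo x).resolve_left a2) pf
  · refine key _ (tr_nd hΦ ?_) (tr_iso hΦ ?_)
    · convert model_nd (F := F) τ {true}
      simp [hK2]
    · convert model_iso (F := F) τ {true} (fun i hi => (hs i).mpr (by simpa using hi))
      simp [hK2]

end part13
end SpGen

namespace SpGen
open Module LinearMap Polynomial

section part14
set_option linter.unusedSectionVars false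

theorem invGen_map {G H : Type} [Group G] [Group H] (e : G ≃* H) {x y : G} (h : InvGen x y) :
    InvGen (e x) (e y) := by
  intro g k
  have h1 := h (e.symm g) (e.symm k)
  have h2 := congrArg (Subgroup.map e.toMonoidHom) h1
  rw [MonoidHom.map_closure, Set.image_pair, Subgroup.map_top_of_surjective _ e.surjective] at h2
  simpa using h2

variable (F : Type) [Field F] (m : ℕ)

noncomputable def BJ : LinearMap.BilinForm F (Fin m ⊕ Fin m → F) := Matrix.toBilin' (Matrix.J (Fin m) F)

theorem BJ_apply (v w : Fin m ⊕ Fin m → F) :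
    BJ F m v w = ∑ i, (v (Sum.inr i) * w (Sum.inl i) - v (Sum.inl i) * w (Sum.inr i)) := by
  rw [BJ, Matrix.toBilin'_apply', Matrix.J, Matrix.fromBlocks_mulVec, dotProduct, Fintype.sum_sum_type,
    Finset.sum_sub_distrib]
  simp [Function.comp_def, Matrix.neg_mulVec]
  ring

theorem BJ_symp : IsSymp (BJ F m) := by
  refine ⟨fun v => ?_, fun v hv => ?_⟩
  · rw [BJ_apply]
    exact Finset.sum_eq_zero fun i _ => by ring
  · funext i
    rcases i with i | i
    · have := hv (Pi.single (Sum.inr i) 1)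
      rw [BJ_apply] at this
      simpa [Pi.single_apply] using this
    · have := hv (Pi.single (Sum.inl i) 1)
      rw [BJ_apply] at this
      simpa [Pi.single_apply] using this

theorem mem_symp_iff (A : Matrix (Fin m ⊕ Fin m) (Fin m ⊕ Fin m) F) :
    A ∈ Matrix.symplecticGroup (Fin m) F ↔ ∀ v w, BJ F m (Matrix.toLin' A v) (Matrix.toLin' A w) = BJ F m v w := by
  rw [SymplecticGroup.mem_iff', ← (Matrix.toBilin' (R₁ := F) (n := Fin m ⊕ Fin m)).injective.eq_iff,
    ← Matrix.toBilin'_comp]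
  constructor
  · intro h v w
    exact LinearMap.congr_fun₂ h v w
  · intro h
    exact LinearMap.ext₂ h

noncomputable def toSp : Matrix.symplecticGroup (Fin m) F →* Sp (BJ F m) where
  toFun A := ⟨LinearEquiv.ofLinearMap (Matrix.toLin' A.1) (Matrix.toLin' (A⁻¹).1)
      (by rw [← Matrix.toLin'_mul, ← Submonoid.coe_mul, mul_inv_cancel, Submonoid.coe_one, Matrix.toLin'_one])
      (by rw [← Matrix.toLin'_mul, ← Submonoid.coe_mul, inv_mul_cancel, Submonoid.coe_one, Matrix.toLin'_one]),
    (mem_symp_iff F m A.1).mp A.2⟩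
  map_one' := by
    apply Subtype.ext; ext v
    all_goals simp
  map_mul' a b := by
    apply Subtype.ext
    apply LinearEquiv.ext
    intro v
    change Matrix.toLin' (a.1 * b.1) v = Matrix.toLin' a.1 (Matrix.toLin' b.1 v)
    rw [Matrix.toLin'_mul]; rfl

theorem toSp_bij : Function.Bijective (toSp F m) := by
  constructor
  · intro a b h
    apply Subtype.ext
    apply (Matrix.toLin' (R := F) (n := Fin m ⊕ Fin m) (m := Fin m ⊕ Fin m)).injective
    apply LinearMap.ext
    intro v
    exact LinearEquiv.congr_fun (congrArg Subtype.val h) v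
  · intro g
    have hA : Matrix.toLin' (LinearMap.toMatrix' (g.1 : (Fin m ⊕ Fin m → F) →ₗ[F] (Fin m ⊕ Fin m → F))) = g.1 :=
      Matrix.toLin'_toMatrix' _
    refine ⟨⟨LinearMap.toMatrix' (g.1 : (Fin m ⊕ Fin m → F) →ₗ[F] (Fin m ⊕ Fin m → F)), ?_⟩, ?_⟩
    · rw [mem_symp_iff, hA]
      exact g.2
    · apply Subtype.ext
      apply LinearEquiv.ext
      intro v
      exact LinearMap.congr_fun hA v

theorem final (m : ℕ) (hm : 2 ≤ m) (F : Type) [Field F] [Fintype F] (hF : Even (Fintype.card F))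
    (Y : Finset (Matrix.symplecticGroup (Fin m) F)) (hY : Y.card ≤ 3) :
    (Nat.card {y : Matrix.symplecticGroup (Fin m) F // ∃ x ∈ Y, InvGen x y} : ℝ) ≤
      (1 - 1 / (2 ^ m * Nat.factorial m) + ((16 * m ^ 2 + 2 : ℕ) : ℝ) / Fintype.card F) *
        Nat.card (Matrix.symplecticGroup (Fin m) F) := by
  classical
  have hq2 : 2 ≤ Nat.card F := Finite.one_lt_card
  rw [← Nat.card_eq_fintype_card]
  have hN1 : (1 : ℝ) ≤ 2 ^ m * (m.factorial : ℝ) := by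
    have : 1 ≤ 2 ^ m * m.factorial := Nat.succ_le_of_lt (Nat.mul_pos (by positivity) m.factorial_pos)
    exact_mod_cast this
  generalize hN : (2 ^ m * (m.factorial : ℝ)) = N at hN1 ⊢
  let e : Matrix.symplecticGroup (Fin m) F ≃* Sp (BJ F m) := MulEquiv.ofBijective (toSp F m) (toSp_bij F m)
  have hfG : Finite (Sp (BJ F m)) := finite_Sp
  have hfG' : Finite (Matrix.symplecticGroup (Fin m) F) := Finite.of_equiv _ e.symm.toEquiv
  have hG : Nat.card (Matrix.symplecticGroup (Fin m) F) = Nat.card (Sp (BJ F m)) := Nat.card_congr e.toEquiv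
  have hG0 : (0 : ℝ) ≤ Nat.card (Matrix.symplecticGroup (Fin m) F) := Nat.cast_nonneg _
  have htriv : Nat.card {y : Matrix.symplecticGroup (Fin m) F // ∃ x ∈ Y, InvGen x y} ≤
      Nat.card (Matrix.symplecticGroup (Fin m) F) := Finite.card_subtype_le _
  by_cases hq : 2 < Nat.card F
  · have hchar : CharP F 2 := by
      have := (FiniteField.even_card_iff_char_two (F := F)).mpr (Nat.even_iff.mp hF)
      rw [← this]; exact ringChar.charP F
    have hd : finrank F (Fin m ⊕ Fin m → F) = 2 * m := by
      rw [Module.finrank_fintype_fun_eq_card, Fintype.card_sum, Fintype.card_fin, two_mul]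
    let Y' : Finset (Sp (BJ F m)) := Y.map e.toEquiv.toEmbedding
    have h1 := main_bound hq (BJ_symp F m) hm hd Y' (by rw [Finset.card_map]; exact hY)
    have h2 : Nat.card {y : Matrix.symplecticGroup (Fin m) F // ∃ x ∈ Y, InvGen x y} +
        Nat.card {y : Sp (BJ F m) | ∀ x ∈ Y', ¬ InvGen x y} ≤ Nat.card (Sp (BJ F m)) := by
      rw [← Nat.card_sum]
      refine Nat.card_le_card_of_injective (Sum.elim (fun y => e y.1) (fun y => y.1)) ?_
      have hne : ∀ (a : {y : Matrix.symplecticGroup (Fin m) F // ∃ x ∈ Y, InvGen x y})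
          (b : {y : Sp (BJ F m) | ∀ x ∈ Y', ¬ InvGen x y}), e a.1 ≠ b.1 := by
        rintro ⟨a, x, hx, ha⟩ ⟨b, hb⟩ hab
        simp only at hab
        exact hb (e x) (Finset.mem_map_of_mem _ hx) (hab ▸ invGen_map e ha)
      rintro (a | a) (b | b) h
      · exact congrArg Sum.inl (Subtype.ext (e.injective h))
      · exact absurd h (hne a b)
      · exact absurd h.symm (hne b a)
      · exact congrArg Sum.inr (Subtype.ext h)
    rw [hG]
    generalize Nat.card {y : Matrix.symplecticGroup (Fin m) F // ∃ x ∈ Y, InvGen x y} = a at *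
    generalize Nat.card {y : Sp (BJ F m) | ∀ x ∈ Y', ¬ InvGen x y} = s at *
    generalize Nat.card (Sp (BJ F m)) = g at *
    generalize Nat.card F = q at *
    have h1' : (q : ℝ) * g ≤ q * (N * s) + 16 * m ^ 2 * g := by rw [← hN]; exact_mod_cast h1
    have h2' : (a : ℝ) + s ≤ g := by exact_mod_cast h2
    have hq0 : (0 : ℝ) < q := by exact_mod_cast (by omega : 0 < q)
    have hN0 : (0 : ℝ) < N := by linarith
    have hg0 : (0 : ℝ) ≤ g := Nat.cast_nonneg _
    have h3 : (g : ℝ) / N ≤ s + 16 * m ^ 2 * g / q := by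
      rw [div_le_iff₀ hN0]
      have h4 : (g : ℝ) ≤ N * s + 16 * m ^ 2 * g / q := by
        rw [← mul_le_mul_iff_right₀ hq0]
        have : (q : ℝ) * (N * s + 16 * m ^ 2 * g / q) = q * (N * s) + 16 * m ^ 2 * g := by field_simp
        rw [this]; exact h1'
      have h5 : (0 : ℝ) ≤ 16 * m ^ 2 * g / q := by positivity
      nlinarith
    have h6 : (1 - 1 / N + ((16 * m ^ 2 + 2 : ℕ) : ℝ) / q) * g = g - g / N + 16 * m ^ 2 * g / q + 2 * g / q := by
      push_cast; ring
    rw [h6]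
    have h7 : (0 : ℝ) ≤ 2 * g / q := by positivity
    linarith
  · have hq' : Nat.card F = 2 := by omega
    rw [hq']
    have h1 : (1 : ℝ) ≤ 1 - 1 / N + ((16 * m ^ 2 + 2 : ℕ) : ℝ) / (2 : ℕ) := by
      have h2 : 1 / N ≤ 1 := by rw [div_le_one (by linarith)]; exact hN1
      push_cast
      have : (0 : ℝ) ≤ (m : ℝ) ^ 2 := by positivity
      linarith
    calc _ ≤ (Nat.card (Matrix.symplecticGroup (Fin m) F) : ℝ) := by exact_mod_cast htriv
      _ ≤ _ := le_mul_of_one_le_left hG0 h1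

end part14
end SpGen

theorem stmt_16 :
    ∀ m : ℕ, 2 ≤ m →
      ∃ C : ℝ, 0 < C ∧
        ∀ (F : Type) [Field F] [Fintype F], Even (Fintype.card F) →
          ∀ Y : Finset (Matrix.symplecticGroup (Fin m) F), Y.card ≤ 3 →
            (Nat.card {y : Matrix.symplecticGroup (Fin m) F // ∃ x ∈ Y, InvGen x y} : ℝ) ≤
              (1 - 1 / (2 ^ m * Nat.factorial m) + C / Fintype.card F) *
                Nat.card (Matrix.symplecticGroup (Fin m) F) := by
  intro m hm
  refine ⟨((16 * m ^ 2 + 2 : ℕ) : ℝ), by positivity, ?_⟩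
  intro F _ _ hF Y hY
  exact SpGen.final m hm F hF Y hY
end

section
/- Let F be a finite field and let K be a field extension of F whose degree [K : F] = b is a prime number. Let V be a nonzero finite-dimensional vector space over K and let f be a K-linear automorphism of V. Regard V as an F-vector space and f as an F-linear endomorphism by restriction of scalars, and assume that the characteristic polynomial of this F-linear endomorphism is squarefree. Then every minimal nonzero f-invariant F-subspace W of V has F-dimension divisible by b. -/
theorem aux_charpoly_dvd {F M V : Type*} [Field F] [AddCommGroup M] [Module F M]
    [AddCommGroup V] [Module F V] [FiniteDimensional F M] [FiniteDimensional F V]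
    (i : M →ₗ[F] V) (hi : Function.Injective i) (g : M →ₗ[F] M) (f : V →ₗ[F] V)
    (h : ∀ m, f (i m) = i (g m)) : g.charpoly ∣ f.charpoly := by
  obtain ⟨C, hC⟩ := (LinearMap.range i).exists_isCompl
  let e : (M × C) ≃ₗ[F] V :=
    ((LinearEquiv.ofInjective i hi).prodCongr (LinearEquiv.refl F C)).trans
      (Submodule.prodEquivOfIsCompl _ _ hC)
  have he : ∀ m, e (m, 0) = i m := by
    intro m
    simp [e]
  have hes : ∀ m, e.symm (i m) = (m, 0) := by
    intro m
    rw [← he, e.symm_apply_apply]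
  let bM := Module.finBasis F M
  let bC := Module.finBasis F C
  let b := bM.prod bC
  set A := LinearMap.toMatrix b b (e.symm.conj f) with hA
  have h21 : A.toBlocks₂₁ = 0 := by
    ext r s
    simp [A, Matrix.toBlocks₂₁, LinearMap.toMatrix_apply, b, LinearEquiv.conj_apply, he, h, hes]
  have h11 : A.toBlocks₁₁ = LinearMap.toMatrix bM bM g := by
    ext r s
    simp [A, Matrix.toBlocks₁₁, LinearMap.toMatrix_apply, b, LinearEquiv.conj_apply, he, h, hes]
  rw [← e.symm.charpoly_conj f, ← LinearMap.charpoly_toMatrix _ b, ← hA,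
    ← Matrix.fromBlocks_toBlocks A, h21, h11, Matrix.charpoly_fromBlocks_zero₂₁,
    LinearMap.charpoly_toMatrix]
  exact dvd_mul_right _ _

theorem stmt_18 (F K V : Type*) [Field F] [Finite F] [Field K] [Algebra F K]
    [FiniteDimensional F K] (hb : Nat.Prime (Module.finrank F K))
    [AddCommGroup V] [Module K V] [Module F V] [IsScalarTower F K V]
    [Nontrivial V] [FiniteDimensional K V] [FiniteDimensional F V]
    (f : V ≃ₗ[K] V)
    (hsq : Squarefree (LinearMap.charpoly (f.toLinearMap.restrictScalars F)))
    (W : Submodule F V) (hW : W ≠ ⊥) (hinv : ∀ w ∈ W, f w ∈ W)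
    (hmin : ∀ W' : Submodule F V, (∀ w ∈ W', f w ∈ W') → W' ≤ W →
      W' = ⊥ ∨ W' = W) :
    Module.finrank F K ∣ Module.finrank F W := by
  have key : ∀ (k : K), ∀ w ∈ W, k • w ∈ W := by
    intro k
    let L : V →ₗ[F] V := (LinearMap.lsmul K V k).restrictScalars F
    have hL : ∀ v, L v = k • v := fun v => rfl
    rcases hmin (W ⊓ W.comap L) (by
      rintro w ⟨h1, h2⟩
      refine ⟨hinv w h1, ?_⟩
      have := hinv _ h2
      rw [hL, map_smul] at this
      exact this) inf_le_left with h0 | h0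
    · exfalso
      let g : W →ₗ[F] W := (f.toLinearMap.restrictScalars F).restrict hinv
      let i : (W × W) →ₗ[F] V := W.subtype.coprod (L ∘ₗ W.subtype)
      have hinj : Function.Injective i := by
        rw [injective_iff_map_eq_zero]
        rintro ⟨a, c⟩ hac
        have hac' : (a : V) + k • (c : V) = 0 := hac
        have hc : (c : V) ∈ W ⊓ W.comap L := by
          refine ⟨c.2, ?_⟩
          change k • (c : V) ∈ W
          rw [← neg_eq_of_add_eq_zero_right hac']
          exact W.neg_mem a.2
        rw [h0, Submodule.mem_bot] at hc
        rw [hc, smul_zero, add_zero] at hac'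
        ext
        · exact hac'
        · exact hc
      have hd := aux_charpoly_dvd i hinj (g.prodMap g) (f.toLinearMap.restrictScalars F) (by
        rintro ⟨a, c⟩
        change f ((a : V) + k • (c : V)) = f (a : V) + k • f (c : V)
        rw [map_add, map_smul])
      rw [LinearMap.charpoly_prodMap] at hd
      have hu := hsq _ hd
      have hdeg := Polynomial.natDegree_eq_zero_of_isUnit hu
      rw [LinearMap.charpoly_natDegree] at hdeg
      exact hW (Submodule.finrank_eq_zero.mp hdeg)
    · intro w hw
      rw [← h0] at hw
      exact hw.2
  let W' : Submodule K V :=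
    { carrier := W, add_mem' := W.add_mem, zero_mem' := W.zero_mem, smul_mem' := key }
  have h1 : Module.finrank F W = Module.finrank F W' := rfl
  rw [h1, ← Module.finrank_mul_finrank F K W']
  exact dvd_mul_right _ _
end
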